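/- arXiv:2103.04587 — 4 statements merged into one kernel-verified Lean document; each statement's English description precedes it below -/
import Mathlib

section
/- Let G be a tree on vertex set {1,…,m}, let λ₁ < λ₂ < … < λ_m be real numbers and Λ = diag(λ₁,…,λ_m). Let g : E(G) → ℕ, let N₀ ∈ ℕ satisfy N₀ > (max{g(e) : e ∈ E(G)})·diam(G), and set f(e) := N₀ + g(e) for e ∈ E(G). For i, j ∈ {1,…,m} let P(i,j) be the (unique shortest) path in G from i to j, let c(i,j) := ∏_{k ∈ V(P(i,j))∖{j}} (λ_j − λ_k)^{-1} (with c(j,j) := 1), and let s(i,j) := Σ_{e ∈ E(P(i,j))} f(e) (with s(j,j) := 0). Suppose t_n > 0 with t_n → 0, and for each n let A_n be a real symmetric m×m matrix with spectrum {λ₁,…,λ_m} such that A_n ∈ S(G), the (i,j)-entry of A_n equals t_n^{f({i,j})} for every edge {i,j} of G, and A_n → Λ as n → ∞. Let U_n = (u_n(i,j)) be an orthogonal matrix with nonnegative diagonal entries such that U_nᵀ A_n U_n = Λ. Then for all i, j ∈ {1,…,m}, u_n(i,j)/t_n^{s(i,j)} → c(i,j) as n → ∞. -/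
open Matrix Filter

/-- `A ∈ S(G)`: real symmetric matrix whose off-diagonal zero pattern is given by `G`. -/
def inS {V : Type*} (G : SimpleGraph V) (A : Matrix V V ℝ) : Prop :=
  A.IsSymm ∧ ∀ i j : V, i ≠ j → (A i j ≠ 0 ↔ G.Adj i j)

/-- The spectrum of a matrix, as the multiset of roots of its characteristic polynomial. -/
noncomputable def specMultiset {V : Type*} [Fintype V] [DecidableEq V]
    (A : Matrix V V ℝ) : Multiset ℝ :=
  A.charpoly.roots

/-- The number of distinct eigenvalues of a matrix. -/
noncomputable def qMat {V : Type*} [Fintype V] [DecidableEq V] (A : Matrix V V ℝ) : ℕ :=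
  (specMultiset A).toFinset.card

/-- `q(G)`: the minimum number of distinct eigenvalues over matrices in `S(G)`. -/
noncomputable def qGraph {V : Type*} [Fintype V] [DecidableEq V] (G : SimpleGraph V) : ℕ :=
  sInf {q | ∃ A : Matrix V V ℝ, inS G A ∧ qMat A = q}

/-- The strong spectral property. -/
def HasSSP {V : Type*} [Fintype V] [DecidableEq V] (A : Matrix V V ℝ) : Prop :=
  ∀ X : Matrix V V ℝ, X.IsSymm → A * X = X * A →
    Matrix.hadamard A X = 0 → Matrix.hadamard (1 : Matrix V V ℝ) X = 0 → X = 0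

/-- Generic realisability of a multiset of eigenvalues for a graph. -/
def GenericallyRealisable {V : Type*} [Fintype V] [DecidableEq V]
    (G : SimpleGraph V) (σ : Multiset ℝ) : Prop :=
  ∀ Y : Finset (V → ℝ), (∀ y ∈ Y, y ≠ 0) →
    ∃ (d : V → ℝ) (U : Matrix V V ℝ),
      Multiset.map d Finset.univ.val = σ ∧ Uᵀ * U = 1 ∧
      inS G (U * Matrix.diagonal d * Uᵀ) ∧
      ∀ y ∈ Y, ∀ i, U.mulVec y i ≠ 0

/-- The partial join `(G₁, X) ∨ G₂`: the disjoint union of `G₁` and `G₂` together with all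
edges joining vertices of `X ⊆ V(G₁)` to vertices of `G₂`. -/
def partialJoin {α β : Type*} (G₁ : SimpleGraph α) (X : Set α) (G₂ : SimpleGraph β) :
    SimpleGraph (α ⊕ β) where
  Adj x y :=
    (∃ a b, G₁.Adj a b ∧ x = Sum.inl a ∧ y = Sum.inl b) ∨
    (∃ a b, G₂.Adj a b ∧ x = Sum.inr a ∧ y = Sum.inr b) ∨
    (∃ a ∈ X, ∃ b, x = Sum.inl a ∧ y = Sum.inr b) ∨
    (∃ a ∈ X, ∃ b, x = Sum.inr b ∧ y = Sum.inl a)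
  symm := by
    refine ⟨?_⟩
    rintro x y (⟨a, b, hab, rfl, rfl⟩ | ⟨a, b, hab, rfl, rfl⟩ | ⟨a, ha, b, rfl, rfl⟩ |
      ⟨a, ha, b, rfl, rfl⟩)
    · exact Or.inl ⟨b, a, hab.symm, rfl, rfl⟩
    · exact Or.inr (Or.inl ⟨b, a, hab.symm, rfl, rfl⟩)
    · exact Or.inr (Or.inr (Or.inr ⟨a, ha, b, rfl, rfl⟩))
    · exact Or.inr (Or.inr (Or.inl ⟨a, ha, b, rfl, rfl⟩))
  loopless := by
    refine ⟨?_⟩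
    rintro x (⟨a, b, hab, rfl, h⟩ | ⟨a, b, hab, rfl, h⟩ | ⟨a, ha, b, rfl, h⟩ | ⟨a, ha, b, rfl, h⟩)
    · cases h; exact hab.ne rfl
    · cases h; exact hab.ne rfl
    · exact (Sum.inl_ne_inr h).elim
    · exact (Sum.inr_ne_inl h).elim

/-- The join `G₁ ∨ G₂` of two graphs. -/
def graphJoin {α β : Type*} (G₁ : SimpleGraph α) (G₂ : SimpleGraph β) : SimpleGraph (α ⊕ β) :=
  partialJoin G₁ Set.univ G₂

/-- The disjoint union of a family of graphs. -/
def sigmaGraph {ι : Type*} {α : ι → Type*} (G : ∀ i, SimpleGraph (α i)) :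
    SimpleGraph (Σ i, α i) where
  Adj x y := ∃ (i : ι) (a b : α i), (G i).Adj a b ∧ x = ⟨i, a⟩ ∧ y = ⟨i, b⟩
  symm := by
    refine ⟨?_⟩
    rintro x y ⟨i, a, b, hab, rfl, rfl⟩
    exact ⟨i, b, a, hab.symm, rfl, rfl⟩
  loopless := by
    refine ⟨?_⟩
    rintro x ⟨i, a, b, hab, rfl, h⟩
    obtain rfl : a = b := by simpa using h
    exact hab.ne rfl

/-- Lemma 2.3: decay rates of the entries of the diagonalising orthogonal
matrices, for a tree `G`. Here for vertices `i j` and the (unique) path `p` from `i` to `j`,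
`s(i,j) = ∑_{e ∈ E(p)} f(e)` and `c(i,j) = ∏_{k ∈ V(p)∖{j}} (λ_j − λ_k)⁻¹`. -/
theorem statement2 (m : ℕ) (G : SimpleGraph (Fin m)) (hG : G.IsTree)
    (lam : Fin m → ℝ) (hlam : StrictMono lam)
    (g : Sym2 (Fin m) → ℕ) (N₀ : ℕ) (hN₀pos : 0 < N₀)
    (hN₀ : ∀ e ∈ G.edgeSet, ∀ i j : Fin m, g e * G.dist i j < N₀)
    (f : Sym2 (Fin m) → ℕ) (hf : ∀ e, f e = N₀ + g e)
    (t : ℕ → ℝ) (ht : ∀ n, 0 < t n) (ht0 : Tendsto t atTop (nhds 0))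
    (A : ℕ → Matrix (Fin m) (Fin m) ℝ)
    (hAS : ∀ n, inS G (A n))
    (hAedge : ∀ n, ∀ i j : Fin m, G.Adj i j → A n i j = t n ^ f s(i, j))
    (hAspec : ∀ n, specMultiset (A n) = Finset.univ.val.map lam)
    (hAtend : Tendsto A atTop (nhds (Matrix.diagonal lam)))
    (U : ℕ → Matrix (Fin m) (Fin m) ℝ)
    (hUorth : ∀ n, (U n)ᵀ * U n = 1)
    (hUdiag : ∀ n, ∀ i, 0 ≤ U n i i)
    (hUA : ∀ n, (U n)ᵀ * A n * U n = Matrix.diagonal lam) :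
    ∀ (i j : Fin m) (p : G.Walk i j), p.IsPath →
      Tendsto (fun n => U n i j / t n ^ ((p.edges.map f).sum)) atTop
        (nhds (((p.support.filter (fun k => decide (k ≠ j))).map
          (fun k => (lam j - lam k)⁻¹)).prod)) := by
  classical
  have hrow : ∀ n i j, ∑ k, A n i k * U n k j = lam j * U n i j := by
    intro n i j
    have h1 : U n * (U n)ᵀ = 1 := mul_eq_one_comm.mp (hUorth n)
    have h2 : A n * U n = U n * Matrix.diagonal lam := by
      rw [← hUA n, ← Matrix.mul_assoc, ← Matrix.mul_assoc, h1, Matrix.one_mul]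
    have h3 := congrFun (congrFun h2 i) j
    rw [Matrix.mul_apply, Matrix.mul_diagonal] at h3
    rw [h3, mul_comm]
  have hcol : ∀ n j, ∑ k, U n k j ^ 2 = 1 := by
    intro n j
    have h3 := congrFun (congrFun (hUorth n) j) j
    rw [Matrix.mul_apply, Matrix.one_apply_eq] at h3
    rw [← h3]
    exact Finset.sum_congr rfl fun k _ => by rw [Matrix.transpose_apply, sq]
  have hAij : ∀ i, Tendsto (fun n => A n i i) atTop (nhds (lam i)) := by
    intro i
    have h1 := (tendsto_pi_nhds.mp ((tendsto_pi_nhds.mp hAtend) i)) i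
    simpa using h1
  have hfpos : ∀ e, f e ≠ 0 := by
    intro e; rw [hf]; omega
  have htf : ∀ e, Tendsto (fun n => t n ^ f e) atTop (nhds 0) := by
    intro e
    have h := ht0.pow (f e)
    rwa [zero_pow (hfpos e)] at h
  have claim : ∀ d : ℕ, ∀ (i j w : Fin m) (h : G.Adj i w) (q : G.Walk w j),
      (SimpleGraph.Walk.cons h q).IsPath → m ≤ q.length + d →
      ∃ r : ℕ → ℝ, Tendsto r atTop (nhds (lam j - lam i)⁻¹) ∧
        ∀ᶠ n in atTop, U n i j = t n ^ f s(i, w) * r n * U n w j := by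
    intro d
    induction d with
    | zero =>
      intro i j w h q hp hm
      have := hp.length_lt
      simp at this
      omega
    | succ d ih =>
      intro i j w h q hp hm
      have hij : i ≠ j := by
        rintro rfl
        rw [SimpleGraph.Walk.cons_isPath_iff] at hp
        exact hp.2 q.end_mem_support
      have key : ∀ k, ∃ r : ℕ → ℝ, ∃ L, Tendsto r atTop (nhds L) ∧ (G.Adj i k → k ≠ w →
          ∀ᶠ n in atTop, U n k j = t n ^ f s(i, k) * r n * U n i j) := by
        intro k
        by_cases hk : G.Adj i k ∧ k ≠ w
        · have hpath : (SimpleGraph.Walk.cons hk.1.symm (SimpleGraph.Walk.cons h q)).IsPath := by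
            rw [SimpleGraph.Walk.cons_isPath_iff]
            refine ⟨hp, fun hmem => ?_⟩
            have hmem' : k ∈ q.support := by
              rw [SimpleGraph.Walk.support_cons, List.mem_cons] at hmem
              exact hmem.resolve_left hk.1.ne'
            have hp' := (SimpleGraph.Walk.cons_isPath_iff _ _).mp hp
            have hP : (SimpleGraph.Walk.cons h (q.takeUntil k hmem')).IsPath := by
              rw [SimpleGraph.Walk.cons_isPath_iff]
              exact ⟨hp'.1.takeUntil hmem',
                fun hh => hp'.2 (q.support_takeUntil_subset_support hmem' hh)⟩
            have hE : (SimpleGraph.Walk.cons hk.1 SimpleGraph.Walk.nil).IsPath := by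
              rw [SimpleGraph.Walk.cons_isPath_iff]
              simpa using hk.1.ne
            have := congrArg Subtype.val ((hG.isAcyclic.subsingleton_path i k).elim ⟨_, hP⟩ ⟨_, hE⟩)
            have h2 := congrArg SimpleGraph.Walk.support this
            simp only [SimpleGraph.Walk.support_cons, SimpleGraph.Walk.support_nil] at h2
            have h3 := (q.takeUntil k hmem').start_mem_support
            rw [(List.cons.inj h2).2, List.mem_singleton] at h3
            exact hk.2 h3.symm
          obtain ⟨r, hr, hr'⟩ := ih k j i hk.1.symm (SimpleGraph.Walk.cons h q) hpath
            (by simp; omega)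
          refine ⟨r, _, hr, fun _ _ => ?_⟩
          rwa [Sym2.eq_swap]
        · exact ⟨fun _ => 0, 0, tendsto_const_nhds, fun h1 h2 => absurd ⟨h1, h2⟩ hk⟩
      choose r L hr hrU using key
      let S : ℕ → ℝ := fun n => ∑ k, if G.Adj i k ∧ k ≠ w then
        t n ^ f s(i, k) * (t n ^ f s(i, k) * r k n) else 0
      have hS : Tendsto S atTop (nhds 0) := by
        have : Tendsto S atTop (nhds (∑ k : Fin m, (0 : ℝ))) := by
          refine tendsto_finsetSum _ fun k _ => ?_
          by_cases hk : G.Adj i k ∧ k ≠ w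
          · simp only [if_pos hk]
            simpa using (htf s(i, k)).mul ((htf s(i, k)).mul (hr k))
          · simp only [if_neg hk]
            exact tendsto_const_nhds
        simpa using this
      have hD : Tendsto (fun n => lam j - A n i i - S n) atTop (nhds (lam j - lam i)) := by
        simpa using (tendsto_const_nhds.sub (hAij i)).sub hS
      have hne : lam j - lam i ≠ 0 := sub_ne_zero.mpr fun e => hij (hlam.injective e).symm
      refine ⟨fun n => (lam j - A n i i - S n)⁻¹, hD.inv₀ hne, ?_⟩
      have hall : ∀ᶠ n in atTop, ∀ k, G.Adj i k → k ≠ w →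
          U n k j = t n ^ f s(i, k) * r k n * U n i j := by
        rw [eventually_all]
        intro k
        by_cases hk : G.Adj i k ∧ k ≠ w
        · filter_upwards [hrU k hk.1 hk.2] with n hn _ _ using hn
        · exact Eventually.of_forall fun n h1 h2 => absurd ⟨h1, h2⟩ hk
      filter_upwards [hall, hD.eventually_ne hne] with n hn hDn
      have hterm : ∀ k, A n i k * U n k j = (if k = i then A n i i * U n i j else 0) +
          (if k = w then t n ^ f s(i, w) * U n w j else 0) +
          (if G.Adj i k ∧ k ≠ w then
            t n ^ f s(i, k) * (t n ^ f s(i, k) * r k n) else 0) * U n i j := by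
        intro k
        by_cases h1 : k = i
        · subst h1
          simp [h.ne]
        · by_cases h2 : k = w
          · subst h2
            simp [h1, hAedge n i k h]
          · by_cases h3 : G.Adj i k
            · simp only [h1, h2, h3, if_false, ne_eq, not_false_eq_true, and_self, if_true]
              rw [hAedge n i k h3, hn k h3 h2]
              ring
            · have : A n i k = 0 := by
                by_contra hc
                exact h3 (((hAS n).2 i k (Ne.symm h1)).mp hc)
              simp [h1, h2, h3, this]
      have hsum := hrow n i j
      rw [Finset.sum_congr rfl fun k _ => hterm k, Finset.sum_add_distrib,
        Finset.sum_add_distrib, ← Finset.sum_mul] at hsum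
      simp only [Finset.sum_ite_eq', Finset.mem_univ, if_true] at hsum
      change _ + _ + S n * U n i j = _ at hsum
      field_simp
      linarith
  have hstep : ∀ (i j w : Fin m) (h : G.Adj i w) (q : G.Walk w j),
      (SimpleGraph.Walk.cons h q).IsPath →
      ∃ r : ℕ → ℝ, Tendsto r atTop (nhds (lam j - lam i)⁻¹) ∧
        ∀ᶠ n in atTop, U n i j = t n ^ f s(i, w) * r n * U n w j :=
    fun i j w h q hp => claim m i j w h q hp (by omega)
  have hbound : ∀ n i j, |U n i j| ≤ 1 := by
    intro n i j
    rw [← sq_le_one_iff_abs_le_one, ← hcol n j]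
    exact Finset.single_le_sum (f := fun k => U n k j ^ 2) (fun k _ => sq_nonneg _)
      (Finset.mem_univ i)
  have hoff : ∀ i j, i ≠ j → Tendsto (fun n => U n i j) atTop (nhds 0) := by
    intro i j hij
    obtain ⟨p, hp⟩ := (hG.connected.preconnected i j).exists_isPath
    cases p with
    | nil => exact absurd rfl hij
    | @cons _ w _ h q =>
      obtain ⟨r, hr, hrU⟩ := hstep i j w h q hp
      have h0 : Tendsto (fun n => t n ^ f s(i, w) * r n) atTop (nhds 0) := by
        simpa using (htf s(i, w)).mul hr
      refine squeeze_zero_norm' ?_ (norm_zero (E := ℝ) ▸ h0.norm)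
      filter_upwards [hrU] with n hn
      rw [hn, norm_mul]
      exact mul_le_of_le_one_right (norm_nonneg _) (hbound n w j)
  have hdiag : ∀ j, Tendsto (fun n => U n j j) atTop (nhds 1) := by
    intro j
    have h1 : Tendsto (fun n => ∑ k ∈ Finset.univ.erase j, U n k j ^ 2) atTop (nhds 0) := by
      have : Tendsto (fun n => ∑ k ∈ Finset.univ.erase j, U n k j ^ 2) atTop
          (nhds (∑ k ∈ Finset.univ.erase j, (0 : ℝ))) := by
        refine tendsto_finsetSum _ fun k hk => ?_
        simpa using (hoff k j (Finset.ne_of_mem_erase hk)).pow 2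
      simpa using this
    have h2 : Tendsto (fun n => Real.sqrt (1 - ∑ k ∈ Finset.univ.erase j, U n k j ^ 2)) atTop
        (nhds 1) := by
      have h3 := ((tendsto_const_nhds (x := (1 : ℝ))).sub h1).sqrt
      rwa [sub_zero, Real.sqrt_one] at h3
    refine h2.congr fun n => ?_
    rw [← hcol n j, ← Finset.add_sum_erase _ _ (Finset.mem_univ j), add_sub_cancel_right,
      Real.sqrt_sq (hUdiag n j)]
  intro i j p
  induction p with
  | nil => intro _; simpa using hdiag _
  | @cons a b c h q ih =>
    intro hp
    have hp' := (SimpleGraph.Walk.cons_isPath_iff _ _).mp hp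
    have hac : a ≠ c := by
      rintro rfl
      exact hp'.2 q.end_mem_support
    obtain ⟨r, hr, hrU⟩ := hstep a c b h q hp
    have := hr.mul (ih hp'.1)
    rw [SimpleGraph.Walk.support_cons, List.filter_cons_of_pos (by simpa using hac),
      List.map_cons, List.prod_cons]
    refine this.congr' ?_
    filter_upwards [hrU] with n hn
    rw [SimpleGraph.Walk.edges_cons, List.map_cons, List.sum_cons, hn, pow_add]
    have h0 := (ht n).ne'
    field_simp
end

section
/- Let G be a simple graph with connected components G₁,…,G_k, and let V be an r×k matrix with entries in {0,1} such that for each i ∈ {1,…,k} the i-th column of V sums to |G_i|. Then for each i and all real numbers λ₁ < λ₂ < … < λ_r, the multiset σ_i = {λ_j : V(j,i) = 1} is generically realisable for G_i. In other words, every 0-1 multiplicity matrix which fits G is generically realisable for G. -/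
open Matrix Filter

section Helpers
open Topology

lemma curve_exists {E : Type*} [NormedAddCommGroup E] [NormedSpace ℝ E] [FiniteDimensional ℝ E]
    (F : E → E) (F' : E →L[ℝ] E) (u : E) (h : HasStrictFDerivAt F F' u)
    (inj : ∀ H, F' H = 0 → H = 0) (w : E) :
    ∃ (γ : ℝ → E) (H : E), γ 0 = u ∧ HasDerivAt γ H 0 ∧ F' H = w ∧
      ∀ᶠ t in 𝓝 (0 : ℝ), F (γ t) = F u + t • w := by
  have : CompleteSpace E := FiniteDimensional.complete ℝ E
  have hinj : Function.Injective (F' : E →ₗ[ℝ] E) := by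
    rw [injective_iff_map_eq_zero]; exact inj
  let e : E ≃L[ℝ] E := (LinearEquiv.ofInjectiveEndo (F' : E →ₗ[ℝ] E) hinj).toContinuousLinearEquiv
  have he : (e : E →L[ℝ] E) = F' := by ext x; rfl
  have he' : ∀ x, e x = F' x := fun x => rfl
  have h' : HasStrictFDerivAt F (e : E →L[ℝ] E) u := by rw [he]; exact h
  have hlin : HasDerivAt (fun t : ℝ => F u + t • w) w 0 := by
    simpa using ((hasDerivAt_id (0 : ℝ)).smul_const w).const_add (F u)
  have h0 : F u + (0 : ℝ) • w = F u := by simp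
  refine ⟨fun t => h'.localInverse F e u (F u + t • w), e.symm w, ?_, ?_, ?_, ?_⟩
  · simp
  · have := h'.to_localInverse.hasFDerivAt
    rw [← h0] at this
    have h2 := this.comp_hasDerivAt (0 : ℝ) hlin
    exact h2
  · rw [← he']; simp
  · have h3 := h'.eventually_right_inverse
    have : Tendsto (fun t : ℝ => F u + t • w) (𝓝 0) (𝓝 (F u)) := by
      have := hlin.continuousAt.tendsto
      rwa [h0] at this
    exact this.eventually h3

section
variable {V : Type*} [Fintype V] [LinearOrder V]

/-- the polynomial map to which the inverse function theorem is applied -/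
def Fmap (S : Finset V) (d : V → ℝ) (u : V → V → ℝ) : V → V → ℝ := fun a b =>
  if a ∈ S ∧ b ∈ S then (if a ≤ b then ∑ j, u a j * u b j else ∑ j, u a j * d j * u b j) else u a b

def Lmap (S : Finset V) (d : V → ℝ) (u H : V → V → ℝ) : V → V → ℝ := fun a b =>
  if a ∈ S ∧ b ∈ S then (if a ≤ b then ∑ j, (H a j * u b j + u a j * H b j)
    else ∑ j, (H a j * d j * u b j + u a j * d j * H b j)) else H a b

lemma Fmap_deriv (S : Finset V) (d : V → ℝ) (u : V → V → ℝ) :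
    ∃ F' : (V → V → ℝ) →L[ℝ] (V → V → ℝ), HasStrictFDerivAt (Fmap S d) F' u ∧
      ∀ H, F' H = Lmap S d u H := by
  have hc : ContDiff ℝ 1 (Fmap S d) := by
    rw [contDiff_pi]; intro a; rw [contDiff_pi]; intro b
    unfold Fmap
    split_ifs <;> fun_prop
  have hs := (hc.contDiffAt (x := u)).hasStrictFDerivAt (by norm_num)
  refine ⟨_, hs, fun H => ?_⟩
  have hl : HasDerivAt (fun t : ℝ => u + t • H) H 0 := by
    simpa using ((hasDerivAt_id (0 : ℝ)).smul_const H).const_add u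
  have h1 : HasDerivAt (fun t : ℝ => Fmap S d (u + t • H)) (fderiv ℝ (Fmap S d) u H) 0 := by
    have := hs.hasFDerivAt
    have h0 : u + (0 : ℝ) • H = u := by simp
    rw [← h0] at this
    have h2 := this.comp_hasDerivAt (0 : ℝ) hl
    rw [h0] at h2
    exact h2
  funext a b
  have h2 := (hasDerivAt_pi.1 (hasDerivAt_pi.1 h1 a)) b
  refine h2.unique ?_
  have hl' : ∀ a j, HasDerivAt (fun t : ℝ => (u + t • H) a j) (H a j) 0 := fun a j =>
    (hasDerivAt_pi.1 (hasDerivAt_pi.1 hl a)) j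
  unfold Fmap Lmap
  split_ifs
  · refine HasDerivAt.fun_sum fun j _ => ?_
    simpa using (hl' a j).fun_mul (hl' b j)
  · refine HasDerivAt.fun_sum fun j _ => ?_
    simpa using ((hl' a j).mul_const (d j)).fun_mul (hl' b j)
  · exact hl' a b

/-- Non-degeneracy: the off-diagonal commutator map is injective on skew matrices. -/
def NonDeg (A : Matrix V V ℝ) : Prop :=
  ∀ K : Matrix V V ℝ, Kᵀ = -K → (∀ a b, a ≠ b → (K * A - A * K) a b = 0) → K = 0

/-- auxiliary linear map -/
def nlin (A : Matrix V V ℝ) : Matrix V V ℝ →ₗ[ℝ] Matrix V V ℝ where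
  toFun K := Matrix.of fun a b => if a ≤ b then K a b + K b a else (K * A - A * K) a b
  map_add' K L := by
    ext a b
    simp only [of_apply, Matrix.add_apply, Matrix.add_mul, Matrix.mul_add, Matrix.sub_apply]
    split_ifs <;> ring
  map_smul' c K := by
    ext a b
    simp only [of_apply, Matrix.smul_apply, Matrix.smul_mul, Matrix.mul_smul, Matrix.sub_apply, smul_eq_mul,
      RingHom.id_apply]
    split_ifs <;> ring

lemma nonDeg_iff (A : Matrix V V ℝ) (hA : Aᵀ = A) : NonDeg A ↔ LinearMap.det (nlin A) ≠ 0 := by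
  have key : ∀ K, nlin A K = 0 ↔ (Kᵀ = -K ∧ ∀ a b, a ≠ b → (K * A - A * K) a b = 0) := by
    intro K
    constructor
    · intro h
      have h1 : ∀ a b, a ≤ b → K a b + K b a = 0 := fun a b hab => by
        have := congrFun (congrFun h a) b
        simpa [nlin, hab] using this
      have h2 : ∀ a b, ¬ a ≤ b → (K * A - A * K) a b = 0 := fun a b hab => by
        have := congrFun (congrFun h a) b
        simpa [nlin, hab] using this
      have hs : Kᵀ = -K := by
        ext a b
        rcases le_total a b with hab | hab
        · have := h1 a b hab; simp; linarith
        · have := h1 b a hab; simp; linarith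
      refine ⟨hs, fun a b hab => ?_⟩
      have hsym : (K * A - A * K)ᵀ = K * A - A * K := by
        rw [Matrix.transpose_sub, Matrix.transpose_mul, Matrix.transpose_mul, hs, hA]
        simp; abel
      by_cases h : a ≤ b
      · rw [← hsym]; exact h2 b a (not_le.2 (lt_of_le_of_ne h hab))
      · exact h2 a b h
    · rintro ⟨hs, h⟩
      ext a b
      simp only [nlin, LinearMap.coe_mk, AddHom.coe_mk, of_apply, Matrix.zero_apply]
      split_ifs with hab
      · have := congrFun (congrFun hs a) b
        simp at this; linarith
      · exact h a b (fun e => hab e.le)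
  have hdet : LinearMap.det (nlin A) ≠ 0 ↔ ∀ K, nlin A K = 0 → K = 0 := by
    rw [← isUnit_iff_ne_zero, ← LinearMap.isUnit_iff_isUnit_det, LinearMap.isUnit_iff_ker_eq_bot,
      LinearMap.ker_eq_bot']
  rw [hdet]
  constructor
  · intro h K hK
    exact h K ((key K).1 hK).1 ((key K).1 hK).2
  · intro h K h1 h2
    exact h K ((key K).2 ⟨h1, h2⟩)

lemma continuous_det_nlin : Continuous fun A : Matrix V V ℝ => LinearMap.det (nlin A) := by
  have : ∀ A : Matrix V V ℝ, LinearMap.det (nlin A) =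
      (LinearMap.toMatrix (Matrix.stdBasis ℝ V V) (Matrix.stdBasis ℝ V V) (nlin A)).det := fun A =>
    (LinearMap.det_toMatrix _ _).symm
  simp_rw [this]
  refine Continuous.matrix_det ?_
  refine continuous_matrix fun p q => ?_
  simp only [LinearMap.toMatrix_apply]
  have h : ∀ M : Matrix V V ℝ, (Matrix.stdBasis ℝ V V).repr M p = M p.1 p.2 := fun M => rfl
  simp only [h]
  simp only [nlin, LinearMap.coe_mk, AddHom.coe_mk, of_apply]
  split_ifs
  · exact continuous_const
  · simp only [Matrix.sub_apply, Matrix.mul_apply]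
    fun_prop

lemma udu_apply (U : Matrix V V ℝ) (w : V → ℝ) (a b : V) :
    (U * diagonal w * Uᵀ) a b = ∑ j, U a j * w j * U b j := by
  rw [Matrix.mul_apply]
  simp only [Matrix.mul_diagonal, Matrix.transpose_apply]

lemma comm_symm (K A : Matrix V V ℝ) (hs : Kᵀ = -K) (hA : Aᵀ = A) :
    (K * A - A * K)ᵀ = K * A - A * K := by
  rw [Matrix.transpose_sub, Matrix.transpose_mul, Matrix.transpose_mul, hs, hA]
  simp; abel

lemma udu_symm (U : Matrix V V ℝ) (w : V → ℝ) :
    (U * diagonal w * Uᵀ)ᵀ = U * diagonal w * Uᵀ := by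
  simp [Matrix.transpose_mul, Matrix.mul_assoc]

/-- `U` is the identity outside the block `S`. -/
def Blk (S : Finset V) (U : Matrix V V ℝ) : Prop :=
  ∀ a b, ¬ (a ∈ S ∧ b ∈ S) → U a b = (1 : Matrix V V ℝ) a b

lemma Blk.mulVec {S : Finset V} {U : Matrix V V ℝ} (h : Blk S U) (y : V → ℝ) (v : V) (hv : v ∉ S) :
    (U *ᵥ y) v = y v := by
  simp only [Matrix.mulVec, dotProduct]
  rw [Finset.sum_congr rfl fun j _ => by rw [h v j (fun e => hv e.1)]]
  simp [Matrix.one_apply]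

lemma Blk.transpose {S : Finset V} {U : Matrix V V ℝ} (h : Blk S U) : Blk S Uᵀ := by
  intro a b hab
  rw [Matrix.transpose_apply, h b a (fun e => hab e.symm)]
  simp [Matrix.one_apply, eq_comm]

lemma Blk.udu {S : Finset V} {U : Matrix V V ℝ} (h : Blk S U) (w : V → ℝ) (a v : V) (hv : v ∉ S) :
    (U * diagonal w * Uᵀ) a v = if a = v then w v else 0 := by
  rw [udu_apply, Finset.sum_congr rfl fun j _ => by rw [h v j (fun e => hv e.1)]]
  simp only [Matrix.one_apply, mul_ite, mul_one, mul_zero, Finset.sum_ite_eq, Finset.mem_univ,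
    if_true]
  rw [h a v (fun e => hv e.2), Matrix.one_apply]
  split_ifs <;> simp

lemma Blk.udu' {S : Finset V} {U : Matrix V V ℝ} (h : Blk S U) (w : V → ℝ) (a v : V) (hv : v ∉ S) :
    (U * diagonal w * Uᵀ) v a = if a = v then w v else 0 := by
  rw [← h.udu w a v hv]
  exact congrFun (congrFun (udu_symm U w) a) v

lemma Blk.mono {S T : Finset V} {U : Matrix V V ℝ} (h : Blk S U) (hST : S ⊆ T) : Blk T U :=
  fun a b hab => h a b fun e => hab ⟨hST e.1, hST e.2⟩

lemma curve_matrix (S : Finset V) (d : V → ℝ) (U : Matrix V V ℝ) (hU : U * Uᵀ = 1)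
    (hb : Blk S U) (hn : NonDeg (U * diagonal d * Uᵀ)) (B : Matrix V V ℝ) (hB : Bᵀ = B) :
    ∃ (γ : ℝ → Matrix V V ℝ) (K : Matrix V V ℝ), γ 0 = U ∧
      (∀ a j, HasDerivAt (fun t => γ t a j) ((K * U) a j) 0) ∧ Kᵀ = -K ∧
      (∀ a b, ¬ (a ∈ S ∧ b ∈ S) → K a b = 0) ∧
      (∀ a ∈ S, ∀ b ∈ S, a ≠ b →
        (K * (U * diagonal d * Uᵀ) - (U * diagonal d * Uᵀ) * K) a b = B a b) ∧
      (∀ᶠ t in 𝓝 (0 : ℝ), γ t * (γ t)ᵀ = 1 ∧ Blk S (γ t) ∧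
        ∀ a ∈ S, ∀ b ∈ S, a ≠ b →
          (γ t * diagonal d * (γ t)ᵀ) a b = (U * diagonal d * Uᵀ) a b + t * B a b) ∧
      (∀ᶠ t in 𝓝 (0 : ℝ), NonDeg (γ t * diagonal d * (γ t)ᵀ)) := by
  obtain ⟨F', hF, hF'⟩ := Fmap_deriv S d U
  set A := U * diagonal d * Uᵀ with hA
  have hAs : Aᵀ = A := udu_symm U d
  have hU' : Uᵀ * U = 1 := mul_eq_one_comm.1 hU
  -- analysis of the linearised map
  have lin : ∀ (H : Matrix V V ℝ) (W : Matrix V V ℝ), Wᵀ = W →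
      Lmap S d U H = (fun a b => if a ∈ S ∧ b ∈ S then (if a ≤ b then 0 else W a b) else 0) →
      ∃ K : Matrix V V ℝ, H = K * U ∧ Kᵀ = -K ∧ (∀ a b, ¬ (a ∈ S ∧ b ∈ S) → K a b = 0) ∧
        (∀ a ∈ S, ∀ b ∈ S, a ≠ b → (K * A - A * K) a b = W a b) := by
    intro H W hW hL
    have hKU : H = (H * Uᵀ) * U := by rw [Matrix.mul_assoc, hU', Matrix.mul_one]
    have hH0 : ∀ a b, ¬ (a ∈ S ∧ b ∈ S) → H a b = 0 := by
      intro a b hab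
      have := congrFun (congrFun hL a) b
      simpa [Lmap, hab] using this
    have hK0 : ∀ a b, ¬ (a ∈ S ∧ b ∈ S) → (H * Uᵀ) a b = 0 := by
      intro a b hab
      rw [Matrix.mul_apply]
      by_cases ha : a ∈ S
      · have hbS : b ∉ S := fun h => hab ⟨ha, h⟩
        refine Finset.sum_eq_zero fun j _ => ?_
        rw [Matrix.transpose_apply, hb b j (fun e => hbS e.1), Matrix.one_apply]
        split_ifs with hbj
        · subst hbj; rw [hH0 a b hab, zero_mul]
        · simp
      · refine Finset.sum_eq_zero fun j _ => ?_
        rw [hH0 a j (fun e => ha e.1), zero_mul]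
    set K := H * Uᵀ with hK
    have hKt : Kᵀ = U * Hᵀ := by rw [hK, Matrix.transpose_mul, Matrix.transpose_transpose]
    have h1 : ∀ a b, a ≤ b → K a b + K b a = 0 := by
      intro a b hab
      by_cases hS : a ∈ S ∧ b ∈ S
      · have := congrFun (congrFun hL a) b
        simp only [Lmap, hS, and_self, if_true, hab, Finset.sum_add_distrib] at this
        rw [← this, hK, Matrix.mul_apply, Matrix.mul_apply]
        congr 1
        exact Finset.sum_congr rfl fun j _ => by rw [Matrix.transpose_apply, mul_comm]
      · rw [hK0 a b hS, hK0 b a (fun e => hS e.symm), add_zero]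
    have hs : Kᵀ = -K := by
      ext a b
      rcases le_total a b with hab | hab
      · have := h1 a b hab; simp; linarith
      · have := h1 b a hab; simp; linarith
    have hKA : K * A - A * K = H * diagonal d * Uᵀ + U * diagonal d * Hᵀ := by
      have e1 : K * A = H * diagonal d * Uᵀ := by
        rw [hK, hA]
        calc H * Uᵀ * (U * diagonal d * Uᵀ) = H * (Uᵀ * U) * diagonal d * Uᵀ := by
              simp only [Matrix.mul_assoc]
          _ = _ := by rw [hU', Matrix.mul_one]
      have e2 : A * K = - (U * diagonal d * Hᵀ) := by
        have : K = - (U * Hᵀ) := by rw [← hKt, hs, neg_neg]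
        rw [this, hA, Matrix.mul_neg]
        congr 1
        calc U * diagonal d * Uᵀ * (U * Hᵀ) = U * diagonal d * (Uᵀ * U) * Hᵀ := by
              simp only [Matrix.mul_assoc]
          _ = _ := by rw [hU', Matrix.mul_one]
      rw [e1, e2, sub_neg_eq_add]
    have hsym : (K * A - A * K)ᵀ = K * A - A * K := comm_symm K A hs hAs
    have h2 : ∀ a ∈ S, ∀ b ∈ S, ¬ a ≤ b → (K * A - A * K) a b = W a b := by
      intro a ha b hbS hab
      have := congrFun (congrFun hL a) b
      simp only [Lmap, ha, hbS, and_self, if_true, hab, if_false, Finset.sum_add_distrib] at this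
      rw [← this, hKA, Matrix.add_apply]
      rw [Matrix.mul_apply, Matrix.mul_apply]
      simp only [Matrix.mul_diagonal, Matrix.transpose_apply]
    refine ⟨K, hKU, hs, hK0, fun a ha b hbS hab => ?_⟩
    by_cases h : a ≤ b
    · rw [← hsym, ← hW]
      exact h2 b hbS a ha (not_le.2 (lt_of_le_of_ne h hab))
    · exact h2 a ha b hbS h
  have inj : ∀ H, F' H = 0 → H = 0 := by
    intro H hH
    rw [hF'] at hH
    obtain ⟨K, hHK, hs, hK0, hKc⟩ := lin H 0 (by simp) (by
      rw [hH]; funext a b; simp)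
    have : K = 0 := by
      refine hn K hs fun a b hab => ?_
      by_cases hS : a ∈ S ∧ b ∈ S
      · exact hKc a hS.1 b hS.2 hab
      · rw [Matrix.sub_apply, Matrix.mul_apply, Matrix.mul_apply, ← Finset.sum_sub_distrib]
        by_cases ha : a ∈ S
        · have hbS : b ∉ S := fun h => hS ⟨ha, h⟩
          refine Finset.sum_eq_zero fun j _ => ?_
          rw [hA, hb.udu d j b hbS, hK0 j b (fun e => hbS e.2)]
          split_ifs with e
          · subst e; rw [hK0 _ _ (fun e => hbS e.2)]; simp
          · simp
        · refine Finset.sum_eq_zero fun j _ => ?_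
          rw [hA, hb.udu' d j a ha, hK0 a j (fun e => ha e.1)]
          split_ifs with e
          · subst e; rw [hK0 _ _ (fun e => ha e.1)]; simp
          · simp
    rw [hHK, this, Matrix.zero_mul]; rfl
  have hex : ∃ (γ : ℝ → Matrix V V ℝ) (H : Matrix V V ℝ), γ 0 = U ∧
      (∀ a j, HasDerivAt (fun t => γ t a j) (H a j) 0) ∧
      Lmap S d U H = (fun a b => if a ∈ S ∧ b ∈ S then (if a ≤ b then 0 else B a b) else 0) ∧
      ∀ᶠ t in 𝓝 (0 : ℝ), ∀ a b, Fmap S d (γ t) a b = Fmap S d U a b + t *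
        (if a ∈ S ∧ b ∈ S then (if a ≤ b then 0 else B a b) else 0) := by
    obtain ⟨γ, H, hγ0, hγd, hH, hγ⟩ := curve_exists (Fmap S d) F' U hF inj
      (fun a b => if a ∈ S ∧ b ∈ S then (if a ≤ b then 0 else B a b) else 0)
    rw [hF'] at hH
    refine ⟨γ, H, hγ0, fun a j => (hasDerivAt_pi.1 (hasDerivAt_pi.1 hγd a)) j, hH, ?_⟩
    filter_upwards [hγ] with t ht a b
    exact congrFun (congrFun ht a) b
  obtain ⟨γ, H, hγ0, hγd, hH, hγ⟩ := hex
  obtain ⟨K, hHK, hs, hK0, hKc⟩ := lin H B hB hH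
  have hγe : ∀ a j, HasDerivAt (fun t => γ t a j) ((K * U) a j) 0 := fun a j => by
    rw [← hHK]; exact hγd a j
  refine ⟨γ, K, hγ0, hγe, hs, hK0, hKc, ?_, ?_⟩
  · filter_upwards [hγ] with t ht
    generalize γ t = g at ht ⊢
    have hblk : Blk S g := by
      intro a b hab
      have := ht a b
      simp only [Fmap, hab, if_false, mul_zero, add_zero] at this
      rw [this]; exact hb a b hab
    have hle : ∀ a b, a ≤ b → (g * gᵀ) a b = (1 : Matrix V V ℝ) a b := by
      intro a b hab
      by_cases hS : a ∈ S ∧ b ∈ S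
      · have := ht a b
        simp only [Fmap, hS, and_self, if_true, hab, mul_zero,
          add_zero] at this
        rw [← hU]
        simp only [Matrix.mul_apply, Matrix.transpose_apply]
        exact this
      · have h1 : g * gᵀ = g * diagonal (fun _ => (1 : ℝ)) * gᵀ := by simp
        rw [h1]
        by_cases hbS : b ∈ S
        · have ha : a ∉ S := fun h => hS ⟨h, hbS⟩
          rw [hblk.udu' _ _ _ ha, Matrix.one_apply]; simp [eq_comm]
        · rw [hblk.udu _ _ _ hbS, Matrix.one_apply]
    refine ⟨?_, hblk, ?_⟩
    · ext a b
      rcases le_total a b with hab | hab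
      · exact hle a b hab
      · have e : (g * gᵀ)ᵀ = g * gᵀ := by simp [Matrix.transpose_mul]
        rw [← e, ← Matrix.transpose_one]; exact hle b a hab
    · have hlt : ∀ a ∈ S, ∀ b ∈ S, ¬ a ≤ b →
          (g * diagonal d * gᵀ) a b = A a b + t * B a b := by
        intro a ha b hbS hab
        have := ht a b
        simp only [Fmap, ha, hbS, and_self, if_true, hab, if_false, if_true] at this
        rw [hA, udu_apply, udu_apply]; exact this
      intro a ha b hbS hab
      by_cases h : a ≤ b
      · have h3 := hlt b hbS a ha (not_le.2 (lt_of_le_of_ne h hab))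
        rw [← udu_symm g d, ← hAs, ← hB]; exact h3
      · exact hlt a ha b hbS h
  · have hc : ContinuousAt (fun t => LinearMap.det (nlin (γ t * diagonal d *
        (γ t)ᵀ))) 0 := by
      refine (continuous_det_nlin.continuousAt).comp ?_
      refine continuousAt_pi.2 fun a => continuousAt_pi.2 fun b => ?_
      simp only [udu_apply]
      refine tendsto_finsetSum _ fun j _ => ?_
      exact (((hγe a j).continuousAt).mul continuousAt_const).mul ((hγe b j).continuousAt)
    have h0 : LinearMap.det (nlin (γ 0 * diagonal d *
        (γ 0)ᵀ)) ≠ 0 := by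
      rw [hγ0]; exact (nonDeg_iff A hAs).1 hn
    filter_upwards [hc.eventually_ne h0] with t ht
    exact (nonDeg_iff _ (udu_symm _ d)).2 ht

lemma exists_vec (T : Finset V) (hT : T.Nonempty) (Q : Finset (V → ℝ))
    (hQ : ∀ q ∈ Q, ∀ c ∈ T, q c ≠ 0) :
    ∃ b : V → ℝ, (∀ c, b c ≠ 0 ↔ c ∈ T) ∧ ∀ q ∈ Q, ∑ c, q c * b c ≠ 0 := by
  obtain ⟨c0, hc0⟩ := hT
  let bb : ℝ → V → ℝ := fun s c => if c = c0 then 1 else if c ∈ T then s else 0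
  have hev : ∀ᶠ s in 𝓝 (0 : ℝ), ∀ q ∈ Q, ∑ c, q c * bb s c ≠ 0 := by
    rw [Filter.eventually_all_finset]
    intro q hq
    have hcont : Continuous fun s => ∑ c, q c * bb s c := by
      refine continuous_finsetSum _ fun c _ => continuous_const.mul ?_
      simp only [bb]
      split_ifs <;> fun_prop
    refine hcont.continuousAt.eventually_ne ?_
    simp only [bb, ite_self, mul_ite, mul_one, mul_zero, Finset.sum_ite_eq', Finset.mem_univ, if_true]
    exact hQ q hq c0 hc0
  have h2 : ∀ᶠ s in 𝓝[≠] (0 : ℝ), (∀ q ∈ Q, ∑ c, q c * bb s c ≠ 0) ∧ s ≠ 0 :=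
    (hev.filter_mono nhdsWithin_le_nhds).and eventually_mem_nhdsWithin
  obtain ⟨s, hs, hs0⟩ := h2.exists
  refine ⟨bb s, fun c => ?_, hs⟩
  simp only [bb]
  split_ifs with h1 h2
  · simp [h1, hc0]
  · simp [h2, hs0]
  · simp [h2]

lemma resolvent_id (S : Finset V) (d : V → ℝ) (U : Matrix V V ℝ) (hU : U * Uᵀ = 1)
    (hb : Blk S U) (v : V) (b k : V → ℝ) (hk0 : ∀ a, a ∉ S → k a = 0)
    (hk : d v • k - (U * diagonal d * Uᵀ) *ᵥ k = b) (z : ℝ) (hz : ∀ i ∈ S, d i ≠ z) :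
    (d v - z) • ((U * diagonal (fun j => (d j - z)⁻¹) * Uᵀ) *ᵥ k) =
      k + (U * diagonal (fun j => (d j - z)⁻¹) * Uᵀ) *ᵥ b := by
  have hU' : Uᵀ * U = 1 := mul_eq_one_comm.1 hU
  set x := Uᵀ *ᵥ k with hx
  have hx0 : ∀ j, j ∉ S → x j = 0 := fun j hj => by
    rw [hx, hb.transpose.mulVec k j hj, hk0 j hj]
  have hkx : k = U *ᵥ x := by rw [hx, Matrix.mulVec_mulVec, hU, Matrix.one_mulVec]
  have hβ : Uᵀ *ᵥ b = d v • x - diagonal d *ᵥ x := by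
    rw [← hk, Matrix.mulVec_sub, Matrix.mulVec_smul, Matrix.mulVec_mulVec, ← Matrix.mul_assoc,
      ← Matrix.mul_assoc, hU', Matrix.one_mul, ← Matrix.mulVec_mulVec]
  rw [← Matrix.mulVec_mulVec, ← Matrix.mulVec_mulVec, ← Matrix.mulVec_mulVec,
    ← Matrix.mulVec_mulVec, hβ, ← hx, ← Matrix.mulVec_smul]
  conv_rhs => rw [hkx]
  rw [← Matrix.mulVec_add]
  congr 1
  funext j
  simp only [Pi.smul_apply, Pi.add_apply, Pi.sub_apply, Matrix.mulVec_diagonal, smul_eq_mul]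
  by_cases hj : j ∈ S
  · have : d j - z ≠ 0 := sub_ne_zero.2 (hz j hj)
    field_simp
    ring
  · rw [hx0 j hj]; simp

/-- The inductive statement, on the block `S`. -/
def Good (G : SimpleGraph V) (d : V → ℝ) (S : Finset V) : Prop :=
  ∀ (Y : Finset (V → ℝ)) (Z : Finset ℝ), ∃ U : Matrix V V ℝ,
    U * Uᵀ = 1 ∧ Blk S U ∧
    (∀ a ∈ S, ∀ b ∈ S, a ≠ b → ((U * diagonal d * Uᵀ) a b ≠ 0 ↔ G.Adj a b)) ∧
    (∀ y ∈ Y, (∃ j ∈ S, y j ≠ 0) → ∀ a ∈ S, (U *ᵥ y) a ≠ 0) ∧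
    (∀ z ∈ Z, (∀ i ∈ S, d i ≠ z) → ∀ a ∈ S, ∀ b ∈ S,
      (U * diagonal (fun j => (d j - z)⁻¹) * Uᵀ) a b ≠ 0) ∧
    NonDeg (U * diagonal d * Uᵀ)

lemma good_singleton (G : SimpleGraph V) (d : V → ℝ) (hd : Function.Injective d) (v : V) :
    Good G d {v} := by
  intro Y Z
  refine ⟨1, by simp, fun a b _ => rfl, ?_, ?_, ?_, ?_⟩
  · intro a ha b hb hab
    rw [Finset.mem_singleton] at ha hb
    exact absurd (ha.trans hb.symm) hab
  · intro y _ ⟨j, hj, hyj⟩ a ha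
    rw [Finset.mem_singleton] at ha hj
    subst ha; subst hj
    simpa using hyj
  · intro z _ hz a ha b hb
    rw [Finset.mem_singleton] at ha hb
    subst ha; subst hb
    simpa using sub_ne_zero.2 (hz _ (Finset.mem_singleton_self _))
  · intro K hs hK
    ext a b
    by_cases hab : a = b
    · subst hab
      have := congrFun (congrFun hs a) a
      simp at this
      simp; linarith
    · have := hK a b hab
      simp only [Matrix.one_mul, Matrix.transpose_one, Matrix.mul_one, Matrix.sub_apply,
        Matrix.mul_diagonal, Matrix.diagonal_mul] at this
      have h2 : K a b * (d b - d a) = 0 := by linarith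
      rcases mul_eq_zero.1 h2 with h | h
      · exact h
      · exact absurd (hd (sub_eq_zero.1 h)).symm hab

lemma good_step (G : SimpleGraph V) (d : V → ℝ) (hd : Function.Injective d) (S : Finset V)
    (hS : Good G d S) (v : V) (hv : v ∉ S) (u : V) (hu : u ∈ S) (huv : G.Adj v u) :
    Good G d (insert v S) := by
  classical
  intro Y Z
  obtain ⟨U, hU, hb, hA, hY, hZ, hN⟩ := hS
    (Y ∪ Y.image (fun y j => (d j - d v)⁻¹ * y j)) (insert (d v) Z)
  have hU' : Uᵀ * U = 1 := mul_eq_one_comm.1 hU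
  set A := U * diagonal d * Uᵀ with hAdef
  set R : ℝ → Matrix V V ℝ := fun z => U * diagonal (fun j => (d j - z)⁻¹) * Uᵀ with hR
  have hdv : ∀ i ∈ S, d i ≠ d v := fun i hi h => hv (hd h ▸ hi)
  -- the new edge weights
  obtain ⟨b, hbT, hbQ⟩ := exists_vec (S.filter (fun c => G.Adj v c))
    ⟨u, Finset.mem_filter.2 ⟨hu, huv⟩⟩
    ((((insert (d v) Z).filter (fun z => ∀ i ∈ S, d i ≠ z)) ×ˢ S).image (fun p c => R p.1 p.2 c) ∪
      (Y.filter (fun y => ∃ j ∈ S, y j ≠ 0)).image (fun y => U *ᵥ (fun j => (d j - d v)⁻¹ * y j)))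
    (by
      intro q hq c hc
      have hcS := (Finset.mem_filter.1 hc).1
      rcases Finset.mem_union.1 hq with hq | hq
      · obtain ⟨⟨z, a⟩, hp, rfl⟩ := Finset.mem_image.1 hq
        obtain ⟨hz, ha⟩ := Finset.mem_product.1 hp
        obtain ⟨hz1, hz2⟩ := Finset.mem_filter.1 hz
        exact hZ z hz1 hz2 a ha c hcS
      · obtain ⟨y, hy, rfl⟩ := Finset.mem_image.1 hq
        obtain ⟨hy1, j, hj, hyj⟩ := Finset.mem_filter.1 hy
        exact hY _ (Finset.mem_union_right _ (Finset.mem_image_of_mem _ hy1))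
          ⟨j, hj, mul_ne_zero (inv_ne_zero (sub_ne_zero.2 (hdv j hj))) hyj⟩ c hcS)
  have hRb : ∀ z ∈ insert (d v) Z, (∀ i ∈ S, d i ≠ z) → ∀ a ∈ S, (R z *ᵥ b) a ≠ 0 := by
    intro z hz hz' a ha
    exact hbQ (fun c => R z a c) (Finset.mem_union_left _ (Finset.mem_image.2
      ⟨(z, a), Finset.mem_product.2 ⟨Finset.mem_filter.2 ⟨hz, hz'⟩, ha⟩, rfl⟩))
  have hYb : ∀ y ∈ Y, (∃ j ∈ S, y j ≠ 0) →
      (U *ᵥ (fun j => (d j - d v)⁻¹ * y j)) ⬝ᵥ b ≠ 0 := by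
    intro y hy hy'
    exact hbQ _ (Finset.mem_union_right _ (Finset.mem_image_of_mem _
      (Finset.mem_filter.2 ⟨hy, hy'⟩)))
  have hbS : ∀ c, c ∉ S → b c = 0 := by
    intro c hc
    by_contra h
    exact hc (Finset.mem_filter.1 ((hbT c).1 h)).1
  let B : Matrix V V ℝ := Matrix.of fun a c => if a = v then b c else if c = v then b a else 0
  have hBt : Bᵀ = B := by
    ext a c
    simp only [B, Matrix.transpose_apply, of_apply]
    split_ifs with h1 h2 <;> simp_all
  obtain ⟨γ, K, hγ0, hγd, hKs, hK0, hKc, hγ1, hγ2⟩ := curve_matrix (insert v S) d U hU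
    (hb.mono (Finset.subset_insert v S)) hN B hBt
  let k : V → ℝ := fun a => K a v
  have hskew : ∀ a c, K a c = - K c a := fun a c => by
    have := congrFun (congrFun hKs c) a
    simpa using this
  have hk0 : ∀ a, a ∉ S → k a = 0 := by
    intro a ha
    by_cases hav : a = v
    · have := hskew v v
      simp only [k, hav]; linarith
    · exact hK0 a v (fun e => (Finset.mem_insert.1 e.1).elim hav ha)
  have hk : d v • k - A *ᵥ k = b := by
    funext a
    simp only [Pi.sub_apply, Pi.smul_apply, smul_eq_mul]
    by_cases ha : a ∈ S
    · have hav : a ≠ v := fun h => hv (h ▸ ha)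
      have h1 := hKc a (Finset.mem_insert_of_mem ha) v (Finset.mem_insert_self _ _) hav
      have h2 : (K * A) a v = d v * k a := by
        rw [Matrix.mul_apply, Finset.sum_congr rfl fun c _ => by rw [hAdef, hb.udu d c v hv]]
        simp [k, mul_comm]
      have h3 : B a v = b a := by simp [B, hav]
      rw [Matrix.sub_apply, h2, h3] at h1
      exact h1
    · have h2 : (A *ᵥ k) a = 0 := by
        simp only [Matrix.mulVec, dotProduct]
        refine Finset.sum_eq_zero fun c _ => ?_
        rw [hAdef, hb.udu' d c a ha]
        split_ifs with h
        · rw [h, hk0 a ha, mul_zero]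
        · simp
      rw [h2, hk0 a ha, hbS a ha]; simp
  have hres : ∀ z, (∀ i ∈ S, d i ≠ z) → (d v - z) • (R z *ᵥ k) = k + R z *ᵥ b :=
    resolvent_id S d U hU hb v b k hk0 hk
  have hkR : k = - (R (d v) *ᵥ b) := by
    have := hres (d v) hdv
    rw [sub_self, zero_smul] at this
    exact eq_neg_of_add_eq_zero_left this.symm
  have hkne : ∀ a ∈ S, k a ≠ 0 := by
    intro a ha
    rw [hkR]
    exact neg_ne_zero.2 (hRb (d v) (Finset.mem_insert_self _ _) hdv a ha)
  -- genericity along the curve, vectors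
  have gY : ∀ y ∈ Y, (∃ j ∈ insert v S, y j ≠ 0) → ∀ a ∈ insert v S,
      ∀ᶠ t in 𝓝[≠] (0 : ℝ), (γ t *ᵥ y) a ≠ 0 := by
    intro y hy hyj a ha
    have hder : HasDerivAt (fun t => (γ t *ᵥ y) a) ((K *ᵥ (U *ᵥ y)) a) 0 := by
      rw [Matrix.mulVec_mulVec]
      simp only [Matrix.mulVec, dotProduct]
      exact HasDerivAt.fun_sum fun j _ => (hγd a j).mul_const (y j)
    by_cases h0 : (U *ᵥ y) a = 0
    · refine hder.eventually_ne ?_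
      by_cases hav : a = v
      · subst hav
        rw [hb.mulVec y a hv] at h0
        have hyS : ∃ j ∈ S, y j ≠ 0 := by
          obtain ⟨j, hj, hj'⟩ := hyj
          rcases Finset.mem_insert.1 hj with h | h
          · rw [h] at hj'; exact absurd h0 hj'
          · exact ⟨j, h, hj'⟩
        have e1 : (K *ᵥ (U *ᵥ y)) a = - (k ⬝ᵥ (U *ᵥ y)) := by
          simp only [Matrix.mulVec, dotProduct, k, ← Finset.sum_neg_distrib]
          refine Finset.sum_congr rfl fun c _ => ?_
          rw [hskew a c, neg_mul]
        have e2 : R (d a) *ᵥ (U *ᵥ y) = U *ᵥ (fun j => (d j - d a)⁻¹ * y j) := by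
          simp only [hR]
          rw [Matrix.mulVec_mulVec, Matrix.mul_assoc, hU', Matrix.mul_one, ← Matrix.mulVec_mulVec]
          congr 1
          funext j
          rw [Matrix.mulVec_diagonal]
        rw [e1, hkR, neg_dotProduct, neg_neg]
        have e3 : (R (d a) *ᵥ b) ⬝ᵥ (U *ᵥ y) = (R (d a) *ᵥ (U *ᵥ y)) ⬝ᵥ b := by
          rw [dotProduct_comm, Matrix.dotProduct_mulVec, ← Matrix.mulVec_transpose]
          congr 2
          exact udu_symm U _
        rw [e3, e2]
        exact hYb y hy hyS
      · have haS : a ∈ S := (Finset.mem_insert.1 ha).resolve_left hav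
        have hy0 : ∀ j ∈ S, y j = 0 := by
          intro j hj
          by_contra h
          exact hY y (Finset.mem_union_left _ hy) ⟨j, hj, h⟩ a haS h0
        have hyv : y v ≠ 0 := by
          obtain ⟨j, hj, hj'⟩ := hyj
          rcases Finset.mem_insert.1 hj with h | h
          · rwa [h] at hj'
          · exact absurd (hy0 j h) hj'
        have hUy : ∀ c ∈ S, (U *ᵥ y) c = 0 := by
          intro c hc
          simp only [Matrix.mulVec, dotProduct]
          refine Finset.sum_eq_zero fun j _ => ?_
          by_cases hj : j ∈ S
          · rw [hy0 j hj, mul_zero]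
          · rw [hb c j (fun e => hj e.2), Matrix.one_apply_ne (show c ≠ j from fun e => hj (e ▸ hc)), zero_mul]
        have e1 : (K *ᵥ (U *ᵥ y)) a = k a * y v := by
          have : (K *ᵥ (U *ᵥ y)) a = ∑ c, K a c * (U *ᵥ y) c := rfl
          rw [this, Finset.sum_eq_single v]
          · rw [hb.mulVec y v hv]
          · intro c _ hcv
            by_cases hc : c ∈ S
            · rw [hUy c hc, mul_zero]
            · rw [hK0 a c (fun e => (Finset.mem_insert.1 e.2).elim hcv hc), zero_mul]
          · simp
        rw [e1]
        exact mul_ne_zero (hkne a haS) hyv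
    · refine (hder.continuousAt.eventually_ne ?_).filter_mono nhdsWithin_le_nhds
      rw [hγ0]; exact h0
  -- genericity along the curve, resolvents
  have hRsymm : ∀ (g : Matrix V V ℝ) (w : V → ℝ) a c,
      (g * diagonal w * gᵀ) a c = (g * diagonal w * gᵀ) c a := fun g w a c =>
    congrFun (congrFun (udu_symm g w) c) a
  have gZv : ∀ z ∈ Z, (∀ i ∈ insert v S, d i ≠ z) → ∀ a ∈ S,
      ∀ᶠ t in 𝓝[≠] (0 : ℝ),
        (γ t * diagonal (fun j => (d j - z)⁻¹) * (γ t)ᵀ) a v ≠ 0 := by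
    intro z hz hz' a ha
    have hzS : ∀ i ∈ S, d i ≠ z := fun i hi => hz' i (Finset.mem_insert_of_mem hi)
    have hzv : d v - z ≠ 0 := sub_ne_zero.2 (hz' v (Finset.mem_insert_self _ _))
    have hder : HasDerivAt (fun t => (γ t * diagonal (fun j => (d j - z)⁻¹) * (γ t)ᵀ) a v)
        ((K * R z - R z * K) a v) 0 := by
      have e1 : (K * R z - R z * K) a v =
          ∑ j, ((K * U) a j * (d j - z)⁻¹ * U v j + U a j * (d j - z)⁻¹ * (K * U) v j) := by
        have : K * R z - R z * K = (K * U) * diagonal (fun j => (d j - z)⁻¹) * Uᵀ +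
            U * diagonal (fun j => (d j - z)⁻¹) * (K * U)ᵀ := by
          rw [Matrix.transpose_mul, hKs, hR]
          simp only [Matrix.mul_assoc, Matrix.mul_neg]
          abel
        rw [this, Matrix.add_apply, Matrix.mul_apply, Matrix.mul_apply, Finset.sum_add_distrib]
        simp only [Matrix.mul_diagonal, Matrix.transpose_apply]
      rw [e1]
      simp only [udu_apply]
      refine HasDerivAt.fun_sum fun j _ => ?_
      have := ((hγd a j).mul_const ((d j - z)⁻¹)).fun_mul (hγd v j)
      rw [hγ0] at this
      exact this
    refine hder.eventually_ne ?_
    have e1 : (K * R z) a v = k a * (d v - z)⁻¹ := by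
      rw [Matrix.mul_apply, Finset.sum_congr rfl fun c _ => by
        simp only [hR]; rw [hb.udu _ c v hv]]
      simp [k]
    have e2 : (R z * K) a v = (R z *ᵥ k) a := rfl
    have e3 := congrFun (hres z hzS) a
    simp only [Pi.smul_apply, Pi.add_apply, smul_eq_mul] at e3
    rw [Matrix.sub_apply, e1, e2]
    intro h
    apply hRb z (Finset.mem_insert_of_mem hz) hzS a ha
    have : k a = (d v - z) * (R z *ᵥ k) a := by
      rw [sub_eq_zero] at h
      rw [← h]; field_simp
    linarith
  have gZ : ∀ z ∈ Z, (∀ i ∈ insert v S, d i ≠ z) → ∀ a ∈ insert v S, ∀ c ∈ insert v S,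
      ∀ᶠ t in 𝓝[≠] (0 : ℝ),
        (γ t * diagonal (fun j => (d j - z)⁻¹) * (γ t)ᵀ) a c ≠ 0 := by
    intro z hz hz' a ha c hc
    have hzS : ∀ i ∈ S, d i ≠ z := fun i hi => hz' i (Finset.mem_insert_of_mem hi)
    have hzv : d v - z ≠ 0 := sub_ne_zero.2 (hz' v (Finset.mem_insert_self _ _))
    have hcont : ContinuousAt
        (fun t => (γ t * diagonal (fun j => (d j - z)⁻¹) * (γ t)ᵀ) a c) 0 := by
      simp only [udu_apply]
      refine tendsto_finsetSum _ fun j _ => ?_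
      exact (((hγd a j).continuousAt).mul continuousAt_const).mul ((hγd c j).continuousAt)
    have hfin : R z a c ≠ 0 → ∀ᶠ t in 𝓝[≠] (0 : ℝ),
        (γ t * diagonal (fun j => (d j - z)⁻¹) * (γ t)ᵀ) a c ≠ 0 := by
      intro h
      refine (hcont.eventually_ne ?_).filter_mono nhdsWithin_le_nhds
      rw [hγ0]; exact h
    rcases Finset.mem_insert.1 ha with rfl | ha'
    · rcases Finset.mem_insert.1 hc with rfl | hc'
      · apply hfin
        simp only [hR]
        rw [hb.udu _ _ _ hv]
        simpa using hzv
      · filter_upwards [gZv z hz hz' c hc'] with t ht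
        rw [hRsymm]; exact ht
    · rcases Finset.mem_insert.1 hc with rfl | hc'
      · exact gZv z hz hz' a ha'
      · exact hfin (hZ z (Finset.mem_insert_of_mem hz) hzS a ha' c hc')
  have e1 : ∀ᶠ t in 𝓝[≠] (0 : ℝ), ∀ y ∈ Y, (∃ j ∈ insert v S, y j ≠ 0) → ∀ a ∈ insert v S,
      (γ t *ᵥ y) a ≠ 0 := by
    rw [Filter.eventually_all_finset]
    intro y hy
    rw [Filter.eventually_imp_distrib_left]
    intro h
    rw [Filter.eventually_all_finset]
    exact gY y hy h
  have e2 : ∀ᶠ t in 𝓝[≠] (0 : ℝ), ∀ z ∈ Z, (∀ i ∈ insert v S, d i ≠ z) → ∀ a ∈ insert v S,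
      ∀ c ∈ insert v S, (γ t * diagonal (fun j => (d j - z)⁻¹) * (γ t)ᵀ) a c ≠ 0 := by
    rw [Filter.eventually_all_finset]
    intro z hz
    rw [Filter.eventually_imp_distrib_left]
    intro h
    rw [Filter.eventually_all_finset]
    intro a ha
    rw [Filter.eventually_all_finset]
    exact gZ z hz h a ha
  have e3 : ∀ᶠ t in 𝓝[≠] (0 : ℝ), t ≠ 0 := eventually_mem_nhdsWithin
  obtain ⟨t, ht1, ht2, ht0, ⟨htU, htb, htA⟩, htN⟩ := (e1.and (e2.and (e3.and
    ((hγ1.filter_mono nhdsWithin_le_nhds).and (hγ2.filter_mono nhdsWithin_le_nhds))))).exists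
  refine ⟨γ t, htU, htb, ?_, ht1, ht2, htN⟩
  have hvc : ∀ c ∈ S, A c v + t * b c ≠ 0 ↔ G.Adj v c := by
    intro c hc
    have hcv : c ≠ v := fun h => hv (h ▸ hc)
    rw [hAdef, hb.udu d c v hv, if_neg hcv, zero_add]
    have := hbT c
    rw [Finset.mem_filter] at this
    rw [mul_ne_zero_iff, this]
    simp [ht0, hc]
  intro a ha c hc hac
  rw [htA a ha c hc hac]
  rcases Finset.mem_insert.1 ha with rfl | ha'
  · rcases Finset.mem_insert.1 hc with rfl | hc'
    · exact absurd rfl hac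
    · have : B a c = b c := by simp [B]
      rw [this, ← hvc c hc', hAdef, hRsymm U d a c]
  · have hav : a ≠ v := fun h => hv (h ▸ ha')
    rcases Finset.mem_insert.1 hc with rfl | hc'
    · have : B a c = b a := by simp [B, hav]
      rw [this, hvc a ha', SimpleGraph.adj_comm]
    · have hcv : c ≠ v := fun h => hv (h ▸ hc')
      have : B a c = 0 := by simp [B, hav, hcv]
      rw [this, mul_zero, add_zero]
      exact hA a ha' c hc' hac

lemma good_univ (G : SimpleGraph V) (hG : G.Connected) (d : V → ℝ) (hd : Function.Injective d) :
    Good G d Finset.univ := by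
  classical
  obtain ⟨v0⟩ := hG.nonempty
  obtain ⟨S, hS, hmax⟩ := ((Finset.univ : Finset (Finset V)).filter
    (fun S => S.Nonempty ∧ Good G d S)).exists_max_image Finset.card
    ⟨{v0}, Finset.mem_filter.2 ⟨Finset.mem_univ _, Finset.singleton_nonempty _,
      good_singleton G d hd v0⟩⟩
  obtain ⟨⟨s, hs⟩, hSG⟩ := (Finset.mem_filter.1 hS).2
  by_cases h : S = Finset.univ
  · rwa [h] at hSG
  · obtain ⟨w, hw⟩ : ∃ w, w ∉ S := by
      by_contra hh
      push Not at hh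
      exact h (Finset.eq_univ_iff_forall.2 hh)
    obtain ⟨p⟩ := hG.preconnected s w
    obtain ⟨e, _, he1, he2⟩ := p.exists_boundary_dart (S : Set V) hs hw
    have hgood := good_step G d hd S hSG e.snd he2 e.fst he1 e.adj.symm
    have := hmax (insert e.snd S) (Finset.mem_filter.2 ⟨Finset.mem_univ _,
      Finset.insert_nonempty _ _, hgood⟩)
    rw [Finset.card_insert_of_notMem he2] at this
    omega

end

end Helpers

/-- Theorem 2.5: every 0-1 multiplicity matrix which fits a graph `G`
(with connected components `G i` on `m i` vertices) is generically realisable for `G`,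
i.e. each column gives a generically realisable multiset for the corresponding component. -/
theorem statement4 (k r : ℕ) (m : Fin k → ℕ) (G : ∀ i, SimpleGraph (Fin (m i)))
    (hG : ∀ i, (G i).Connected)
    (V : Fin r → Fin k → ℕ)
    (hV01 : ∀ j i, V j i = 0 ∨ V j i = 1)
    (hfit : ∀ i, (∑ j, V j i) = m i) :
    ∀ (i : Fin k) (lam : Fin r → ℝ), StrictMono lam →
      GenericallyRealisable (G i)
        (((Finset.univ.filter (fun j => V j i = 1)).val).map lam) := by
  intro i lam hlam Y hY
  classical
  have hcard : (Finset.univ.filter (fun j => V j i = 1)).card = m i := by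
    rw [← hfit i, Finset.card_filter]
    refine Finset.sum_congr rfl fun j _ => ?_
    rcases hV01 j i with h | h <;> simp [h]
  let T := Finset.univ.filter (fun j => V j i = 1)
  let e := T.orderEmbOfFin hcard
  have hd : Function.Injective (fun x => lam (e x)) := hlam.injective.comp e.injective
  obtain ⟨U, hU, -, hA, hYU, -, -⟩ := good_univ (G i) (hG i) (fun x => lam (e x)) hd Y ∅
  refine ⟨fun x => lam (e x), U, ?_, mul_eq_one_comm.1 hU, ⟨udu_symm U _, ?_⟩, ?_⟩
  · have h1 : Finset.univ.map e.toEmbedding = T := Finset.map_orderEmbOfFin_univ T hcard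
    have h2 : Multiset.map e Finset.univ.val = T.val := by rw [← h1]; rfl
    change Multiset.map (fun x => lam (e x)) Finset.univ.val = Multiset.map lam T.val
    rw [← h2, Multiset.map_map]
    rfl
  · intro a b hab
    exact hA a (Finset.mem_univ _) b (Finset.mem_univ _) hab
  · intro y hy a
    obtain ⟨j, hj⟩ := Function.ne_iff.1 (hY y hy)
    exact hYU y hy ⟨j, Finset.mem_univ _, hj⟩ a (Finset.mem_univ _)
end

section
/- Let G and H be simple graphs with connected components G₁,…,G_k and H₁,…,H_ℓ respectively. Suppose there exist r ≥ 3 and matrices V ∈ {0,1}^{r×k} and W ∈ {0,1}^{r×ℓ} such that: the i-th column of V sums to |G_i| for each i, the j-th column of W sums to |H_j| for each j, and V and W are compatible. Then q(G ∨ H) = 2. -/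
open Matrix Filter

/-- The interior rows of an `r`-row matrix: all rows except the first and the last. -/
def interiorRows (r : ℕ) : Finset (Fin r) :=
  Finset.univ.filter (fun j => j.val ≠ 0 ∧ j.val ≠ r - 1)

/-- Compatibility of two nonnegative integer matrices `V ∈ ℕ₀^{r×k}`, `W ∈ ℕ₀^{r×l}`
(for `r ≥ 3`): the interior row sums agree, and `ṼᵀW̃` is nowhere-zero. -/
def Compatible {r k l : ℕ} (V : Fin r → Fin k → ℕ) (W : Fin r → Fin l → ℕ) : Prop :=
  (∀ j ∈ interiorRows r, (∑ i, V j i) = ∑ i, W j i) ∧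
  (∀ a : Fin k, ∀ b : Fin l, (∑ j ∈ interiorRows r, V j a * W j b) ≠ 0)

/-- `col : Fin r → ℕ` is an ordered multiplicity list realised by a matrix in `S(G)`:
there are `λ₁ < … < λ_r` and `A ∈ S(G)` whose spectrum consists of each `λ_j` with
multiplicity `col j`. -/
def IsOrderedMultiplicityList {α : Type*} [Fintype α] [DecidableEq α]
    (G : SimpleGraph α) {r : ℕ} (col : Fin r → ℕ) : Prop :=
  ∃ lam : Fin r → ℝ, StrictMono lam ∧ ∃ A : Matrix α α ℝ, inS G A ∧
    specMultiset A =
      (Finset.univ.val : Multiset (Fin r)).bind (fun j => Multiset.replicate (col j) (lam j))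


lemma exists_all_ne_zero {E : Type*} [NormedAddCommGroup E] [NormedSpace ℝ E] {Ω : Set E}
    (ho : IsOpen Ω) (hc : IsPreconnected Ω) (hne : Ω.Nonempty) {ι : Type*} (s : Finset ι)
    (f : ι → E → ℝ) (hf : ∀ i ∈ s, AnalyticOnNhd ℝ (f i) Ω)
    (h : ∀ i ∈ s, ∃ x ∈ Ω, f i x ≠ 0) : ∃ x ∈ Ω, ∀ i ∈ s, f i x ≠ 0 := by
  classical
  induction s using Finset.induction_on with
  | empty => obtain ⟨x, hx⟩ := hne; exact ⟨x, hx, by simp⟩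
  | insert a s ha ih =>
    obtain ⟨x, hx, hxs⟩ := ih (fun i hi => hf i (Finset.mem_insert_of_mem hi))
      (fun i hi => h i (Finset.mem_insert_of_mem hi))
    have h1 : ∀ᶠ y in nhds x, ∀ i ∈ s, f i y ≠ 0 := by
      rw [Filter.eventually_all_finset]
      intro i hi
      exact ((hf i (Finset.mem_insert_of_mem hi) x hx).continuousAt).eventually_ne (hxs i hi)
    have h2 : ∃ᶠ y in nhds x, f a y ≠ 0 := by
      intro hcon
      obtain ⟨z, hz, hz0⟩ := h a (Finset.mem_insert_self _ _)
      have : f a =ᶠ[nhds x] 0 := by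
        filter_upwards [hcon] with y hy
        simpa using hy
      exact hz0 ((hf a (Finset.mem_insert_self _ _)).eqOn_zero_of_preconnected_of_eventuallyEq_zero
        hc hx this hz)
    obtain ⟨y, hy1, hy2, hy3⟩ := (h2.and_eventually (h1.and (ho.mem_nhds hx))).exists
    refine ⟨y, hy3, ?_⟩
    intro i hi
    rcases Finset.mem_insert.1 hi with rfl | hi
    · exact hy1
    · exact hy2 i hi

lemma exists_path_seq {V : Type*} {G : SimpleGraph V} (hG : G.Connected) (x : V) (S : V → Prop)
    (hS : ∃ v, S v) : ∃ (d : ℕ) (p : ℕ → V), p 0 = x ∧ S (p d) ∧ (∀ i < d, ¬ S (p i)) ∧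
      (∀ i < d, G.Adj (p i) (p (i + 1))) ∧ ∀ i ≤ d, ∀ j ≤ d, p i = p j → i = j := by
  classical
  obtain ⟨v, hv⟩ := hS
  obtain ⟨w, hw⟩ := (hG.preconnected x v).exists_isPath
  have hex : ∃ i, S (w.getVert i) := ⟨w.length, by simpa using hv⟩
  have hle : Nat.find hex ≤ w.length := Nat.find_min' hex (by simpa using hv)
  refine ⟨Nat.find hex, w.getVert, by simp, Nat.find_spec hex, fun i hi => Nat.find_min hex hi,
    fun i hi => w.adj_getVert_succ (by omega), ?_⟩
  intro i hi j hj hij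
  exact hw.getVert_injOn (by simp; omega) (by simp; omega) hij

/-- The polynomial map combining orthogonality and the off-diagonal entries of `U D Uᵀ`. -/
noncomputable def mapF {n : ℕ} (d : Fin n → ℝ) (U : Fin n → Fin n → ℝ) : Fin n → Fin n → ℝ :=
  fun i j => if i ≤ j then ∑ k, U i k * U j k else ∑ k, U i k * d k * U j k

/-- Identity matrix as a function. -/
def idF (n : ℕ) : Fin n → Fin n → ℝ := fun i j => if i = j then 1 else 0

lemma analyticAt_mapF {n : ℕ} (d : Fin n → ℝ) (U : Fin n → Fin n → ℝ) :
    AnalyticAt ℝ (mapF d) U := by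
  have hc : ∀ i j : Fin n, AnalyticAt ℝ (fun U : Fin n → Fin n → ℝ => U i j) U := by
    intro i j
    exact ((ContinuousLinearMap.proj (R := ℝ) (φ := fun _ : Fin n => ℝ) j).comp
      (ContinuousLinearMap.proj (R := ℝ) (φ := fun _ : Fin n => Fin n → ℝ) i)).analyticAt U
  refine AnalyticAt.pi fun i => AnalyticAt.pi fun j => ?_
  by_cases h : i ≤ j
  · simp only [mapF, if_pos h]
    exact Finset.analyticAt_fun_sum _ fun k _ => (hc i k).mul (hc j k)
  · simp only [mapF, if_neg h]
    exact Finset.analyticAt_fun_sum _ fun k _ => ((hc i k).mul analyticAt_const).mul (hc j k)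

lemma mapF_idF {n : ℕ} (d : Fin n → ℝ) : mapF d (idF n) = idF n := by
  funext i j
  by_cases h : i ≤ j
  · simp [mapF, idF, h, eq_comm]
  · have : i ≠ j := fun e => h e.le
    simp [mapF, idF, h, this, this.symm]

lemma fderiv_mapF {n : ℕ} (d : Fin n → ℝ) (X : Fin n → Fin n → ℝ) (i j : Fin n) :
    fderiv ℝ (mapF d) (idF n) X i j =
      if i ≤ j then X i j + X j i else X i j * d j + d i * X j i := by
  have h1 : HasFDerivAt (mapF d) (fderiv ℝ (mapF d) (idF n)) (idF n + (0 : ℝ) • X) := by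
    simpa using (analyticAt_mapF d (idF n)).differentiableAt.hasFDerivAt
  have hl : HasDerivAt (fun t : ℝ => idF n + t • X) X 0 := by
    simpa using ((hasDerivAt_id (0 : ℝ)).smul_const X).const_add (idF n)
  have h2 := h1.comp_hasDerivAt (0 : ℝ) hl
  have h3 := hasDerivAt_pi.1 (hasDerivAt_pi.1 h2 i) j
  have hcomp : ∀ a b : Fin n, HasDerivAt (fun t : ℝ => idF n a b + t * X a b) (X a b) 0 := by
    intro a b
    simpa using ((hasDerivAt_id (0 : ℝ)).mul_const (X a b)).const_add (idF n a b)
  refine h3.unique ?_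
  by_cases h : i ≤ j
  · have := HasDerivAt.fun_sum (u := Finset.univ) (fun k _ => (hcomp i k).mul (hcomp j k))
    simp only [if_pos h]
    convert this using 1
    · funext t; simp [mapF, h]
    · simp [idF, Finset.sum_add_distrib]
  · have := HasDerivAt.fun_sum (u := Finset.univ)
      (fun k _ => ((hcomp i k).mul_const (d k)).mul (hcomp j k))
    simp only [if_neg h]
    convert this using 1
    · funext t; simp [mapF, h]
    · simp [idF, Finset.sum_add_distrib]

lemma fderiv_mapF_inj {n : ℕ} (d : Fin n → ℝ) (hd : Function.Injective d) :
    Function.Injective (fderiv ℝ (mapF d) (idF n)) := by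
  rw [injective_iff_map_eq_zero]
  intro X hX
  have key : ∀ i j : Fin n, (if i ≤ j then X i j + X j i else X i j * d j + d i * X j i) = 0 := by
    intro i j
    rw [← fderiv_mapF, hX]; rfl
  have main : ∀ i j : Fin n, j < i → X i j = 0 ∧ X j i = 0 := by
    intro i j hij
    have h1 := key j i
    have h2 := key i j
    rw [if_pos hij.le] at h1
    rw [if_neg (not_le.2 hij)] at h2
    have h3 : d i - d j ≠ 0 := sub_ne_zero.2 fun e => hij.ne' (hd e)
    have h4 : (d i - d j) * X j i = 0 := by linear_combination h2 - d j * h1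
    have h5 : X j i = 0 := (mul_eq_zero.1 h4).resolve_left h3
    exact ⟨by linarith, h5⟩
  funext i j
  rcases lt_trichotomy i j with h | h | h
  · exact (main j i h).2
  · subst h
    have := key i i
    rw [if_pos le_rfl] at this
    simpa using this
  · exact (main i j h).1

lemma local_param {n : ℕ} (d : Fin n → ℝ) (hd : Function.Injective d) :
    ∃ u : (Fin n → Fin n → ℝ) → (Fin n → Fin n → ℝ), AnalyticAt ℝ u (idF n) ∧
      u (idF n) = idF n ∧ ∀ᶠ T in nhds (idF n), mapF d (u T) = T := by
  let e : (Fin n → Fin n → ℝ) ≃L[ℝ] (Fin n → Fin n → ℝ) :=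
    (LinearEquiv.ofInjectiveEndo (fderiv ℝ (mapF d) (idF n)).toLinearMap
      (fderiv_mapF_inj d hd)).toContinuousLinearEquiv
  have he : (e : (Fin n → Fin n → ℝ) →L[ℝ] (Fin n → Fin n → ℝ)) = fderiv ℝ (mapF d) (idF n) := by
    ext X; rfl
  have hs : HasStrictFDerivAt (mapF d)
      (e : (Fin n → Fin n → ℝ) →L[ℝ] (Fin n → Fin n → ℝ)) (idF n) := by
    rw [he]; exact (analyticAt_mapF d (idF n)).hasStrictFDerivAt
  have hid : hs.localInverse (mapF d) e (idF n) (idF n) = idF n := by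
    have := hs.localInverse_apply_image
    rwa [mapF_idF] at this
  refine ⟨hs.localInverse (mapF d) e (idF n), ?_, hid, ?_⟩
  · have hm := hs.image_mem_toOpenPartialHomeomorph_target
    rw [mapF_idF] at hm
    refine (hs.toOpenPartialHomeomorph (mapF d)).analyticAt_symm (i := e) hm ?_ ?_
    · exact analyticAt_mapF d _
    · rw [he]
      change fderiv ℝ (mapF d) (hs.localInverse (mapF d) e (idF n) (idF n)) = _
      rw [hid]
  · have := hs.eventually_right_inverse
    rwa [mapF_idF] at this

lemma path_nonzero {n : ℕ} (d : Fin n → ℝ) (hd : Function.Injective d)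
    (U A : Matrix (Fin n) (Fin n) ℝ) (hU : Uᵀ * U = 1) (hU' : U * Uᵀ = 1)
    (hA : A = U * Matrix.diagonal d * Uᵀ) (hdiag : ∀ j, U j j ≠ 0)
    (D : ℕ) (p : ℕ → Fin n)
    (hoff : ∀ j, (∀ i ≤ D, p i ≠ j) → ∀ u, u ≠ j → A j u = 0)
    (hp1 : ∀ i < D, A (p i) (p (i + 1)) ≠ 0)
    (hp2 : ∀ i < D, ∀ u, u ≠ p i → A (p i) u ≠ 0 → u = p (i + 1) ∨ ∃ m < i, u = p m)
    (y : Fin n → ℝ) (hy : ∀ i < D, y (p i) = 0) (hyD : y (p D) ≠ 0) :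
    (U *ᵥ y) (p 0) ≠ 0 := by
  have hAU : A * U = U * Matrix.diagonal d := by
    rw [hA, Matrix.mul_assoc, hU, Matrix.mul_one]
  have hrow : ∀ i j, ∑ u, A i u * U u j = U i j * d j := by
    intro i j
    have := congrFun (congrFun hAU i) j
    rwa [Matrix.mul_apply, Matrix.mul_diagonal] at this
  have hoffU : ∀ j, (∀ i ≤ D, p i ≠ j) → ∀ x, x ≠ j → U x j = 0 := by
    intro j hj x hx
    have h1 : ∀ i, A j j * U j i = U j i * d i := by
      intro i
      rw [← hrow j i]
      symm
      refine Finset.sum_eq_single j (fun u _ hu => by rw [hoff j hj u hu, zero_mul]) (by simp)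
    have h2 : A j j = d j := by
      have := h1 j
      rw [mul_comm] at this
      exact mul_left_cancel₀ (hdiag j) this
    have h3 : ∀ i, i ≠ j → U j i = 0 := by
      intro i hi
      have h := h1 i
      rw [h2] at h
      have h4 : (d j - d i) * U j i = 0 := by linear_combination h
      exact (mul_eq_zero.1 h4).resolve_left (sub_ne_zero.2 fun e => hi (hd e).symm)
    have h5 : U j j * U j j = 1 := by
      have := congrFun (congrFun hU' j) j
      rw [Matrix.mul_apply, Matrix.one_apply_eq, Finset.sum_eq_single j] at this
      · exact this
      · intro b _ hb
        rw [h3 b hb, zero_mul]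
      · simp
    have h6 : ∑ u, U u j * U u j = 1 := by
      have := congrFun (congrFun hU j) j
      rwa [Matrix.mul_apply, Matrix.one_apply_eq] at this
    rw [← Finset.add_sum_erase _ _ (Finset.mem_univ j), h5] at h6
    have h7 : ∑ u ∈ Finset.univ.erase j, U u j * U u j = 0 := by linarith
    rw [Finset.sum_eq_zero_iff_of_nonneg (fun u _ => mul_self_nonneg _)] at h7
    exact mul_self_eq_zero.1 (h7 x (Finset.mem_erase.2 ⟨hx, Finset.mem_univ _⟩))
  have hval : (U *ᵥ y) (p 0) = U (p 0) (p D) * y (p D) := by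
    rw [Matrix.mulVec, dotProduct]
    refine Finset.sum_eq_single (p D) ?_ (by simp)
    intro j _ hj
    by_cases h : ∀ i ≤ D, p i ≠ j
    · rw [hoffU j h (p 0) (h 0 (Nat.zero_le _)), zero_mul]
    · push Not at h
      obtain ⟨i, hi, rfl⟩ := h
      have : i ≠ D := fun e => hj (by rw [e])
      rw [hy i (by omega), mul_zero]
  rw [hval]
  refine mul_ne_zero ?_ hyD
  intro h0
  have hall : ∀ i, i ≤ D → ∀ m ≤ i, U (p m) (p D) = 0 := by
    intro i
    induction i with
    | zero =>
      intro _ m hm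
      obtain rfl : m = 0 := by omega
      exact h0
    | succ i ih =>
      intro hi m hm
      have ih' := ih (by omega)
      rcases Nat.lt_or_ge m (i + 1) with h | h
      · exact ih' m (by omega)
      · obtain rfl : m = i + 1 := by omega
        have h1 := hrow (p i) (p D)
        rw [ih' i le_rfl, zero_mul, Finset.sum_eq_single (p (i + 1))] at h1
        · exact (mul_eq_zero.1 h1).resolve_left (hp1 i (by omega))
        · intro u _ hu
          by_cases hui : u = p i
          · rw [hui, ih' i le_rfl, mul_zero]
          by_cases hAu : A (p i) u = 0
          · rw [hAu, zero_mul]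
          rcases hp2 i (by omega) u hui hAu with h | ⟨m, hm, rfl⟩
          · exact absurd h hu
          · rw [ih' m (by omega), mul_zero]
        · simp
  exact hdiag (p D) (hall D le_rfl D le_rfl)

/-- Target of the local parametrisation for edge weights `W`. -/
noncomputable def tgt {n : ℕ} (G : SimpleGraph (Fin n)) (W : Fin n → Fin n → ℝ) :
    Fin n → Fin n → ℝ := by
  classical
  exact fun i j => if i ≤ j then idF n i j else if G.Adj i j then W i j else 0

lemma tgt_zero {n : ℕ} (G : SimpleGraph (Fin n)) : tgt G 0 = idF n := by
  classical
  funext i j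
  unfold tgt
  by_cases h : i ≤ j
  · simp [h]
  · have : i ≠ j := fun e => h e.le
    simp [h, idF, this]

lemma analyticAt_tgt {n : ℕ} (G : SimpleGraph (Fin n)) (W : Fin n → Fin n → ℝ) :
    AnalyticAt ℝ (tgt G) W := by
  classical
  have hc : ∀ i j : Fin n, AnalyticAt ℝ (fun U : Fin n → Fin n → ℝ => U i j) W := by
    intro i j
    exact ((ContinuousLinearMap.proj (R := ℝ) (φ := fun _ : Fin n => ℝ) j).comp
      (ContinuousLinearMap.proj (R := ℝ) (φ := fun _ : Fin n => Fin n → ℝ) i)).analyticAt W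
  refine AnalyticAt.pi fun i => AnalyticAt.pi fun j => ?_
  unfold tgt
  by_cases h : i ≤ j
  · simp only [if_pos h]; exact analyticAt_const
  · by_cases h' : G.Adj i j
    · simp only [if_neg h, if_pos h']; exact hc i j
    · simp only [if_neg h, if_neg h']; exact analyticAt_const

lemma mapF_tgt {n : ℕ} (G : SimpleGraph (Fin n)) (d : Fin n → ℝ) (U W : Fin n → Fin n → ℝ)
    (h : mapF d U = tgt G W) :
    (Matrix.of U) * (Matrix.of U)ᵀ = 1 ∧ (Matrix.of U)ᵀ * (Matrix.of U) = 1 ∧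
    (Matrix.of U * Matrix.diagonal d * (Matrix.of U)ᵀ).IsSymm ∧
    (∀ i j, j < i → G.Adj i j → (Matrix.of U * Matrix.diagonal d * (Matrix.of U)ᵀ) i j = W i j) ∧
    (∀ i j, j ≠ i → ¬ G.Adj i j →
      (Matrix.of U * Matrix.diagonal d * (Matrix.of U)ᵀ) i j = 0) := by
  classical
  have h1 : (Matrix.of U) * (Matrix.of U)ᵀ = 1 := by
    have hle : ∀ i j : Fin n, i ≤ j → ∑ k, U i k * U j k = idF n i j := by
      intro i j hij
      have := congrFun (congrFun h i) j
      simpa [mapF, tgt, hij] using this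
    ext i j
    simp only [Matrix.mul_apply, Matrix.transpose_apply, Matrix.of_apply, Matrix.one_apply]
    rcases le_total i j with hij | hij
    · exact hle i j hij
    · have := hle j i hij
      simp only [mul_comm (U i _)]
      rw [this]; simp [idF, eq_comm]
  have hsym : (Matrix.of U * Matrix.diagonal d * (Matrix.of U)ᵀ).IsSymm := by
    simp [Matrix.IsSymm, Matrix.transpose_mul, Matrix.mul_assoc]
  have hval : ∀ i j, j < i → (Matrix.of U * Matrix.diagonal d * (Matrix.of U)ᵀ) i j =
      if G.Adj i j then W i j else 0 := by
    intro i j hij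
    have := congrFun (congrFun h i) j
    simp only [mapF, tgt, not_le.2 hij, if_false] at this
    rw [← this, Matrix.mul_apply]
    simp [Matrix.mul_diagonal]
  refine ⟨h1, mul_eq_one_comm.1 h1, hsym, ?_, ?_⟩
  · intro i j hij ha
    rw [hval i j hij, if_pos ha]
  · intro i j hij ha
    rcases lt_or_gt_of_ne hij with h | h
    · rw [hval i j h, if_neg ha]
    · rw [← hsym.apply, hval j i h, if_neg (fun e => ha e.symm)]

lemma generic {n : ℕ} (G : SimpleGraph (Fin n)) (hG : G.Connected) (d : Fin n → ℝ)
    (hd : Function.Injective d) (Y : Finset (Fin n → ℝ)) (hY : ∀ y ∈ Y, y ≠ 0) :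
    ∃ U : Matrix (Fin n) (Fin n) ℝ, U * Uᵀ = 1 ∧ Uᵀ * U = 1 ∧
      inS G (U * Matrix.diagonal d * Uᵀ) ∧ ∀ y ∈ Y, ∀ i, (U *ᵥ y) i ≠ 0 := by
  classical
  obtain ⟨u, hua, hu0, hur⟩ := local_param d hd
  have hT0 := tgt_zero G
  have hTc : Filter.Tendsto (tgt G) (nhds 0) (nhds (idF n)) := by
    have := (analyticAt_tgt G 0).continuousAt.tendsto
    rwa [hT0] at this
  have e1 : ∀ᶠ W in nhds 0, mapF d (u (tgt G W)) = tgt G W := hTc.eventually hur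
  have e2 : ∀ᶠ W in nhds 0, AnalyticAt ℝ (fun W => u (tgt G W)) W := by
    have : ∀ᶠ W in nhds 0, AnalyticAt ℝ u (tgt G W) := hTc.eventually hua.eventually_analyticAt
    filter_upwards [this] with W hW
    exact AnalyticAt.fun_comp hW (analyticAt_tgt G W)
  have e3 : ∀ᶠ W in nhds 0, ∀ i, u (tgt G W) i i ≠ 0 := by
    rw [Filter.eventually_all]
    intro i
    have hc : ContinuousAt (fun W => u (tgt G W)) 0 := e2.self_of_nhds.continuousAt
    have hc' : ContinuousAt (fun W => u (tgt G W) i i) 0 :=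
      continuousAt_pi.1 (continuousAt_pi.1 hc i) i
    refine hc'.eventually_ne ?_
    rw [hT0, hu0]; simp [idF]
  obtain ⟨ε, hε, hball⟩ := Metric.eventually_nhds_iff_ball.1 (e1.and (e2.and e3))
  have hc : ∀ (i j : Fin n) (W : Fin n → Fin n → ℝ),
      AnalyticAt ℝ (fun U : Fin n → Fin n → ℝ => U i j) W := by
    intro i j W
    exact ((ContinuousLinearMap.proj (R := ℝ) (φ := fun _ : Fin n => ℝ) j).comp
      (ContinuousLinearMap.proj (R := ℝ) (φ := fun _ : Fin n => Fin n → ℝ) i)).analyticAt W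
  have hmem : ∀ P : Fin n → Fin n → Prop,
      (fun i j => if P i j then ε / 2 else 0 : Fin n → Fin n → ℝ) ∈ Metric.ball 0 ε := by
    intro P
    rw [mem_ball_zero_iff]
    refine lt_of_le_of_lt ?_ (half_lt_self hε)
    rw [pi_norm_le_iff_of_nonneg (by positivity)]
    intro i
    rw [pi_norm_le_iff_of_nonneg (by positivity)]
    intro j
    by_cases h : P i j
    · simp [h, abs_of_pos hε]
    · simp only [h, if_false, norm_zero]; positivity
  let f : (Fin n × Fin n) ⊕ ((Fin n → ℝ) × Fin n) → (Fin n → Fin n → ℝ) → ℝ := fun s W =>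
    Sum.elim (fun ij => W ij.1 ij.2) (fun yx => ∑ j, u (tgt G W) yx.2 j * yx.1 j) s
  obtain ⟨W, hW, hWne⟩ := exists_all_ne_zero (Ω := Metric.ball (0 : Fin n → Fin n → ℝ) ε)
    Metric.isOpen_ball (convex_ball _ _).isPreconnected ⟨0, Metric.mem_ball_self hε⟩
    ((Finset.univ : Finset (Fin n × Fin n)).disjSum (Y ×ˢ (Finset.univ : Finset (Fin n)))) f
    (by
      rintro (⟨i, j⟩ | ⟨y, x⟩) _
      · intro W _
        exact hc i j W
      · intro W hW
        refine Finset.analyticAt_fun_sum _ fun k _ => AnalyticAt.mul ?_ analyticAt_const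
        exact AnalyticAt.fun_comp (hc x k _) (hball W hW).2.1)
    (by
      rintro (⟨i, j⟩ | ⟨y, x⟩) hs
      · refine ⟨_, hmem (fun _ _ => True), ?_⟩
        simp [f, hε.ne']
      · have hyY : y ∈ Y := by simpa using hs
        have hy0 : ∃ v, y v ≠ 0 := Function.ne_iff.1 (hY y hyY)
        obtain ⟨D, p, hp0, hpD, hplt, hadj, hinj⟩ := exists_path_seq hG x (fun v => y v ≠ 0) hy0
        let PA : Fin n → Fin n → Prop := fun a b =>
          ∃ i < D, (a = p i ∧ b = p (i + 1)) ∨ (b = p i ∧ a = p (i + 1))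
        have hPAsymm : ∀ a b, PA a b → PA b a := fun a b ⟨i, hi, h⟩ => ⟨i, hi, h.symm⟩
        have hPAadj : ∀ a b, PA a b → G.Adj a b := by
          rintro a b ⟨i, hi, ⟨rfl, rfl⟩ | ⟨rfl, rfl⟩⟩
          · exact hadj i hi
          · exact (hadj i hi).symm
        obtain ⟨WP, hWP, hWP1, hWP2⟩ : ∃ WP ∈ Metric.ball (0 : Fin n → Fin n → ℝ) ε,
            (∀ a b, PA a b → WP a b ≠ 0) ∧ (∀ a b, ¬ PA a b → WP a b = 0) :=
          ⟨_, hmem PA, fun a b h => by simp only [h, if_true]; positivity,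
            fun a b h => by simp only [h, if_false]⟩
        refine ⟨WP, hWP, ?_⟩
        have hB := hball _ hWP
        obtain ⟨g1, g2, g3, g4, g5⟩ := mapF_tgt G d _ _ hB.1
        have hAne : ∀ a b, a ≠ b →
            ((Matrix.of (u (tgt G WP)) * Matrix.diagonal d *
              (Matrix.of (u (tgt G WP)))ᵀ) a b ≠ 0 ↔
              PA a b) := by
          intro a b hab
          by_cases ha : G.Adj a b
          · rcases lt_or_gt_of_ne hab with h | h
            · rw [← g3.apply, g4 b a h ha.symm]
              constructor
              · intro h; by_contra hc; exact h (hWP2 _ _ fun e => hc (hPAsymm _ _ e))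
              · intro h; exact hWP1 _ _ (hPAsymm _ _ h)
            · rw [g4 a b h ha]
              constructor
              · intro h; by_contra hc; exact h (hWP2 _ _ hc)
              · intro h; exact hWP1 _ _ h
          · constructor
            · intro h; exact absurd (g5 a b hab.symm ha) h
            · intro h; exact absurd (hPAadj _ _ h) ha
        have := path_nonzero d hd _ _ g2 g1 rfl hB.2.2 D p ?_ ?_ ?_ y
          (fun i hi => by simpa using hplt i hi) hpD
        · rw [hp0] at this
          exact this
        · intro j hj v hv
          by_contra hcon
          obtain ⟨i, hi, ⟨h, _⟩ | ⟨_, h⟩⟩ := (hAne j v hv.symm).1 hcon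
          · exact hj i (by omega) h.symm
          · exact hj (i + 1) (by omega) h.symm
        · intro i hi
          exact (hAne _ _ (hadj i hi).ne).2 ⟨i, hi, Or.inl ⟨rfl, rfl⟩⟩
        · intro i hi v hv hcon
          obtain ⟨m, hm, ⟨h, h'⟩ | ⟨h', h⟩⟩ := (hAne _ _ hv.symm).1 hcon
          · have := hinj _ (by omega) _ (by omega) h
            subst this
            exact Or.inl h'
          · have := hinj _ (by omega) _ (by omega) h
            exact Or.inr ⟨m, by omega, h'⟩)
  have hB := hball W hW
  obtain ⟨g1, g2, g3, g4, g5⟩ := mapF_tgt G d _ _ hB.1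
  have hW0 : ∀ i j, W i j ≠ 0 := fun i j => hWne (Sum.inl (i, j)) (by simp)
  refine ⟨Matrix.of (u (tgt G W)), g1, g2, ⟨g3, ?_⟩, ?_⟩
  · intro a b hab
    by_cases ha : G.Adj a b
    · refine ⟨fun _ => ha, fun _ => ?_⟩
      rcases lt_or_gt_of_ne hab with h | h
      · rw [← g3.apply, g4 b a h ha.symm]; exact hW0 _ _
      · rw [g4 a b h ha]; exact hW0 _ _
    · exact ⟨fun h => absurd (g5 a b hab.symm ha) h, fun h => absurd h ha⟩
  · intro y hy i
    exact hWne (Sum.inr (y, i)) (by simpa using hy)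

/-- Real indicator function of a finset. -/
def ind {r : ℕ} (S : Finset (Fin r)) (j : Fin r) : ℝ := if j ∈ S then 1 else 0

/-- Selection matrix. -/
def selR {n r : ℕ} {S : Finset (Fin r)} (e : Fin n ≃ S) : Matrix (Fin n) (Fin r) ℝ :=
  Matrix.of fun i j => if (e i : Fin r) = j then 1 else 0

lemma selR_mulVec {n r : ℕ} {S : Finset (Fin r)} (e : Fin n ≃ S) (y : Fin r → ℝ) :
    selR e *ᵥ y = fun i => y (e i) := by
  funext i
  simp [selR, Matrix.mulVec, dotProduct]

lemma selR_diag {n r : ℕ} {S : Finset (Fin r)} (e : Fin n ≃ S) (d : Fin r → ℝ) :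
    selR e * Matrix.diagonal d * (selR e)ᵀ = Matrix.diagonal fun i => d (e i) := by
  ext i j
  rw [Matrix.mul_apply]
  simp only [Matrix.mul_diagonal, selR, Matrix.transpose_apply, Matrix.of_apply]
  by_cases h : i = j
  · subst h; simp
  · have : (e j : Fin r) ≠ e i := fun h' => h (e.injective (Subtype.ext h')).symm
    simp [h, this]

lemma selR_mul_transpose {n r : ℕ} {S : Finset (Fin r)} (e : Fin n ≃ S) :
    selR e * (selR e)ᵀ = 1 := by
  have := selR_diag e (fun _ => 1)
  simpa using this

lemma selR_transpose_mul {n r : ℕ} {S : Finset (Fin r)} (e : Fin n ≃ S) :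
    (selR e)ᵀ * selR e = Matrix.diagonal (ind S) := by
  ext i j
  rw [Matrix.mul_apply]
  simp only [selR, Matrix.transpose_apply, Matrix.of_apply, Matrix.diagonal_apply, ind]
  by_cases hi : i ∈ S
  · rw [Finset.sum_eq_single (e.symm ⟨i, hi⟩)]
    · simp [hi]
    · intro b _ hb
      have : (e b : Fin r) ≠ i := by
        intro h
        apply hb
        rw [Equiv.eq_symm_apply]
        exact Subtype.ext h
      simp [this]
    · simp
  · have : ∀ b, (e b : Fin r) ≠ i := fun b h => hi (h ▸ (e b).2)
    simp [hi, this]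

lemma realise {n r : ℕ} (G : SimpleGraph (Fin n)) (hG : G.Connected) (S : Finset (Fin r))
    (hS : S.card = n) (lam : Fin r → ℝ) (hlam : Function.Injective lam)
    (Y : Finset (Fin r → ℝ)) (hY : ∀ y ∈ Y, ∃ j ∈ S, y j ≠ 0) :
    ∃ P : Matrix (Fin n) (Fin r) ℝ, P * Pᵀ = 1 ∧ Pᵀ * P = Matrix.diagonal (ind S) ∧
      inS G (P * Matrix.diagonal lam * Pᵀ) ∧ ∀ y ∈ Y, ∀ x, (P *ᵥ y) x ≠ 0 := by
  classical
  let e : Fin n ≃ S := (S.equivFinOfCardEq hS).symm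
  obtain ⟨U, h1, h2, h3, h4⟩ := generic G hG (fun i => lam (e i))
    (hlam.comp (Subtype.val_injective.comp e.injective)) (Y.image fun y i => y (e i)) (by
      intro y hy
      obtain ⟨y', hy', rfl⟩ := Finset.mem_image.1 hy
      obtain ⟨j, hj, hne⟩ := hY y' hy'
      intro h0
      apply hne
      have := congrFun h0 (e.symm ⟨j, hj⟩)
      simpa using this)
  refine ⟨U * selR e, ?_, ?_, ?_, ?_⟩
  · rw [Matrix.transpose_mul, Matrix.mul_assoc, ← Matrix.mul_assoc (selR e), selR_mul_transpose,
      Matrix.one_mul, h1]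
  · rw [Matrix.transpose_mul, Matrix.mul_assoc, ← Matrix.mul_assoc Uᵀ, h2, Matrix.one_mul,
      selR_transpose_mul]
  · have : U * selR e * Matrix.diagonal lam * (U * selR e)ᵀ =
        U * (selR e * Matrix.diagonal lam * (selR e)ᵀ) * Uᵀ := by
      simp only [Matrix.transpose_mul, Matrix.mul_assoc]
    rw [this, selR_diag]
    exact h3
  · intro y hy x
    rw [← Matrix.mulVec_mulVec, selR_mulVec]
    exact h4 _ (Finset.mem_image_of_mem _ hy) x

lemma exists_nowhere_zero_orthogonal (n : ℕ) : ∃ N : Matrix (Fin n) (Fin n) ℝ,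
    N * Nᵀ = 1 ∧ Nᵀ * N = 1 ∧ ∀ i j, N i j ≠ 0 := by
  rcases n with _ | n
  · exact ⟨1, by simp, by simp, fun i => i.elim0⟩
  let v : Fin (n + 1) → ℝ := fun i => if i = 0 then 1 else 2
  let c : ℝ := 1 + 4 * n
  have hc : c ≠ 0 := by positivity
  have hv : ∑ i, v i * v i = c := by
    rw [Fin.sum_univ_succ]
    simp [v, c]; ring
  let N : Matrix (Fin (n + 1)) (Fin (n + 1)) ℝ :=
    Matrix.of fun i j => (if i = j then 1 else 0) - 2 / c * (v i * v j)
  have hsym : Nᵀ = N := by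
    ext i j
    simp only [N, Matrix.transpose_apply, Matrix.of_apply, eq_comm, mul_comm]
  have hNN : N * N = 1 := by
    ext i j
    rw [Matrix.mul_apply]
    have : ∀ k, N i k * N k j = (if i = k then (if k = j then 1 else 0) else 0)
        - (if i = k then 2 / c * (v k * v j) else 0) - (if k = j then 2 / c * (v i * v k) else 0)
        + (2 / c) * (2 / c) * v i * v j * (v k * v k) := by
      intro k
      simp only [N, Matrix.of_apply]
      split_ifs <;> ring
    simp only [this, Finset.sum_add_distrib, Finset.sum_sub_distrib, ← Finset.mul_sum, hv]
    simp only [Finset.sum_ite_eq, Finset.sum_ite_eq', Finset.mem_univ, if_true, Matrix.one_apply]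
    field_simp
    ring
  refine ⟨N, by rw [hsym, hNN], by rw [hsym, hNN], ?_⟩
  intro i j
  simp only [N, Matrix.of_apply]
  by_cases h : i = j
  · subst h
    rw [if_pos rfl]
    intro h0
    have h1 : c = 2 * (v i * v i) := by
      field_simp at h0
      linarith
    by_cases hi : i = 0
    · simp only [v, c, hi, if_true] at h1
      have : (1 + 4 * n : ℕ) = 2 * (1 * 1) := by exact_mod_cast h1
      omega
    · simp only [v, c, hi, if_false] at h1
      have : (1 + 4 * n : ℕ) = 2 * (2 * 2) := by exact_mod_cast h1
      omega
  · rw [if_neg h]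
    have hvne : ∀ i, v i ≠ 0 := by
      intro i; simp only [v]; split_ifs <;> norm_num
    rw [zero_sub, neg_ne_zero]
    exact mul_ne_zero (div_ne_zero two_ne_zero hc) (mul_ne_zero (hvne i) (hvne j))

lemma exists_Q {k l : ℕ} (S : Finset (Fin k)) (S' : Finset (Fin l)) (h : S.card = S'.card) :
    ∃ Q : Matrix (Fin k) (Fin l) ℝ, Matrix.diagonal (ind S) * Q = Q ∧
      Q * Matrix.diagonal (ind S') = Q ∧ Q * Qᵀ = Matrix.diagonal (ind S) ∧
      Qᵀ * Q = Matrix.diagonal (ind S') ∧ ∀ i ∈ S, ∀ b ∈ S', Q i b ≠ 0 := by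
  let e : Fin S.card ≃ S := (S.equivFinOfCardEq rfl).symm
  let e' : Fin S.card ≃ S' := (S'.equivFinOfCardEq h.symm).symm
  obtain ⟨N, h1, h2, h3⟩ := exists_nowhere_zero_orthogonal S.card
  have a1 := selR_mul_transpose e
  have a2 := selR_mul_transpose e'
  have b1 := selR_transpose_mul e
  have b2 := selR_transpose_mul e'
  refine ⟨(selR e)ᵀ * N * selR e', ?_, ?_, ?_, ?_, ?_⟩
  · rw [← b1]
    calc (selR e)ᵀ * selR e * ((selR e)ᵀ * N * selR e')
        = (selR e)ᵀ * (selR e * (selR e)ᵀ) * N * selR e' := by simp only [Matrix.mul_assoc]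
      _ = _ := by rw [a1, Matrix.mul_one]
  · rw [← b2]
    calc (selR e)ᵀ * N * selR e' * ((selR e')ᵀ * selR e')
        = (selR e)ᵀ * N * (selR e' * (selR e')ᵀ) * selR e' := by simp only [Matrix.mul_assoc]
      _ = _ := by rw [a2, Matrix.mul_one]
  · rw [← b1]
    calc (selR e)ᵀ * N * selR e' * ((selR e)ᵀ * N * selR e')ᵀ
        = (selR e)ᵀ * (N * (selR e' * (selR e')ᵀ) * Nᵀ) * selR e := by
          simp only [Matrix.transpose_mul, Matrix.transpose_transpose, Matrix.mul_assoc]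
      _ = _ := by rw [a2, Matrix.mul_one, h1, Matrix.mul_one]
  · rw [← b2]
    calc ((selR e)ᵀ * N * selR e')ᵀ * ((selR e)ᵀ * N * selR e')
        = (selR e')ᵀ * (Nᵀ * (selR e * (selR e)ᵀ) * N) * selR e' := by
          simp only [Matrix.transpose_mul, Matrix.transpose_transpose, Matrix.mul_assoc]
      _ = _ := by rw [a1, Matrix.mul_one, h2, Matrix.mul_one]
  · intro i hi b hb
    have : ((selR e)ᵀ * N * selR e') i b = N (e.symm ⟨i, hi⟩) (e'.symm ⟨b, hb⟩) := by
      have c1 : ∀ x, (e x : Fin k) = i ↔ x = e.symm ⟨i, hi⟩ := fun x => by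
        rw [Equiv.eq_symm_apply, Subtype.ext_iff]
      have c2 : ∀ x, (e' x : Fin l) = b ↔ x = e'.symm ⟨b, hb⟩ := fun x => by
        rw [Equiv.eq_symm_apply, Subtype.ext_iff]
      simp only [Matrix.mul_apply, selR, Matrix.transpose_apply, Matrix.of_apply, c1, c2]
      simp
    rw [this]
    exact h3 _ _

lemma block_sq {α β κ κ' : Type*} [Fintype α] [Fintype β] [Fintype κ] [Fintype κ']
    [DecidableEq α] [DecidableEq β]
    (P : Matrix α κ ℝ) (P' : Matrix β κ' ℝ) (L PI : Matrix κ κ ℝ) (L' PI' : Matrix κ' κ' ℝ)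
    (Z : Matrix κ κ' ℝ) (hP : P * Pᵀ = 1) (hP' : P' * P'ᵀ = 1) (hPI : Pᵀ * P = PI)
    (hPI' : P'ᵀ * P' = PI') (h1 : PI * Z = Z) (h2 : Z * PI' = Z) (h3 : L * Z = Z * L')
    (hL : Lᵀ = L) (hL' : L'ᵀ = L') (h4 : Z * Zᵀ = PI - L * PI * L)
    (h5 : Zᵀ * Z = PI' - L' * PI' * L') :
    Matrix.fromBlocks (P * L * Pᵀ) (P * Z * P'ᵀ) (P' * Zᵀ * Pᵀ) (-(P' * L' * P'ᵀ)) *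
    Matrix.fromBlocks (P * L * Pᵀ) (P * Z * P'ᵀ) (P' * Zᵀ * Pᵀ) (-(P' * L' * P'ᵀ)) = 1 := by
  have hs : PIᵀ = PI := by rw [← hPI]; simp
  have hs' : PI'ᵀ = PI' := by rw [← hPI']; simp
  have h1' : Zᵀ * PI = Zᵀ := by
    conv_rhs => rw [← h1]
    rw [Matrix.transpose_mul, hs]
  have h2' : PI' * Zᵀ = Zᵀ := by
    conv_rhs => rw [← h2]
    rw [Matrix.transpose_mul, hs']
  have h3' : Zᵀ * L = L' * Zᵀ := by
    have := congrArg Matrix.transpose h3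
    rwa [Matrix.transpose_mul, Matrix.transpose_mul, hL, hL'] at this
  have e1 : P * PI * Pᵀ = 1 := by
    rw [← hPI, ← Matrix.mul_assoc, hP, Matrix.one_mul, hP]
  have e2 : P' * PI' * P'ᵀ = 1 := by
    rw [← hPI', ← Matrix.mul_assoc, hP', Matrix.one_mul, hP']
  rw [Matrix.fromBlocks_multiply, ← Matrix.fromBlocks_one]
  congr 1
  · calc P * L * Pᵀ * (P * L * Pᵀ) + P * Z * P'ᵀ * (P' * Zᵀ * Pᵀ)
        = P * (L * (Pᵀ * P) * L + Z * (P'ᵀ * P') * Zᵀ) * Pᵀ := by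
          simp only [Matrix.mul_assoc, Matrix.mul_add, Matrix.add_mul]
      _ = 1 := by rw [hPI, hPI', h2, h4, add_sub_cancel, e1]
  · calc P * L * Pᵀ * (P * Z * P'ᵀ) + P * Z * P'ᵀ * -(P' * L' * P'ᵀ)
        = P * (L * ((Pᵀ * P) * Z) - (Z * (P'ᵀ * P')) * L') * P'ᵀ := by
          simp only [Matrix.mul_assoc, Matrix.mul_add, Matrix.add_mul, Matrix.mul_neg, Matrix.neg_mul,
            sub_eq_add_neg]
      _ = 0 := by rw [hPI, hPI', h2, h1, h3, sub_self, Matrix.mul_zero, Matrix.zero_mul]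
  · calc P' * Zᵀ * Pᵀ * (P * L * Pᵀ) + -(P' * L' * P'ᵀ) * (P' * Zᵀ * Pᵀ)
        = P' * ((Zᵀ * (Pᵀ * P)) * L - L' * ((P'ᵀ * P') * Zᵀ)) * Pᵀ := by
          simp only [Matrix.mul_assoc, Matrix.mul_add, Matrix.add_mul, Matrix.mul_neg, Matrix.neg_mul,
            sub_eq_add_neg]
      _ = 0 := by rw [hPI, hPI', h2', h1', h3', sub_self, Matrix.mul_zero, Matrix.zero_mul]
  · calc P' * Zᵀ * Pᵀ * (P * Z * P'ᵀ) + -(P' * L' * P'ᵀ) * -(P' * L' * P'ᵀ)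
        = P' * (Zᵀ * ((Pᵀ * P) * Z) + L' * (P'ᵀ * P') * L') * P'ᵀ := by
          simp only [Matrix.mul_assoc, Matrix.mul_add, Matrix.add_mul, Matrix.neg_mul,
            Matrix.mul_neg, neg_neg]
      _ = 1 := by rw [hPI, hPI', h1, h5, sub_add_cancel, e2]

lemma qMat_le_two {α : Type*} [Fintype α] [DecidableEq α] (M : Matrix α α ℝ) (h : M * M = 1) :
    qMat M ≤ 2 := by
  have hsub : (specMultiset M).toFinset ⊆ ({1, -1} : Finset ℝ) := by
    intro μ hμ
    rw [Multiset.mem_toFinset, specMultiset, Polynomial.mem_roots (M.charpoly_monic.ne_zero),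
      Polynomial.IsRoot, Matrix.eval_charpoly] at hμ
    obtain ⟨v, hv, hv0⟩ := Matrix.exists_mulVec_eq_zero_iff.2 hμ
    have h1 : M *ᵥ v = μ • v := by
      rw [Matrix.sub_mulVec, sub_eq_zero] at hv0
      rw [← hv0]
      simp
    have h2 : v = (μ * μ) • v := by
      calc v = (M * M) *ᵥ v := by rw [h, Matrix.one_mulVec]
        _ = (μ * μ) • v := by
          rw [← Matrix.mulVec_mulVec, h1, Matrix.mulVec_smul, h1, smul_smul]
    obtain ⟨i, hi⟩ := Function.ne_iff.1 hv
    have h3 := congrFun h2 i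
    simp only [Pi.smul_apply, smul_eq_mul] at h3
    have h4 : (μ * μ - 1) * v i = 0 := by linear_combination -h3
    have h5 := (mul_eq_zero.1 h4).resolve_right hi
    have h6 : (μ - 1) * (μ + 1) = 0 := by linear_combination h5
    rcases mul_eq_zero.1 h6 with h | h
    · simp; left; linarith
    · simp; right; linarith
  exact (Finset.card_le_card hsub).trans Finset.card_le_two

lemma two_le_qMat {α : Type*} [Fintype α] [DecidableEq α] (A : Matrix α α ℝ) (h : A.IsSymm)
    (i j : α) (hij : i ≠ j) (hA : A i j ≠ 0) : 2 ≤ qMat A := by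
  by_contra hlt
  have hH : A.IsHermitian := by
    rw [Matrix.IsHermitian, Matrix.conjTranspose_eq_transpose_of_trivial]
    exact h
  have hc : (specMultiset A).toFinset.card ≤ 1 := by
    have : qMat A < 2 := not_le.1 hlt
    unfold qMat at this
    omega
  rw [Finset.card_le_one] at hc
  have hmem : ∀ a, hH.eigenvalues a ∈ (specMultiset A).toFinset := by
    intro a
    rw [Multiset.mem_toFinset, specMultiset, hH.roots_charpoly_eq_eigenvalues]
    simp
  have hconst : (RCLike.ofReal ∘ hH.eigenvalues : α → ℝ) = fun _ => hH.eigenvalues i := by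
    funext a
    exact hc _ (hmem a) _ (hmem i)
  have hsp := hH.spectral_theorem
  rw [hconst] at hsp
  have hd : (Matrix.diagonal fun _ : α => hH.eigenvalues i) = hH.eigenvalues i • 1 := by
    ext a b; simp [Matrix.diagonal_apply, Matrix.one_apply]
  rw [hd, map_smul, map_one] at hsp
  apply hA
  rw [hsp]
  simp [hij]

/-- Block diagonal assembly of the component eigenvector matrices. -/
def bigP {k r : ℕ} {m : Fin k → ℕ} (P : ∀ i, Matrix (Fin (m i)) (Fin r) ℝ) :
    Matrix (Σ i, Fin (m i)) (Fin k × Fin r) ℝ :=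
  Matrix.of fun a c => if a.1 = c.1 then P a.1 a.2 c.2 else 0

lemma bigP_diag_apply {k r : ℕ} {m : Fin k → ℕ} (P : ∀ i, Matrix (Fin (m i)) (Fin r) ℝ)
    (lam : Fin r → ℝ) (i : Fin k) (x x' : Fin (m i)) :
    (bigP P * Matrix.diagonal (fun c : Fin k × Fin r => lam c.2) * (bigP P)ᵀ) ⟨i, x⟩ ⟨i, x'⟩ =
      (P i * Matrix.diagonal lam * (P i)ᵀ) x x' := by
  rw [Matrix.mul_apply, Matrix.mul_apply, Fintype.sum_prod_type]
  simp only [Matrix.mul_diagonal, Matrix.transpose_apply]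
  rw [Finset.sum_eq_single i]
  · simp [bigP]
  · intro b _ hb
    simp [bigP, hb.symm]
  · simp

lemma bigP_diag_apply_ne {k r : ℕ} {m : Fin k → ℕ} (P : ∀ i, Matrix (Fin (m i)) (Fin r) ℝ)
    (lam : Fin r → ℝ) (i i' : Fin k) (hi : i ≠ i') (x : Fin (m i)) (x' : Fin (m i')) :
    (bigP P * Matrix.diagonal (fun c : Fin k × Fin r => lam c.2) * (bigP P)ᵀ) ⟨i, x⟩ ⟨i', x'⟩
      = 0 := by
  rw [Matrix.mul_apply]
  refine Finset.sum_eq_zero fun c _ => ?_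
  simp only [Matrix.mul_diagonal, Matrix.transpose_apply, bigP, Matrix.of_apply]
  by_cases h : i = c.1
  · have : i' ≠ c.1 := fun e => hi (h.trans e.symm)
    simp [this]
  · simp [h]

lemma bigP_inS {k r : ℕ} {m : Fin k → ℕ} (P : ∀ i, Matrix (Fin (m i)) (Fin r) ℝ)
    (lam : Fin r → ℝ) (G : ∀ i, SimpleGraph (Fin (m i)))
    (h : ∀ i, inS (G i) (P i * Matrix.diagonal lam * (P i)ᵀ)) :
    inS (sigmaGraph G)
      (bigP P * Matrix.diagonal (fun c : Fin k × Fin r => lam c.2) * (bigP P)ᵀ) := by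
  refine ⟨by simp [Matrix.IsSymm, Matrix.transpose_mul, Matrix.mul_assoc], ?_⟩
  rintro ⟨i, x⟩ ⟨i', x'⟩ hne
  by_cases hi : i = i'
  · subst hi
    have hx : x ≠ x' := fun e => hne (by rw [e])
    rw [bigP_diag_apply, (h i).2 x x' hx]
    constructor
    · intro ha
      exact ⟨i, x, x', ha, rfl, rfl⟩
    · rintro ⟨i₁, a, b, hab, h1, h2⟩
      cases h1
      cases h2
      exact hab
  · rw [bigP_diag_apply_ne P lam i i' hi]
    constructor
    · intro h; exact absurd rfl h
    · rintro ⟨i₁, a, b, hab, h1, h2⟩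
      exact absurd ((congrArg Sigma.fst h1).trans (congrArg Sigma.fst h2).symm) hi

lemma bigP_mul_transpose {k r : ℕ} {m : Fin k → ℕ} (P : ∀ i, Matrix (Fin (m i)) (Fin r) ℝ)
    (h : ∀ i, P i * (P i)ᵀ = 1) : bigP P * (bigP P)ᵀ = 1 := by
  have e : bigP P * (bigP P)ᵀ =
      bigP P * Matrix.diagonal (fun c : Fin k × Fin r => (fun _ => (1 : ℝ)) c.2) * (bigP P)ᵀ := by
    simp
  rw [e]
  ext ⟨i, x⟩ ⟨i', x'⟩
  by_cases hi : i = i'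
  · subst hi
    rw [bigP_diag_apply P (fun _ => 1)]
    simp [h, Matrix.one_apply]
  · rw [bigP_diag_apply_ne P (fun _ => 1) i i' hi, Matrix.one_apply_ne]
    exact fun e => hi (congrArg Sigma.fst e)

lemma bigP_transpose_mul {k r : ℕ} {m : Fin k → ℕ} (P : ∀ i, Matrix (Fin (m i)) (Fin r) ℝ)
    (S : Fin k → Finset (Fin r))
    (h : ∀ i, (P i)ᵀ * P i = Matrix.diagonal (ind (S i))) :
    (bigP P)ᵀ * bigP P = Matrix.diagonal (fun c : Fin k × Fin r => ind (S c.1) c.2) := by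
  ext ⟨i, j⟩ ⟨i', j'⟩
  rw [Matrix.mul_apply, Fintype.sum_sigma, Finset.sum_eq_single i]
  · by_cases hi : i = i'
    · subst hi
      have := congrFun (congrFun (h i) j) j'
      rw [Matrix.mul_apply] at this
      simp only [Matrix.transpose_apply] at this
      simp only [bigP, Matrix.transpose_apply, Matrix.of_apply, if_true, this,
        Matrix.diagonal_apply, Prod.mk.injEq, true_and]
    · simp [bigP, hi]
  · intro b _ hb
    simp [bigP, hb]
  · simp

lemma bigP_Z_apply {k l r : ℕ} {m : Fin k → ℕ} {p : Fin l → ℕ}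
    (P : ∀ i, Matrix (Fin (m i)) (Fin r) ℝ) (P' : ∀ i, Matrix (Fin (p i)) (Fin r) ℝ)
    (Z : Fin r → Matrix (Fin k) (Fin l) ℝ) (i : Fin k) (x : Fin (m i)) (b : Fin l)
    (y : Fin (p b)) :
    (bigP P * Matrix.blockDiagonal Z * (bigP P')ᵀ) ⟨i, x⟩ ⟨b, y⟩ =
      (P i *ᵥ fun j => Z j i b * P' b y j) x := by
  have h1 : ∀ c : Fin l × Fin r, (bigP P * Matrix.blockDiagonal Z) ⟨i, x⟩ c =
      P i x c.2 * Z c.2 i c.1 := by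
    rintro ⟨b, j⟩
    rw [Matrix.mul_apply, Fintype.sum_prod_type, Finset.sum_eq_single i]
    · simp [bigP, Matrix.blockDiagonal_apply]
    · intro b _ hb
      simp [bigP, hb.symm]
    · simp
  rw [Matrix.mul_apply, Fintype.sum_prod_type, Finset.sum_eq_single b]
  · simp only [h1]
    simp [bigP, Matrix.mulVec, dotProduct, mul_assoc]
  · intro c _ hc
    simp [bigP, hc.symm]
  · simp

lemma join_adj_inl {α β : Type*} (G : SimpleGraph α) (H : SimpleGraph β) (a b : α) :
    (graphJoin G H).Adj (Sum.inl a) (Sum.inl b) ↔ G.Adj a b := by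
  simp [graphJoin, partialJoin]

lemma join_adj_inr {α β : Type*} (G : SimpleGraph α) (H : SimpleGraph β) (a b : β) :
    (graphJoin G H).Adj (Sum.inr a) (Sum.inr b) ↔ H.Adj a b := by
  simp [graphJoin, partialJoin]

/-- Corollary 3.3: if there exist compatible 0-1 matrices `V` and `W` that
fit `G` and `H` respectively, then `q(G ∨ H) = 2`. -/
theorem statement7 (k l : ℕ) (hk : 1 ≤ k) (hl : 1 ≤ l)
    (m : Fin k → ℕ) (p : Fin l → ℕ)
    (G : ∀ i, SimpleGraph (Fin (m i))) (H : ∀ j, SimpleGraph (Fin (p j)))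
    (hG : ∀ i, (G i).Connected) (hH : ∀ j, (H j).Connected)
    (r : ℕ) (hr : 3 ≤ r)
    (V : Fin r → Fin k → ℕ) (W : Fin r → Fin l → ℕ)
    (hV01 : ∀ j i, V j i = 0 ∨ V j i = 1)
    (hW01 : ∀ j i, W j i = 0 ∨ W j i = 1)
    (hVfit : ∀ i, (∑ j, V j i) = m i)
    (hWfit : ∀ i, (∑ j, W j i) = p i)
    (hcomp : Compatible V W) :
    qGraph (graphJoin (sigmaGraph G) (sigmaGraph H)) = 2 := by
  classical
  obtain ⟨hrow, hnz⟩ := hcomp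
  -- eigenvalues
  let lam : Fin r → ℝ := fun j => 2 * (j : ℝ) / ((r : ℝ) - 1) - 1
  have hr' : (0 : ℝ) < (r : ℝ) - 1 := by
    have : (3 : ℝ) ≤ r := by exact_mod_cast hr
    linarith
  have hlam : Function.Injective lam := by
    intro a b hab
    simp only [lam] at hab
    have h1 : 2 * (a : ℝ) / ((r : ℝ) - 1) = 2 * (b : ℝ) / ((r : ℝ) - 1) := by linarith
    rw [div_left_inj' hr'.ne'] at h1
    have h2 : ((a : ℕ) : ℝ) = ((b : ℕ) : ℝ) := by linarith
    exact Fin.ext (by exact_mod_cast h2)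
  have hlam_end : ∀ j, j ∉ interiorRows r → 1 - lam j * lam j = 0 := by
    intro j hj
    have : j.val = 0 ∨ j.val = r - 1 := by
      by_contra hcon
      push Not at hcon
      exact hj (by simp [interiorRows, hcon])
    rcases this with h | h
    · simp [lam, h]
    · have h2 : ((j : ℕ) : ℝ) = (r : ℝ) - 1 := by
        rw [h, Nat.cast_sub (by omega)]; simp
      have : lam j = 1 := by
        simp only [lam, h2]
        field_simp
        norm_num
      rw [this]; norm_num
  have hlam_int : ∀ j, j ∈ interiorRows r → 0 < 1 - lam j * lam j := by
    intro j hj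
    simp only [interiorRows, Finset.mem_filter, Finset.mem_univ, true_and] at hj
    have hj0 : (0 : ℝ) < (j : ℕ) := by exact_mod_cast Nat.pos_of_ne_zero hj.1
    have hj1 : ((j : ℕ) : ℝ) < (r : ℝ) - 1 := by
      have h1 : (j : ℕ) + 1 < r := by have := j.2; omega
      have : ((j : ℕ) : ℝ) + 1 < r := by exact_mod_cast h1
      linarith
    have h0 : 0 < 2 * (j : ℝ) / ((r : ℝ) - 1) := by positivity
    have h1 : 2 * (j : ℝ) / ((r : ℝ) - 1) < 2 := by
      rw [div_lt_iff₀ hr']; linarith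
    have e : 1 - lam j * lam j =
        (2 * (j : ℝ) / ((r : ℝ) - 1)) * (2 - 2 * (j : ℝ) / ((r : ℝ) - 1)) := by
      simp only [lam]; ring
    rw [e]
    exact mul_pos h0 (by linarith)
  -- supports
  let SG : Fin k → Finset (Fin r) := fun i => Finset.univ.filter fun j => V j i = 1
  let SH : Fin l → Finset (Fin r) := fun i => Finset.univ.filter fun j => W j i = 1
  let RG : Fin r → Finset (Fin k) := fun j => Finset.univ.filter fun i => V j i = 1
  let RH : Fin r → Finset (Fin l) := fun j => Finset.univ.filter fun i => W j i = 1
  have card01 : ∀ {q : ℕ} (f : Fin q → ℕ), (∀ i, f i = 0 ∨ f i = 1) →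
      (Finset.univ.filter fun i => f i = 1).card = ∑ i, f i := by
    intro q f hf
    rw [Finset.card_filter]
    refine Finset.sum_congr rfl fun i _ => ?_
    rcases hf i with h | h <;> simp [h]
  have hSG : ∀ i, (SG i).card = m i := fun i =>
    (card01 (fun j => V j i) fun j => hV01 j i).trans (hVfit i)
  have hSH : ∀ i, (SH i).card = p i := fun i =>
    (card01 (fun j => W j i) fun j => hW01 j i).trans (hWfit i)
  have hRR : ∀ j ∈ interiorRows r, (RG j).card = (RH j).card := fun j hj =>
    ((card01 (V j) (hV01 j)).trans (hrow j hj)).trans (card01 (W j) (hW01 j)).symm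
  -- connecting blocks
  have hZ : ∀ j, ∃ Z : Matrix (Fin k) (Fin l) ℝ, Matrix.diagonal (ind (RG j)) * Z = Z ∧
      Z * Matrix.diagonal (ind (RH j)) = Z ∧
      Z * Zᵀ = (1 - lam j * lam j) • Matrix.diagonal (ind (RG j)) ∧
      Zᵀ * Z = (1 - lam j * lam j) • Matrix.diagonal (ind (RH j)) ∧
      (j ∈ interiorRows r → ∀ i ∈ RG j, ∀ b ∈ RH j, Z i b ≠ 0) := by
    intro j
    by_cases hj : j ∈ interiorRows r
    · obtain ⟨Q, q1, q2, q3, q4, q5⟩ := exists_Q (RG j) (RH j) (hRR j hj)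
      have hpos := hlam_int j hj
      have hs : Real.sqrt (1 - lam j * lam j) * Real.sqrt (1 - lam j * lam j) =
        1 - lam j * lam j := Real.mul_self_sqrt hpos.le
      refine ⟨Real.sqrt (1 - lam j * lam j) • Q, ?_, ?_, ?_, ?_, ?_⟩
      · rw [Matrix.mul_smul, q1]
      · rw [Matrix.smul_mul, q2]
      · rw [Matrix.transpose_smul, Matrix.smul_mul, Matrix.mul_smul, smul_smul, hs, q3]
      · rw [Matrix.transpose_smul, Matrix.smul_mul, Matrix.mul_smul, smul_smul, hs, q4]
      · intro _ i hi b hb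
        rw [Matrix.smul_apply, smul_eq_mul]
        exact mul_ne_zero (Real.sqrt_pos.2 hpos).ne' (q5 i hi b hb)
    · refine ⟨0, by simp, by simp, ?_, ?_, fun h => absurd h hj⟩
      · simp [hlam_end j hj]
      · simp [hlam_end j hj]
  choose Z z1 z2 z3 z4 z5 using hZ
  -- realisations of the components of `H`
  have hHreal : ∀ b, ∃ P : Matrix (Fin (p b)) (Fin r) ℝ, P * Pᵀ = 1 ∧
      Pᵀ * P = Matrix.diagonal (ind (SH b)) ∧
      inS (H b) (P * Matrix.diagonal (fun j => - lam j) * Pᵀ) ∧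
      ∀ y ∈ (SH b).image (fun j => (Pi.single j (1 : ℝ) : Fin r → ℝ)), ∀ x, (P *ᵥ y) x ≠ 0 := by
    intro b
    refine realise (H b) (hH b) (SH b) (hSH b) (fun j => - lam j)
      (fun a c h => hlam (neg_injective h)) _ ?_
    intro y hy
    obtain ⟨j, hj, rfl⟩ := Finset.mem_image.1 hy
    exact ⟨j, hj, by simp⟩
  choose P' a1 a2 a3 a4 using hHreal
  have hP'ne : ∀ b y, ∀ j ∈ SH b, P' b y j ≠ 0 := by
    intro b y j hj
    have := a4 b _ (Finset.mem_image_of_mem _ hj) y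
    simpa using this
  -- realisations of the components of `G`
  have hGreal : ∀ i, ∃ P : Matrix (Fin (m i)) (Fin r) ℝ, P * Pᵀ = 1 ∧
      Pᵀ * P = Matrix.diagonal (ind (SG i)) ∧
      inS (G i) (P * Matrix.diagonal lam * Pᵀ) ∧
      ∀ y ∈ (Finset.univ : Finset (Σ b, Fin (p b))).image
        (fun c => (fun j => Z j i c.1 * P' c.1 c.2 j : Fin r → ℝ)), ∀ x, (P *ᵥ y) x ≠ 0 := by
    intro i
    refine realise (G i) (hG i) (SG i) (hSG i) lam hlam _ ?_
    intro y hy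
    obtain ⟨⟨b, y⟩, _, rfl⟩ := Finset.mem_image.1 hy
    obtain ⟨j, hj, hne⟩ := Finset.exists_ne_zero_of_sum_ne_zero (hnz i b)
    have hVj : V j i = 1 := (hV01 j i).resolve_left fun h => hne (by simp [h])
    have hWj : W j b = 1 := (hW01 j b).resolve_left fun h => hne (by simp [h])
    refine ⟨j, by simp [SG, hVj], mul_ne_zero (z5 j hj i (by simp [RG, hVj]) b
      (by simp [RH, hWj])) (hP'ne b y j (by simp [SH, hWj]))⟩
  choose P b1 b2 b3 b4 using hGreal
  -- global matrices
  let L : Matrix (Fin k × Fin r) (Fin k × Fin r) ℝ := Matrix.diagonal fun c => lam c.2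
  let L' : Matrix (Fin l × Fin r) (Fin l × Fin r) ℝ := Matrix.diagonal fun c => lam c.2
  have hPI := bigP_transpose_mul P SG b2
  have hPI' := bigP_transpose_mul P' SH a2
  have hPIb : (Matrix.diagonal fun c : Fin k × Fin r => ind (SG c.1) c.2) =
      Matrix.blockDiagonal fun j => Matrix.diagonal (ind (RG j)) := by
    rw [Matrix.blockDiagonal_diagonal]
    simp [ind, SG, RG]
  have hPIb' : (Matrix.diagonal fun c : Fin l × Fin r => ind (SH c.1) c.2) =
      Matrix.blockDiagonal fun j => Matrix.diagonal (ind (RH j)) := by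
    rw [Matrix.blockDiagonal_diagonal]
    simp [ind, SH, RH]
  have hLb : L = Matrix.blockDiagonal fun j => Matrix.diagonal fun _ => lam j := by
    rw [Matrix.blockDiagonal_diagonal]
  have hLb' : L' = Matrix.blockDiagonal fun j => Matrix.diagonal fun _ => lam j := by
    rw [Matrix.blockDiagonal_diagonal]
  have hsq := block_sq (bigP P) (bigP P') L _ L' _ (Matrix.blockDiagonal Z)
    (bigP_mul_transpose P b1) (bigP_mul_transpose P' a1) hPI hPI'
    (by rw [hPIb, ← Matrix.blockDiagonal_mul]; simp only [z1])
    (by rw [hPIb', ← Matrix.blockDiagonal_mul]; simp only [z2])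
    (by
      rw [hLb, hLb', ← Matrix.blockDiagonal_mul, ← Matrix.blockDiagonal_mul]
      congr 1
      funext j
      ext a b
      simp [mul_comm])
    (by simp [L]) (by simp [L'])
    (by
      rw [hPIb, hLb, Matrix.blockDiagonal_transpose, ← Matrix.blockDiagonal_mul,
        ← Matrix.blockDiagonal_mul, ← Matrix.blockDiagonal_mul, ← Matrix.blockDiagonal_sub]
      congr 1
      funext j
      simp only [Pi.sub_apply, z3, Matrix.diagonal_mul_diagonal]
      ext a b
      by_cases h : a = b
      · subst h; simp; ring
      · simp [h])
    (by
      rw [hPIb', hLb', Matrix.blockDiagonal_transpose, ← Matrix.blockDiagonal_mul,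
        ← Matrix.blockDiagonal_mul, ← Matrix.blockDiagonal_mul, ← Matrix.blockDiagonal_sub]
      congr 1
      funext j
      simp only [Pi.sub_apply, z4, Matrix.diagonal_mul_diagonal]
      ext a b
      by_cases h : a = b
      · subst h; simp; ring
      · simp [h])
  set M := Matrix.fromBlocks (bigP P * L * (bigP P)ᵀ)
    (bigP P * Matrix.blockDiagonal Z * (bigP P')ᵀ)
    (bigP P' * (Matrix.blockDiagonal Z)ᵀ * (bigP P)ᵀ) (-(bigP P' * L' * (bigP P')ᵀ)) with hM
  have hCneg : -(bigP P' * L' * (bigP P')ᵀ) =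
      bigP P' * Matrix.diagonal (fun c : Fin l × Fin r => - lam c.2) * (bigP P')ᵀ := by
    have : (Matrix.diagonal fun c : Fin l × Fin r => - lam c.2) = -L' := by
      simp [L', Matrix.diagonal_neg]
    rw [this]; simp
  have hGin := bigP_inS P lam G b3
  have hHin := bigP_inS P' (fun j => - lam j) H a3
  have hBne : ∀ (a : Σ i, Fin (m i)) (b : Σ i, Fin (p i)),
      (bigP P * Matrix.blockDiagonal Z * (bigP P')ᵀ) a b ≠ 0 := by
    rintro ⟨i, x⟩ ⟨b, y⟩
    rw [bigP_Z_apply]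
    exact b4 i _ (Finset.mem_image_of_mem (f := fun c : (Σ b, Fin (p b)) =>
      (fun j => Z j i c.1 * P' c.1 c.2 j : Fin r → ℝ)) (Finset.mem_univ ⟨b, y⟩)) x
  have hBt : bigP P' * (Matrix.blockDiagonal Z)ᵀ * (bigP P)ᵀ =
      (bigP P * Matrix.blockDiagonal Z * (bigP P')ᵀ)ᵀ := by
    simp [Matrix.transpose_mul, Matrix.mul_assoc]
  have hMin : inS (graphJoin (sigmaGraph G) (sigmaGraph H)) M := by
    rw [hM, hCneg, hBt]
    refine ⟨?_, ?_⟩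
    · rw [Matrix.IsSymm, Matrix.fromBlocks_transpose, hGin.1, hHin.1, Matrix.transpose_transpose]
    · rintro (a | a) (b | b) hab
      · rw [Matrix.fromBlocks_apply₁₁, hGin.2 a b fun e => hab (by rw [e])]
        exact (join_adj_inl _ _ a b).symm
      · rw [Matrix.fromBlocks_apply₁₂]
        simp only [graphJoin, partialJoin]
        exact ⟨fun _ => Or.inr (Or.inr (Or.inl ⟨a, trivial, b, rfl, rfl⟩)), fun _ => hBne a b⟩
      · rw [Matrix.fromBlocks_apply₂₁, Matrix.transpose_apply]
        simp only [graphJoin, partialJoin]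
        exact ⟨fun _ => Or.inr (Or.inr (Or.inr ⟨b, trivial, a, rfl, rfl⟩)), fun _ => hBne b a⟩
      · rw [Matrix.fromBlocks_apply₂₂, hHin.2 a b fun e => hab (by rw [e])]
        exact (join_adj_inr _ _ a b).symm
  -- lower bound
  have hlow : ∀ A, inS (graphJoin (sigmaGraph G) (sigmaGraph H)) A → 2 ≤ qMat A := by
    intro A hA
    obtain ⟨x⟩ := (hG ⟨0, hk⟩).nonempty
    obtain ⟨y⟩ := (hH ⟨0, hl⟩).nonempty
    refine two_le_qMat A hA.1 (Sum.inl ⟨⟨0, hk⟩, x⟩) (Sum.inr ⟨⟨0, hl⟩, y⟩) (by simp) ?_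
    rw [hA.2 _ _ (by simp)]
    exact Or.inr (Or.inr (Or.inl ⟨_, trivial, _, rfl, rfl⟩))
  have hMq : qMat M = 2 := le_antisymm (qMat_le_two M hsq) (hlow M hMin)
  unfold qGraph
  refine le_antisymm (Nat.sInf_le ⟨M, hMin, hMq⟩) ?_
  refine le_csInf ⟨2, M, hMin, hMq⟩ ?_
  rintro q ⟨A, hA, rfl⟩
  exact hlow A hA
end

section
/- Let k ∈ ℕ, let m₁,…,m_k ∈ ℕ, and for each i ∈ {1,…,k} let H_i be a connected simple graph with m_i + 2 ≥ |H_i|. Then q( (K_{m₁} ∪ … ∪ K_{m_k}) ∨ (H₁ ∪ … ∪ H_k) ) = 2. -/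
open Matrix Filter

lemma poly_avoid {ι κ : Type*} [Fintype ι] [Fintype κ] (f : κ → MvPolynomial ι ℝ)
    (hf : ∀ k, ∃ w, MvPolynomial.eval w (f k) ≠ 0) :
    ∃ w, ∀ k, MvPolynomial.eval w (f k) ≠ 0 := by
  classical
  have h0 : (∏ k, f k) ≠ 0 := by
    rw [Finset.prod_ne_zero_iff]
    intro k _ h
    obtain ⟨w, hw⟩ := hf k
    exact hw (by rw [h]; simp)
  by_contra! hcon
  apply h0
  apply MvPolynomial.funext
  intro w
  obtain ⟨k, hk⟩ := hcon w
  rw [map_prod, map_zero]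
  exact Finset.prod_eq_zero (Finset.mem_univ k) hk

lemma householder {ι κ : Type*} [Fintype ι] [DecidableEq ι] [Fintype κ] (i0 : ι)
    (α : ι → ℝ) (hα : ∀ a b, a ≠ b → ∃ c, 2 * α c ≠ α a + α b)
    (Y : κ → ι → ℝ) (hY : ∀ k, Y k ≠ 0) :
    ∃ U : Matrix ι ι ℝ, Uᵀ = U ∧ U * U = 1 ∧ (∀ k a, (U *ᵥ Y k) a ≠ 0) ∧
      ∀ a b, a ≠ b → (U * diagonal α * U) a b ≠ 0 := by
  classical
  let N : MvPolynomial ι ℝ := ∑ c, MvPolynomial.X c ^ 2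
  let P1 : κ × ι → MvPolynomial ι ℝ := fun x =>
    N * MvPolynomial.C (Y x.1 x.2) - 2 * MvPolynomial.X x.2 *
      ∑ c, MvPolynomial.X c * MvPolynomial.C (Y x.1 c)
  let P2 : {x : ι × ι // x.1 ≠ x.2} → MvPolynomial ι ℝ := fun x =>
    2 * (∑ c, MvPolynomial.C (α c) * MvPolynomial.X c ^ 2)
      - MvPolynomial.C (α x.1.1 + α x.1.2) * N
  let f : Option (ι ⊕ (κ × ι) ⊕ {x : ι × ι // x.1 ≠ x.2}) → MvPolynomial ι ℝ := fun o =>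
    match o with
    | none => N
    | some (Sum.inl a) => MvPolynomial.X a
    | some (Sum.inr (Sum.inl x)) => P1 x
    | some (Sum.inr (Sum.inr x)) => P2 x
  have hf : ∀ k, ∃ w, MvPolynomial.eval w (f k) ≠ 0 := by
    rintro (_ | a | ⟨k, a⟩ | ⟨⟨a, b⟩, hab⟩)
    · exact ⟨Pi.single i0 1, by simp [f, N, Pi.single_apply]⟩
    · exact ⟨Pi.single a 1, by simp [f]⟩
    · by_cases hya : Y k a = 0
      · obtain ⟨c, hc⟩ : ∃ c, Y k c ≠ 0 := by
          by_contra! h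
          exact hY k (funext h)
        have hca : c ≠ a := fun h => hc (h ▸ hya)
        refine ⟨fun x => (if x = a then 1 else 0) + (if x = c then 1 else 0), ?_⟩
        simp [f, P1, hya, add_mul, Finset.sum_add_distrib, hc, hca.symm]
      · refine ⟨Pi.single a 1, ?_⟩
        simp [f, P1, N, Pi.single_apply]
        intro h
        apply hya
        linarith
    · obtain ⟨c, hc⟩ := hα a b hab
      refine ⟨Pi.single c 1, ?_⟩
      simp [f, P2, N, Pi.single_apply]
      exact fun h => hc (by linarith)
  obtain ⟨w, hw⟩ := poly_avoid f hf
  have hN : (∑ c, w c ^ 2) ≠ 0 := by simpa [f, N] using hw none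
  have hX : ∀ a, w a ≠ 0 := fun a => by simpa [f] using hw (some (Sum.inl a))
  have h1 : ∀ k a, (∑ c, w c ^ 2) * Y k a - 2 * w a * ∑ c, w c * Y k c ≠ 0 := fun k a => by
    simpa [f, P1, N] using hw (some (Sum.inr (Sum.inl (k, a))))
  have h2 : ∀ a b, a ≠ b → 2 * (∑ c, α c * w c ^ 2) - (α a + α b) * (∑ c, w c ^ 2) ≠ 0 :=
    fun a b hab => by
      simpa [f, P2, N] using hw (some (Sum.inr (Sum.inr ⟨(a, b), hab⟩)))
  clear hw hf
  clear f P1 P2 N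
  set n := ∑ c, w c ^ 2 with hn
  have hww : w ⬝ᵥ w = n := by simp [dotProduct, hn, sq]
  let U : Matrix ι ι ℝ := 1 - (2 / n) • vecMulVec w w
  have hUU : U * U = 1 := by
    simp only [U]
    rw [sub_mul, mul_sub, mul_sub, smul_mul_smul_comm, vecMulVec_mul_vecMulVec, hww]
    ext a b
    simp [vecMulVec_apply]
    field_simp
    ring
  refine ⟨U, ?_, hUU, ?_, ?_⟩
  · simp [U, transpose_sub, transpose_vecMulVec]
  · intro k a h
    apply h1 k a
    have : (U *ᵥ Y k) a = Y k a - 2 / n * (w a * (w ⬝ᵥ Y k)) := by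
      simp [U, sub_mulVec, smul_mulVec, vecMulVec_mulVec, mul_comm]
    rw [this] at h
    have h3 : ∑ c, w c * Y k c = w ⬝ᵥ Y k := rfl
    rw [h3]
    field_simp at h
    linarith
  · intro a b hab h
    have hq : w ⬝ᵥ (diagonal α *ᵥ w) = ∑ c, α c * w c ^ 2 := by
      simp only [dotProduct, mulVec_diagonal]
      exact Finset.sum_congr rfl fun c _ => by ring
    have e : U * diagonal α * U = diagonal α - (2/n) • vecMulVec w (w ᵥ* diagonal α)
       - (2/n) • vecMulVec (diagonal α *ᵥ w) w
       + ((2/n)*(2/n) * (∑ c, α c * w c ^ 2)) • vecMulVec w w := by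
      simp only [U]
      rw [← hq, sub_mul, mul_sub, sub_mul, mul_one, one_mul, Matrix.smul_mul, vecMulVec_mul,
        Matrix.mul_smul, mul_vecMulVec, sub_mulVec, smul_mulVec, vecMulVec_mulVec,
        ← dotProduct_mulVec]
      ext x y
      simp [vecMulVec_apply]
      ring
    apply h2 a b hab
    rw [e] at h
    simp [vecMulVec_apply, hab, mulVec_diagonal, vecMul_diagonal] at h
    have h5 : (2 / n^2 * (w a * w b)) * (2 * (∑ c, α c * w c ^ 2) - (α a + α b) * n) = 0 := by
      rw [← h]; field_simp; ring
    rcases mul_eq_zero.1 h5 with h6 | h6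
    · exact absurd h6 (by have := hX a; have := hX b; positivity)
    · exact h6

lemma spectral_real {n : Type*} [Fintype n] [DecidableEq n] (C : Matrix n n ℝ) (hC : C.IsSymm) :
    ∃ (V : Matrix n n ℝ) (d : n → ℝ), Vᵀ * V = 1 ∧ V * Vᵀ = 1 ∧ C = V * diagonal d * Vᵀ := by
  have hH : C.IsHermitian := by
    rw [Matrix.IsHermitian, conjTranspose_eq_transpose_of_trivial]; exact hC
  refine ⟨hH.eigenvectorUnitary, hH.eigenvalues, ?_, ?_, ?_⟩
  · have := Unitary.coe_star_mul_self hH.eigenvectorUnitary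
    rwa [star_eq_conjTranspose, conjTranspose_eq_transpose_of_trivial] at this
  · have := Unitary.coe_star_mul_self hH.eigenvectorUnitary
    rw [star_eq_conjTranspose, conjTranspose_eq_transpose_of_trivial] at this
    exact mul_eq_one_comm.1 this
  · have := hH.spectral_theorem
    rw [Unitary.conjStarAlgAut_apply, star_eq_conjTranspose,
      conjTranspose_eq_transpose_of_trivial] at this
    exact this

lemma two_le_qMat_s9 {V : Type*} [Fintype V] [DecidableEq V] (G : SimpleGraph V)
    (a b : V) (hab : G.Adj a b) (A : Matrix V V ℝ) (hA : inS G A) : 2 ≤ qMat A := by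
  by_contra! hlt
  have hH : A.IsHermitian := by
    rw [Matrix.IsHermitian, conjTranspose_eq_transpose_of_trivial]; exact hA.1
  have hle : (specMultiset A).toFinset.card ≤ 1 := by unfold qMat at hlt; omega
  rw [Finset.card_le_one] at hle
  have hmem : ∀ i, hH.eigenvalues i ∈ (specMultiset A).toFinset := by
    intro i
    rw [Multiset.mem_toFinset, specMultiset, hH.roots_charpoly_eq_eigenvalues]
    simp
  have hc : hH.eigenvalues = fun _ => hH.eigenvalues a :=
    funext fun i => hle _ (hmem i) _ (hmem a)
  have h1 := hH.spectral_theorem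
  have h2 : diagonal ((RCLike.ofReal : ℝ → ℝ) ∘ hH.eigenvalues)
      = (hH.eigenvalues a) • (1 : Matrix V V ℝ) := by
    rw [hc]; ext i j; simp [diagonal_apply, Matrix.one_apply]
  rw [h2, map_smul, map_one] at h1
  have := (hA.2 a b hab.ne).2 hab
  apply this
  rw [h1]
  simp [hab.ne]

lemma qGraph_eq_two {V : Type*} [Fintype V] [DecidableEq V] (G : SimpleGraph V)
    (a b : V) (hab : G.Adj a b) (A : Matrix V V ℝ) (hA : inS G A) (hAA : A * A = 1) :
    qGraph G = 2 := by
  have hq : qMat A = 2 := by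
    apply le_antisymm _ (two_le_qMat_s9 G a b hab A hA)
    have hsub : (specMultiset A).toFinset ⊆ {1, -1} := by
      intro x hx
      rw [Multiset.mem_toFinset, specMultiset] at hx
      have hx := Polynomial.isRoot_of_mem_roots hx
      rw [← Matrix.mem_spectrum_iff_isRoot_charpoly, ← Matrix.spectrum_toLin',
        ← Module.End.hasEigenvalue_iff_mem_spectrum] at hx
      obtain ⟨v, hv⟩ := hx.exists_hasEigenvector
      have h1 : A *ᵥ v = x • v := by simpa using hv.apply_eq_smul
      have h2 : v = (x * x) • v := by
        calc v = (A * A) *ᵥ v := by rw [hAA, one_mulVec]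
          _ = _ := by rw [← mulVec_mulVec, h1, mulVec_smul, h1, smul_smul]
      have h3 : (x * x - 1) • v = 0 := by rw [sub_smul, ← h2, one_smul, sub_self]
      rcases smul_eq_zero.1 h3 with h4 | h4
      · have : (x - 1) * (x + 1) = 0 := by linarith
        rcases mul_eq_zero.1 this with h | h
        · simp; left; linarith
        · simp; right; linarith
      · exact absurd h4 hv.2
    exact (Finset.card_le_card hsub).trans Finset.card_le_two
  unfold qGraph
  apply le_antisymm
  · exact Nat.sInf_le ⟨A, hA, hq⟩
  · have hne : {q | ∃ A : Matrix V V ℝ, inS G A ∧ qMat A = q}.Nonempty := ⟨2, A, hA, hq⟩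
    obtain ⟨A', h1, h2⟩ := Nat.sInf_mem hne
    rw [← h2]
    exact two_le_qMat_s9 G a b hab A' h1

section quad
variable {n : Type*} [Fintype n] [DecidableEq n]

lemma quad_diag (V : Matrix n n ℝ) (d : n → ℝ) (x : n → ℝ) :
    x ⬝ᵥ ((V * diagonal d * Vᵀ) *ᵥ x) = ∑ j, d j * (Vᵀ *ᵥ x) j ^ 2 := by
  rw [← mulVec_mulVec, ← mulVec_mulVec, dotProduct_mulVec, ← mulVec_transpose]
  simp only [dotProduct, mulVec_diagonal]
  exact Finset.sum_congr rfl fun j _ => by ring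

lemma norm_diag (V : Matrix n n ℝ) (hV : V * Vᵀ = 1) (x : n → ℝ) :
    ∑ j, (Vᵀ *ᵥ x) j ^ 2 = x ⬝ᵥ x := by
  have := quad_diag V 1 x
  simp only [Pi.one_apply, one_mul] at this
  rw [← this, show diagonal (1 : n → ℝ) = 1 from diagonal_one, mul_one, hV, one_mulVec]

lemma exists_eq_of_sum {n : Type*} [Fintype n] (g y : n → ℝ) (hg : ∀ j, 0 ≤ g j) (hs : ∑ j, g j * y j ^ 2 = 0)
    (hy : ∑ j, y j ^ 2 = 1) : ∃ j, g j = 0 := by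
  by_contra! h
  have : ∀ j, y j ^ 2 = 0 := by
    intro j
    have := (Finset.sum_eq_zero_iff_of_nonneg (fun j _ => mul_nonneg (hg j) (sq_nonneg (y j)))).1 hs
      j (Finset.mem_univ j)
    exact (mul_eq_zero.1 this).resolve_left (h j)
  simp [this] at hy

/-- scaled spectral data -/
lemma scale_spec (C : Matrix n n ℝ) (hC : C.IsSymm) (M : ℝ) (hM : 0 < M)
    (hup : ∀ x, x ⬝ᵥ x = 1 → x ⬝ᵥ (C *ᵥ x) ≤ M) (hlo : ∀ x, x ⬝ᵥ x = 1 → -M ≤ x ⬝ᵥ (C *ᵥ x))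
    (hx : ∃ x, x ⬝ᵥ x = 1 ∧ x ⬝ᵥ (C *ᵥ x) = M) :
    ∃ (V : Matrix n n ℝ) (d : n → ℝ), Vᵀ * V = 1 ∧ V * Vᵀ = 1 ∧
      (1 / M) • C = V * diagonal d * Vᵀ ∧ (∀ j, |d j| ≤ 1) ∧ (∃ j, d j = 1) ∧
      ((∃ x, x ⬝ᵥ x = 1 ∧ x ⬝ᵥ (C *ᵥ x) = -M) → ∃ j, d j = -1) := by
  obtain ⟨V, d, h1, h2, h3⟩ := spectral_real C hC
  have hcol : ∀ j, ∃ x, x ⬝ᵥ x = 1 ∧ x ⬝ᵥ (C *ᵥ x) = d j := by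
    intro j
    have e : Vᵀ *ᵥ (V *ᵥ Pi.single j 1) = Pi.single j 1 := by
      rw [mulVec_mulVec, h1, one_mulVec]
    refine ⟨V *ᵥ Pi.single j 1, ?_, ?_⟩
    · rw [← norm_diag V h2, e]; simp [Pi.single_apply]
    · rw [h3, quad_diag, e]; simp [Pi.single_apply]
  have hdu : ∀ j, d j ≤ M := fun j => by
    obtain ⟨x, a, b⟩ := hcol j; rw [← b]; exact hup x a
  have hdl : ∀ j, -M ≤ d j := fun j => by
    obtain ⟨x, a, b⟩ := hcol j; rw [← b]; exact hlo x a
  refine ⟨V, fun j => d j / M, h1, h2, ?_, ?_, ?_, ?_⟩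
  · have : diagonal (fun j => d j / M) = (1 / M) • diagonal d := by
      ext i j
      by_cases h : i = j <;> simp [h, div_eq_inv_mul]
    rw [this, Matrix.mul_smul, Matrix.smul_mul, h3]
  · intro j
    rw [abs_div, abs_of_pos hM, div_le_one hM]
    exact abs_le.2 ⟨hdl j, hdu j⟩
  · obtain ⟨x, a, b⟩ := hx
    obtain ⟨j, hj⟩ := exists_eq_of_sum (fun j => M - d j) (Vᵀ *ᵥ x) (fun j => sub_nonneg.2 (hdu j))
      (by simp only [sub_mul, Finset.sum_sub_distrib, ← Finset.mul_sum]
          rw [norm_diag V h2, a, ← quad_diag, ← h3, b]; ring)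
      (by rw [norm_diag V h2, a])
    refine ⟨j, ?_⟩
    have : d j = M := by linarith
    simp [this, hM.ne']
  · rintro ⟨x, a, b⟩
    obtain ⟨j, hj⟩ := exists_eq_of_sum (fun j => M + d j) (Vᵀ *ᵥ x)
      (fun j => by have := hdl j; linarith)
      (by simp only [add_mul, Finset.sum_add_distrib, ← Finset.mul_sum]
          rw [norm_diag V h2, a, ← quad_diag, ← h3, b]; ring)
      (by rw [norm_diag V h2, a])
    refine ⟨j, ?_⟩
    have : d j = -M := by linarith
    simp [this, hM.ne']

lemma quad_zero (C : Matrix n n ℝ) (hC : C.IsSymm)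
    (h : ∀ x, x ⬝ᵥ x = 1 → x ⬝ᵥ (C *ᵥ x) = 0) : C = 0 := by
  obtain ⟨V, d, h1, h2, h3⟩ := spectral_real C hC
  have : d = 0 := by
    funext j
    have e : Vᵀ *ᵥ (V *ᵥ Pi.single j 1) = Pi.single j 1 := by
      rw [mulVec_mulVec, h1, one_mulVec]
    have := h (V *ᵥ Pi.single j 1) (by rw [← norm_diag V h2, e]; simp [Pi.single_apply])
    rw [h3, quad_diag, e] at this
    simpa [Pi.single_apply] using this
  rw [h3, this]
  simp

lemma isCompact_K {n : Type*} [Fintype n] : IsCompact {x : n → ℝ | x ⬝ᵥ x = 1} := by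
  apply Metric.isCompact_of_isClosed_isBounded
  · exact isClosed_eq (by unfold dotProduct; fun_prop) continuous_const
  · apply (Metric.isBounded_closedBall (x := (0 : n → ℝ)) (r := 1)).subset
    intro x hx
    rw [mem_closedBall_zero_iff, pi_norm_le_iff_of_nonneg zero_le_one]
    intro i
    have h1 : x i * x i ≤ 1 := by
      rw [← (show x ⬝ᵥ x = 1 from hx)]
      exact Finset.single_le_sum (f := fun i => x i * x i) (fun i _ => mul_self_nonneg _)
        (Finset.mem_univ i)
    rw [Real.norm_eq_abs]
    exact abs_le_one_iff_mul_self_le_one.2 h1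

end quad

section core
variable {n : Type*} [Fintype n] [DecidableEq n]

lemma lap_quad (H : SimpleGraph n) [DecidableRel H.Adj] (x : n → ℝ) :
    x ⬝ᵥ (H.lapMatrix ℝ *ᵥ x) = (∑ i, ∑ j, if H.Adj i j then (x i - x j) ^ 2 else 0) / 2 := by
  rw [← SimpleGraph.lapMatrix_toLinearMap₂', toLinearMap₂'_apply']

lemma lap_quad_ge (H : SimpleGraph n) [DecidableRel H.Adj] (x : n → ℝ) (c d : n)
    (h : H.Adj c d) : (x c - x d) ^ 2 ≤ x ⬝ᵥ (H.lapMatrix ℝ *ᵥ x) := by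
  rw [lap_quad]
  have hin : ∀ i, 0 ≤ ∑ j, if H.Adj i j then (x i - x j) ^ 2 else 0 := fun i =>
    Finset.sum_nonneg fun j _ => by positivity
  have hj : ∀ i j, H.Adj i j → (x i - x j) ^ 2 ≤ ∑ j, if H.Adj i j then (x i - x j) ^ 2 else 0 := by
    intro i j hij
    have := Finset.single_le_sum (f := fun j => if H.Adj i j then (x i - x j) ^ 2 else 0)
      (fun j _ => by positivity) (Finset.mem_univ j)
    simpa [hij] using this
  have h2 := Finset.add_le_sum (f := fun i => ∑ j, if H.Adj i j then (x i - x j) ^ 2 else 0)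
    (fun i _ => hin i) (Finset.mem_univ c) (Finset.mem_univ d) h.ne
  have h3 := hj c d h
  have h4 := hj d c h.symm
  have h5 : (x d - x c) ^ 2 = (x c - x d) ^ 2 := by ring
  linarith

lemma lap_quad_pos (H : SimpleGraph n) [DecidableRel H.Adj] (hH : H.Connected) (x : n → ℝ)
    (hx : x ⬝ᵥ (H.lapMatrix ℝ *ᵥ x) ≤ 0) (i j : n) : x i = x j := by
  have h0 : x ⬝ᵥ (H.lapMatrix ℝ *ᵥ x) = 0 := by
    apply le_antisymm hx
    rw [lap_quad]
    exact div_nonneg (Finset.sum_nonneg fun i _ => Finset.sum_nonneg fun j _ => by positivity)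
      (by norm_num)
  rw [← toLinearMap₂'_apply',
    SimpleGraph.lapMatrix_toLinearMap₂'_apply'_eq_zero_iff_forall_reachable] at h0
  exact h0 i j (hH.preconnected i j)

lemma inS_smul {n : Type*} (H : SimpleGraph n) (C : Matrix n n ℝ) (hC : inS H C) (r : ℝ) (hr : r ≠ 0) :
    inS H (r • C) := by
  refine ⟨?_, fun i j hij => ?_⟩
  · have := hC.1
    unfold Matrix.IsSymm at *
    rw [transpose_smul, this]
  · rw [← hC.2 i j hij]; simp [hr]

lemma lap_apply_ne (H : SimpleGraph n) [DecidableRel H.Adj] (i j : n) (hij : i ≠ j) :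
    H.lapMatrix ℝ i j = if H.Adj i j then -1 else 0 := by
  rw [SimpleGraph.lapMatrix, SimpleGraph.degMatrix, Matrix.sub_apply, diagonal_apply_ne _ hij,
    SimpleGraph.adjMatrix_apply]
  split_ifs <;> simp

lemma inS_lap (H : SimpleGraph n) [DecidableRel H.Adj] : inS H (H.lapMatrix ℝ) := by
  refine ⟨H.isSymm_lapMatrix ℝ, fun i j hij => ?_⟩
  rw [lap_apply_ne H i j hij]
  simp

/-- Laplacian with one edge weight changed. -/
noncomputable def lapMod (H : SimpleGraph n) [DecidableRel H.Adj] (c d : n) (s : ℝ) :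
    Matrix n n ℝ :=
  H.lapMatrix ℝ - s • vecMulVec (Pi.single c 1 - Pi.single d 1) (Pi.single c 1 - Pi.single d 1)

lemma lapMod_mulVec (H : SimpleGraph n) [DecidableRel H.Adj] (c d : n) (s : ℝ) (x : n → ℝ) :
    lapMod H c d s *ᵥ x = H.lapMatrix ℝ *ᵥ x
      - (s * (x c - x d)) • (Pi.single c 1 - Pi.single d 1) := by
  rw [lapMod, sub_mulVec, smul_mulVec, vecMulVec_mulVec, sub_dotProduct]
  ext i
  simp
  ring

lemma lapMod_quad (H : SimpleGraph n) [DecidableRel H.Adj] (c d : n) (s : ℝ) (x : n → ℝ) :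
    x ⬝ᵥ (lapMod H c d s *ᵥ x) = x ⬝ᵥ (H.lapMatrix ℝ *ᵥ x) - s * (x c - x d) ^ 2 := by
  rw [lapMod_mulVec, dotProduct_sub, dotProduct_smul, dotProduct_sub]
  simp
  ring

lemma lapMod_symm (H : SimpleGraph n) [DecidableRel H.Adj] (c d : n) (s : ℝ) :
    (lapMod H c d s).IsSymm := by
  unfold Matrix.IsSymm lapMod
  rw [transpose_sub, transpose_smul, transpose_vecMulVec, (H.isSymm_lapMatrix ℝ).eq]

lemma lapMod_inS (H : SimpleGraph n) [DecidableRel H.Adj] (c d : n) (hcd : H.Adj c d) (s : ℝ)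
    (hs : s ≠ 1) : inS H (lapMod H c d s) := by
  refine ⟨lapMod_symm H c d s, fun i j hij => ?_⟩
  rw [lapMod, Matrix.sub_apply, lap_apply_ne H i j hij]
  have hne := hcd.ne
  have h1 : -1 + s ≠ 0 := fun h => hs (by linarith)
  have h2 := hcd.symm
  by_cases hic : i = c <;> by_cases hid : i = d <;> by_cases hjc : j = c <;>
    by_cases hjd : j = d <;> subst_vars <;>
    simp_all [vecMulVec_apply]

lemma lapMod_ker (H : SimpleGraph n) [DecidableRel H.Adj] (hH : H.Connected) (c d : n) (s : ℝ)
    (z : n → ℝ) (hz : z ⬝ᵥ (lapMod H c d s *ᵥ z) < 0) (x : n → ℝ)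
    (hx : lapMod H c d s *ᵥ x = 0) (i j : n) : x i = x j := by
  have hge : ∀ y : n → ℝ, y c = y d → 0 ≤ y ⬝ᵥ (lapMod H c d s *ᵥ y) := by
    intro y hy
    rw [lapMod_quad, hy, lap_quad]
    simp only [sub_self, ne_eq, OfNat.ofNat_ne_zero, not_false_eq_true, zero_pow, mul_zero, sub_zero]
    exact div_nonneg (Finset.sum_nonneg fun i _ => Finset.sum_nonneg fun j _ => by positivity)
      (by norm_num)
  by_cases hcd : x c = x d
  · apply lap_quad_pos H hH x
    have := lapMod_quad H c d s x
    rw [hx, hcd] at this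
    simp at this
    exact this.ge
  · exfalso
    have hcd' : x c - x d ≠ 0 := sub_ne_zero.2 hcd
    set r := (z c - z d) / (x c - x d) with hr
    have h1 := hge (z - r • x) (by
      simp only [Pi.sub_apply, Pi.smul_apply, smul_eq_mul]
      have : r * (x c - x d) = z c - z d := by rw [hr]; field_simp
      linarith)
    rw [mulVec_sub, mulVec_smul, hx, smul_zero, sub_zero, sub_dotProduct, smul_dotProduct,
      dotProduct_mulVec x, ← mulVec_transpose, (lapMod_symm H c d s).eq, hx] at h1
    simp at h1
    linarith

lemma lapMod_one (H : SimpleGraph n) [DecidableRel H.Adj] (c d : n) (s : ℝ) :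
    lapMod H c d s *ᵥ (fun _ => 1) = 0 := by
  rw [lapMod_mulVec, SimpleGraph.lapMatrix_mulVec_const_eq_zero]
  simp

lemma exists_balance (H : SimpleGraph n) [DecidableRel H.Adj] (c d : n) (hcd : H.Adj c d) :
    ∃ s M : ℝ, (∀ x, x ⬝ᵥ x = 1 → x ⬝ᵥ (lapMod H c d s *ᵥ x) ≤ M) ∧
      (∀ x, x ⬝ᵥ x = 1 → -M ≤ x ⬝ᵥ (lapMod H c d s *ᵥ x)) ∧
      (∃ x, x ⬝ᵥ x = 1 ∧ x ⬝ᵥ (lapMod H c d s *ᵥ x) = M) ∧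
      (∃ x, x ⬝ᵥ x = 1 ∧ x ⬝ᵥ (lapMod H c d s *ᵥ x) = -M) := by
  let K := {x : n → ℝ | x ⬝ᵥ x = 1}
  have hK : IsCompact K := isCompact_K
  have hKc : Pi.single c 1 ∈ K := by simp [K]
  have hKn : K.Nonempty := ⟨_, hKc⟩
  let Q : ℝ → (n → ℝ) → ℝ := fun s x => x ⬝ᵥ (lapMod H c d s *ᵥ x)
  have hQ : Continuous ↿Q := by
    have : ↿Q = fun q : ℝ × (n → ℝ) => q.2 ⬝ᵥ (H.lapMatrix ℝ *ᵥ q.2) - q.1 * (q.2 c - q.2 d) ^ 2 := by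
      funext q
      exact lapMod_quad H c d q.1 q.2
    rw [this]
    unfold Matrix.mulVec dotProduct
    fun_prop
  have hQs : ∀ s, Continuous (Q s) := fun s => hQ.comp (Continuous.prodMk_right s)
  let hi : ℝ → ℝ := fun s => sSup (Q s '' K)
  let lo : ℝ → ℝ := fun s => sInf (Q s '' K)
  have chi : Continuous hi := hK.continuous_sSup hQ
  have clo : Continuous lo := hK.continuous_sInf hQ
  have hbdd : ∀ s, IsCompact (Q s '' K) := fun s => hK.image (hQs s)
  have hhi : ∀ s, ∀ x ∈ K, Q s x ≤ hi s := fun s x hx =>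
    le_csSup (hbdd s).bddAbove ⟨x, hx, rfl⟩
  have hlo : ∀ s, ∀ x ∈ K, lo s ≤ Q s x := fun s x hx =>
    csInf_le (hbdd s).bddBelow ⟨x, hx, rfl⟩
  have ahi : ∀ s, ∃ x ∈ K, Q s x = hi s := fun s => by
    obtain ⟨x, hx, h⟩ := hK.exists_sSup_image_eq hKn (hQs s).continuousOn
    exact ⟨x, hx, h.symm⟩
  have alo : ∀ s, ∃ x ∈ K, Q s x = lo s := fun s => by
    obtain ⟨x, hx, h⟩ := hK.exists_sInf_image_eq hKn (hQs s).continuousOn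
    exact ⟨x, hx, h.symm⟩
  have hpos : ∀ x, 0 ≤ Q 1 x := fun x => by
    have := lap_quad_ge H x c d hcd
    simp only [Q]
    rw [lapMod_quad]
    linarith
  have hF1 : 0 ≤ hi 1 + lo 1 := by
    obtain ⟨x, hx, h⟩ := ahi 1
    obtain ⟨y, hy, h'⟩ := alo 1
    rw [← h, ← h']
    exact add_nonneg (hpos x) (hpos y)
  obtain ⟨T, hT1, hT⟩ : ∃ T, 1 ≤ T ∧ hi T + lo T ≤ 0 := by
    set e : n → ℝ := Pi.single c 1
    set q := e ⬝ᵥ (H.lapMatrix ℝ *ᵥ e) with hq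
    set T := 1 + |q| + |hi 1| with hTdef
    have hT1 : 1 ≤ T := by rw [hTdef, add_assoc]; exact le_add_of_nonneg_right (by positivity)
    refine ⟨T, hT1, ?_⟩
    have h1 : lo T ≤ q - T := by
      have := hlo T e hKc
      have h2 : Q T e = q - T := by
        simp only [Q]
        rw [lapMod_quad]
        simp [e, hcd.ne.symm, hq]
      linarith
    have h2 : hi T ≤ hi 1 := by
      obtain ⟨x, hx, h⟩ := ahi T
      rw [← h]
      refine le_trans ?_ (hhi 1 x hx)
      simp only [Q]
      rw [lapMod_quad, lapMod_quad]
      nlinarith [sq_nonneg (x c - x d)]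
    have := le_abs_self q
    have := le_abs_self (hi 1)
    linarith
  obtain ⟨s, -, hs⟩ := intermediate_value_Icc' hT1 (f := fun s => hi s + lo s)
    (chi.add clo).continuousOn ⟨hT, hF1⟩
  simp only at hs
  have hsl : lo s = - hi s := by linarith
  refine ⟨s, hi s, hhi s, ?_, ahi s, ?_⟩
  · rw [← hsl]; exact hlo s
  · rw [← hsl]; exact alo s

end core

lemma core {p m : ℕ} (hm : 1 ≤ m) (hp : p ≤ m + 2) (H : SimpleGraph (Fin p))
    (hH : H.Connected) :
    ∃ C : Matrix (Fin p) (Fin p) ℝ, inS H C ∧ C *ᵥ (fun _ => 1) = 0 ∧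
      (∀ x, C *ᵥ x = 0 → ∀ i j, x i = x j) ∧
      ∃ (V : Matrix (Fin p) (Fin p) ℝ) (d : Fin p → ℝ), Vᵀ * V = 1 ∧ V * Vᵀ = 1 ∧
        C = V * diagonal d * Vᵀ ∧ (∀ j, |d j| ≤ 1) ∧
        (Finset.univ.filter (fun j => |d j| < 1)).card ≤ m := by
  classical
  rcases Nat.lt_or_ge p 2 with h2 | h2
  · have : Subsingleton (Fin p) := Fin.subsingleton_iff_le_one.2 (by omega)
    refine ⟨0, ⟨by simp [Matrix.IsSymm], fun i j hij => absurd (Subsingleton.elim i j) hij⟩,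
      by simp, fun x _ i j => by rw [Subsingleton.elim i j], 1, 0, by simp, by simp, by simp,
      by simp, ?_⟩
    refine (Finset.card_filter_le _ _).trans ?_
    simp; omega
  have hnt : Nontrivial (Fin p) := Fin.nontrivial_iff_two_le.2 h2
  have hnb : ∀ v, ∃ w, H.Adj v w := fun v => by
    have := hH.preconnected.degree_pos_of_nontrivial v
    rwa [SimpleGraph.degree_pos_iff_exists_adj] at this
  obtain ⟨c⟩ := hH.nonempty
  obtain ⟨d, hcd⟩ := hnb c
  rcases Nat.lt_or_ge p 3 with h3 | h3
  · -- p = 2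
    obtain ⟨M, hM⟩ : ∃ M : ℝ, ∃ x ∈ {x : Fin p → ℝ | x ⬝ᵥ x = 1}, x ⬝ᵥ (H.lapMatrix ℝ *ᵥ x) = M ∧
        ∀ y ∈ {x : Fin p → ℝ | x ⬝ᵥ x = 1}, y ⬝ᵥ (H.lapMatrix ℝ *ᵥ y) ≤ M := by
      obtain ⟨x, hx, h⟩ := (isCompact_K (n := Fin p)).exists_isMaxOn
        (f := fun x => x ⬝ᵥ (H.lapMatrix ℝ *ᵥ x)) ⟨Pi.single c 1, by simp⟩
        (by unfold Matrix.mulVec dotProduct; fun_prop)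
      exact ⟨_, x, hx, rfl, fun y hy => h hy⟩
    obtain ⟨x, hx, hxM, hup⟩ := hM
    have hnn : ∀ y : Fin p → ℝ, 0 ≤ y ⬝ᵥ (H.lapMatrix ℝ *ᵥ y) := fun y =>
      (sq_nonneg _).trans (lap_quad_ge H y c d hcd)
    have hMpos : 0 < M := by
      have h := hup (Pi.single c 1) (by simp)
      have := lap_quad_ge H (Pi.single c 1) c d hcd
      simp [hcd.ne.symm] at this h
      linarith
    obtain ⟨V, e, a1, a2, a3, a4, ⟨j, a5⟩, -⟩ := scale_spec (H.lapMatrix ℝ) (H.isSymm_lapMatrix ℝ)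
      M hMpos hup (fun y _ => by linarith [hnn y]) ⟨x, hx, hxM⟩
    refine ⟨(1 / M) • H.lapMatrix ℝ, inS_smul H _ (inS_lap H) _ (by positivity), ?_, ?_,
      V, e, a1, a2, a3, a4, ?_⟩
    · rw [smul_mulVec, SimpleGraph.lapMatrix_mulVec_const_eq_zero, smul_zero]
    · intro y hy
      rw [smul_mulVec, smul_eq_zero] at hy
      have hy := hy.resolve_left (by positivity)
      exact lap_quad_pos H hH y (by rw [hy]; simp)
    · have : (Finset.univ.filter (fun j => |e j| < 1)) ⊆ Finset.univ.erase j := by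
        intro l hl
        rw [Finset.mem_erase]
        refine ⟨?_, Finset.mem_univ _⟩
        rintro rfl
        simp [a5] at hl
      refine (Finset.card_le_card this).trans ?_
      rw [Finset.card_erase_of_mem (Finset.mem_univ _)]
      simp; omega
  · obtain ⟨s, M, hup, hlo, hxp, hxn⟩ := exists_balance H c d hcd
    obtain ⟨v, hv⟩ : ∃ v, v ∉ ({c, d} : Finset (Fin p)) := by
      by_contra! h
      have := Finset.card_le_card (fun v _ => h v : Finset.univ ⊆ ({c, d} : Finset (Fin p)))
      have h5 := Finset.card_le_two (a := c) (b := d)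
      simp at this
      omega
    obtain ⟨w, hvw⟩ := hnb v
    simp only [Finset.mem_insert, Finset.mem_singleton, not_or] at hv
    have hne : lapMod H c d s ≠ 0 := by
      intro h
      have h1 := congrFun (congrFun h v) w
      rw [lapMod, Matrix.sub_apply, lap_apply_ne H v w hvw.ne] at h1
      simp [vecMulVec_apply, hv.1, hv.2, hvw] at h1
    have hMpos : 0 < M := by
      by_contra! hM0
      apply hne
      apply quad_zero _ (lapMod_symm H c d s)
      intro x hx
      have := hup x hx
      have := hlo x hx
      linarith
    have hs1 : s ≠ 1 := by
      rintro rfl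
      obtain ⟨x, hx, hxM⟩ := hxn
      rw [lapMod_quad] at hxM
      have := lap_quad_ge H x c d hcd
      linarith
    obtain ⟨V, e, a1, a2, a3, a4, ⟨j, a5⟩, a6⟩ := scale_spec _ (lapMod_symm H c d s)
      M hMpos hup hlo hxp
    obtain ⟨l, a6⟩ := a6 hxn
    refine ⟨(1 / M) • lapMod H c d s, inS_smul H _ (lapMod_inS H c d hcd s hs1) _ (by positivity),
      ?_, ?_, V, e, a1, a2, a3, a4, ?_⟩
    · rw [smul_mulVec, lapMod_one, smul_zero]
    · intro y hy
      rw [smul_mulVec, smul_eq_zero] at hy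
      have hy := hy.resolve_left (by positivity)
      obtain ⟨z, -, hz⟩ := hxn
      exact lapMod_ker H hH c d s z (by rw [hz]; linarith) y hy
    · have : (Finset.univ.filter (fun j => |e j| < 1)) ⊆ (Finset.univ.erase j).erase l := by
        intro x hx
        simp only [Finset.mem_erase, Finset.mem_univ, and_true]
        constructor <;> rintro rfl
        · simp [a6] at hx
        · simp [a5] at hx
      have hlj : l ≠ j := by
        rintro rfl
        rw [a5] at a6
        norm_num at a6
      refine (Finset.card_le_card this).trans ?_
      rw [Finset.card_erase_of_mem (by simp [hlj]), Finset.card_erase_of_mem (Finset.mem_univ _)]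
      simp; omega

lemma exists_R {p m : ℕ} (hm : 1 ≤ m) (d : Fin p → ℝ) (hd : ∀ j, |d j| ≤ 1)
    (hcard : (Finset.univ.filter (fun j => |d j| < 1)).card ≤ m)
    (huniq : ∀ j l, d j = 0 → d l = 0 → j = l) (j0 : Fin p) (hj0 : d j0 = 0) :
    ∃ (R : Matrix (Fin m) (Fin p) ℝ) (α : Fin m → ℝ),
      Rᵀ * R * diagonal (fun j => √(1 - d j ^ 2)) = diagonal (fun j => √(1 - d j ^ 2)) ∧
      diagonal α * R = -(R * diagonal d) ∧
      diagonal α * diagonal α + R * (diagonal (fun j => √(1 - d j ^ 2)) *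
        diagonal (fun j => √(1 - d j ^ 2))) * Rᵀ = 1 ∧
      (∀ a b, a ≠ b → ∃ c, 2 * α c ≠ α a + α b) := by
  classical
  obtain ⟨g⟩ : Nonempty ({j // |d j| < 1} ↪ Fin m) := by
    apply Function.Embedding.nonempty_of_card_le
    rw [Fintype.card_subtype, Fintype.card_fin]
    exact hcard
  let R : Matrix (Fin m) (Fin p) ℝ := fun a j =>
    if h : |d j| < 1 then (if g ⟨j, h⟩ = a then 1 else 0) else 0
  let α : Fin m → ℝ := fun a => if h : ∃ j, g j = a then - d h.choose.1 else 1
  have hα : ∀ j : {j // |d j| < 1}, α (g j) = - d j.1 := by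
    intro j
    have h : ∃ l, g l = g j := ⟨j, rfl⟩
    simp only [α, dif_pos h]
    rw [g.injective h.choose_spec]
  have hα1 : ∀ a, (¬ ∃ j, g j = a) → α a = 1 := fun a h => by simp only [α, dif_neg h]
  have hRg : ∀ (j : {j // |d j| < 1}) l, R (g j) l = if l = j.1 then 1 else 0 := by
    intro j l
    simp only [R]
    by_cases h : |d l| < 1
    · rw [dif_pos h]
      simp only [g.injective.eq_iff, Subtype.ext_iff]
    · rw [dif_neg h, if_neg]
      rintro rfl
      exact h j.2
  have hR0 : ∀ a, (¬ ∃ j, g j = a) → ∀ l, R a l = 0 := by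
    intro a h l
    simp only [R]
    split_ifs with h1 h2
    · exact absurd ⟨_, h2⟩ h
    · rfl
    · rfl
  have hs0 : ∀ j, ¬ |d j| < 1 → √(1 - d j ^ 2) = 0 := by
    intro j h
    have : |d j| = 1 := le_antisymm (hd j) (not_lt.1 h)
    have : d j ^ 2 = 1 := by rw [← sq_abs, this]; norm_num
    simp [this]
  have hss : ∀ j, √(1 - d j ^ 2) * √(1 - d j ^ 2) = 1 - d j ^ 2 := fun j => by
    apply Real.mul_self_sqrt
    have := (sq_le_one_iff_abs_le_one (d j)).2 (hd j)
    linarith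
  refine ⟨R, α, ?_, ?_, ?_, ?_⟩
  · ext i j
    rw [mul_diagonal, Matrix.mul_apply]
    by_cases h : |d j| < 1
    · have : ∀ a, Rᵀ i a * R a j = if a = g ⟨j, h⟩ then (if i = j then 1 else 0) else 0 := by
        intro a
        by_cases ha : a = g ⟨j, h⟩
        · subst ha
          simp [hRg]
        · rw [if_neg ha]
          have : R a j = 0 := by
            simp only [R, dif_pos h, if_neg (Ne.symm ha)]
          rw [this, mul_zero]
      simp only [this]
      by_cases hij : i = j
      · subst hij; simp
      · simp [hij]
    · rw [hs0 j h, mul_zero]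
      by_cases hij : i = j
      · subst hij; simp [hs0 i h]
      · simp [hij]
  · ext a j
    rw [diagonal_mul, Matrix.neg_apply, mul_diagonal]
    by_cases ha : ∃ l, g l = a
    · obtain ⟨l, rfl⟩ := ha
      rw [hα, hRg]
      split_ifs with h
      · rw [h]; ring
      · ring
    · simp [hR0 a ha]
  · ext a b
    rw [diagonal_mul_diagonal, diagonal_mul_diagonal, Matrix.add_apply, Matrix.mul_apply]
    simp only [mul_diagonal, transpose_apply, hss]
    by_cases ha : ∃ l, g l = a
    · obtain ⟨l, rfl⟩ := ha
      simp only [hRg]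
      by_cases hb : ∃ l, g l = b
      · obtain ⟨l', rfl⟩ := hb
        simp only [hRg]
        by_cases hl : l = l'
        · subst hl; simp [hα]; ring
        · have h1 : g l ≠ g l' := fun h => hl (g.injective h)
          have h2 : l.1 ≠ l'.1 := fun h => hl (Subtype.ext h)
          simp [h1, h2.symm]
      · have h1 : g l ≠ b := fun h => hb ⟨l, h⟩
        simp [hR0 b hb, h1]
    · simp only [hR0 a ha]
      by_cases hab : a = b
      · subst hab; simp [hα1 a ha]
      · simp [hab]
  · intro a b hab
    by_contra! h
    have h0 : α (g ⟨j0, by simp [hj0]⟩) = 0 := by rw [hα]; simp [hj0]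
    have h1 := h (g ⟨j0, by simp [hj0]⟩)
    have h2 := h a
    have key : ∀ c, α c = 0 → c = g ⟨j0, by simp [hj0]⟩ := by
      intro c hc
      by_cases hcg : ∃ l, g l = c
      · obtain ⟨l, rfl⟩ := hcg
        rw [hα] at hc
        have := huniq l.1 j0 (by linarith) hj0
        congr 1
        exact Subtype.ext this
      · rw [hα1 c hcg] at hc
        norm_num at hc
    rw [h0] at h1
    exact hab ((key a (by linarith)).trans (key b (by linarith)).symm)

lemma base_block {p m : ℕ} (hm : 1 ≤ m) (hp : p ≤ m + 2) (H : SimpleGraph (Fin p))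
    (hH : H.Connected) :
    ∃ (α : Fin m → ℝ) (B : Matrix (Fin m) (Fin p) ℝ) (C : Matrix (Fin p) (Fin p) ℝ)
      (u : Matrix (Fin m) Unit ℝ) (v : Matrix (Fin p) Unit ℝ),
      (∀ a b, a ≠ b → ∃ c, 2 * α c ≠ α a + α b) ∧ inS H C ∧
      diagonal α * diagonal α + B * Bᵀ = 1 ∧ Bᵀ * B + C * C = 1 ∧ diagonal α * B + B * C = 0 ∧
      diagonal α * u = 0 ∧ C * v = 0 ∧ B * v = u ∧ Bᵀ * u = v ∧ uᵀ * u = 1 ∧ vᵀ * v = 1 ∧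
      ∀ x, v x () ≠ 0 := by
  obtain ⟨C, hC, hC1, hker, V, d, hV1, hV2, hCV, hd, hcard⟩ := core hm hp H hH
  obtain ⟨x0⟩ := hH.nonempty
  have hp0 : 0 < p := x0.pos
  have hp0' : (0 : ℝ) < p := by exact_mod_cast hp0
  obtain ⟨v, hv⟩ : ∃ v : Matrix (Fin p) Unit ℝ, ∀ x i, v x i = 1 / √p :=
    ⟨fun _ _ => 1 / √p, fun _ _ => rfl⟩
  have hvv : vᵀ * v = 1 := by
    ext i j
    simp only [Matrix.mul_apply, transpose_apply, hv, Finset.sum_const, Finset.card_univ,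
      Fintype.card_fin, nsmul_eq_mul]
    rw [Matrix.one_apply, if_pos (Subsingleton.elim _ _)]
    have := Real.mul_self_sqrt hp0'.le
    have h2 : √(p : ℝ) ≠ 0 := (Real.sqrt_pos.2 hp0').ne'
    field_simp
    nlinarith
  have hCv : C * v = 0 := by
    ext i j
    have := congrFun hC1 i
    simp only [mulVec, dotProduct, mul_one, Pi.zero_apply] at this
    simp only [Matrix.mul_apply, hv, ← Finset.sum_mul, this, zero_mul, Matrix.zero_apply]
  set D := diagonal d with hD
  let e := Vᵀ * v
  have hVe : V * e = v := by rw [← Matrix.mul_assoc, hV2, Matrix.one_mul]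
  have hDe : D * e = 0 := by
    have h1 : Vᵀ * (C * v) = 0 := by rw [hCv, Matrix.mul_zero]
    rw [hCV, ← Matrix.mul_assoc, ← Matrix.mul_assoc, ← Matrix.mul_assoc, hV1, Matrix.one_mul,
      Matrix.mul_assoc] at h1
    exact h1
  have hde : ∀ j, d j * e j () = 0 := fun j => by
    have := congrFun (congrFun hDe j) ()
    rwa [hD, diagonal_mul] at this
  have hee : eᵀ * e = 1 := by
    simp only [e, transpose_mul, transpose_transpose]
    rw [Matrix.mul_assoc, ← Matrix.mul_assoc V, hV2, Matrix.one_mul, hvv]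
  obtain ⟨j0, hj0⟩ : ∃ j, d j = 0 := by
    by_contra! h
    have h0 : e = 0 := by
      ext j i
      exact (mul_eq_zero.1 (hde j)).resolve_left (h j)
    rw [h0] at hee
    have := congrFun (congrFun hee ()) ()
    simp at this
  have huniq : ∀ j l, d j = 0 → d l = 0 → j = l := by
    intro j l hj hl
    by_contra hjl
    have hcol : ∀ j, d j = 0 → ∀ x, V x j = V x0 j := by
      intro j hj x
      have h1 : C *ᵥ (V *ᵥ Pi.single j 1) = 0 := by
        rw [hCV, mulVec_mulVec, Matrix.mul_assoc, hV1, Matrix.mul_one, ← mulVec_mulVec]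
        have : D *ᵥ Pi.single j 1 = 0 := by
          ext i
          rw [hD, mulVec_diagonal]
          by_cases hij : i = j
          · subst hij; simp [hj]
          · simp [hij]
        rw [this, mulVec_zero]
      have := hker _ h1 x x0
      simpa using this
    have h1 : (Vᵀ * V) j l = 0 := by rw [hV1, Matrix.one_apply_ne hjl]
    have h2 : (Vᵀ * V) j j = 1 := by rw [hV1, Matrix.one_apply_eq]
    have h3 : (Vᵀ * V) l l = 1 := by rw [hV1, Matrix.one_apply_eq]
    simp only [Matrix.mul_apply, transpose_apply, hcol j hj, hcol l hl, Finset.sum_const,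
      Finset.card_univ, Fintype.card_fin, nsmul_eq_mul] at h1 h2 h3
    have h4 : V x0 j ≠ 0 := fun h => by simp [h] at h2
    have h5 : V x0 l ≠ 0 := fun h => by simp [h] at h3
    exact mul_ne_zero hp0'.ne' (mul_ne_zero h4 h5) h1
  obtain ⟨R, α, hR1, hR2, hR3, hR4⟩ := exists_R hm d hd hcard huniq j0 hj0
  set S := diagonal (fun j => √(1 - d j ^ 2)) with hS
  have hSt : Sᵀ = S := diagonal_transpose _
  have hSD : S * D = D * S := by
    rw [hS, hD, diagonal_mul_diagonal, diagonal_mul_diagonal]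
    congr 1; funext j; ring
  have hSS : S * S + D * D = 1 := by
    rw [hS, hD, diagonal_mul_diagonal, diagonal_mul_diagonal, diagonal_add, ← diagonal_one]
    congr 1; funext j
    have : √(1 - d j ^ 2) * √(1 - d j ^ 2) = 1 - d j ^ 2 := by
      apply Real.mul_self_sqrt
      have := (sq_le_one_iff_abs_le_one (d j)).2 (hd j)
      linarith
    rw [this]; ring
  have hSe : S * e = e := by
    ext j i
    rw [hS, diagonal_mul]
    rcases mul_eq_zero.1 (hde j) with h | h
    · simp [h]
    · have : e j i = 0 := h
      simp [this]
  have hRe : Rᵀ * (R * e) = e := by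
    rw [← Matrix.mul_assoc]
    nth_rw 1 [← hSe]
    rw [← Matrix.mul_assoc, hR1, hSe]
  refine ⟨α, R * S * Vᵀ, C, R * e, v, hR4, hC, ?_, ?_, ?_, ?_, hCv, ?_, ?_, ?_, hvv, ?_⟩
  · rw [← hR3]
    congr 1
    simp only [transpose_mul, transpose_transpose, hSt]
    rw [Matrix.mul_assoc, ← Matrix.mul_assoc Vᵀ, hV1, Matrix.one_mul]
    simp only [Matrix.mul_assoc]
  · have h1 : (R * S * Vᵀ)ᵀ * (R * S * Vᵀ) = V * (S * S) * Vᵀ := by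
      simp only [transpose_mul, transpose_transpose, hSt]
      calc V * (S * Rᵀ) * (R * S * Vᵀ) = V * S * (Rᵀ * R * S) * Vᵀ := by
            simp only [Matrix.mul_assoc]
        _ = _ := by rw [hR1]; simp only [Matrix.mul_assoc]
    have h2 : C * C = V * (D * D) * Vᵀ := by
      calc C * C = V * D * (Vᵀ * V) * D * Vᵀ := by
            nth_rw 1 [hCV]; nth_rw 1 [hCV]; simp only [Matrix.mul_assoc]
        _ = _ := by rw [hV1, Matrix.mul_one]; simp only [Matrix.mul_assoc]
    rw [h1, h2, ← Matrix.add_mul, ← Matrix.mul_add, hSS, Matrix.mul_one, hV2]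
  · have h1 : R * S * Vᵀ * C = R * (D * S) * Vᵀ := by
      calc R * S * Vᵀ * C = R * S * (Vᵀ * V) * D * Vᵀ := by
            nth_rw 1 [hCV]; simp only [Matrix.mul_assoc]
        _ = _ := by rw [hV1, Matrix.mul_one, ← hSD]; simp only [Matrix.mul_assoc]
    rw [h1, ← Matrix.mul_assoc, ← Matrix.mul_assoc, hR2, Matrix.neg_mul, Matrix.neg_mul,
      ← Matrix.mul_assoc, neg_add_cancel]
  · rw [← Matrix.mul_assoc, hR2, Matrix.neg_mul, Matrix.mul_assoc, hDe, Matrix.mul_zero, neg_zero]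
  · rw [Matrix.mul_assoc, Matrix.mul_assoc]
    change R * (S * e) = R * e
    rw [hSe]
  · simp only [transpose_mul, transpose_transpose, hSt]
    rw [Matrix.mul_assoc, Matrix.mul_assoc, hRe, hSe, hVe]
  · rw [transpose_mul, Matrix.mul_assoc, hRe, hee]
  · intro x
    rw [hv]
    have := Real.sqrt_pos.2 hp0'
    positivity

lemma block {p m : ℕ} (hm : 1 ≤ m) (hp : p ≤ m + 2) (H : SimpleGraph (Fin p))
    (hH : H.Connected) (w : ℝ) (hw : w ≠ 0) :
    ∃ (A : Matrix (Fin m) (Fin m) ℝ) (B : Matrix (Fin m) (Fin p) ℝ)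
      (C : Matrix (Fin p) (Fin p) ℝ)
      (u : Matrix (Fin m) Unit ℝ) (v : Matrix (Fin p) Unit ℝ),
      Aᵀ = A ∧ (∀ a b, a ≠ b → A a b ≠ 0) ∧ inS H C ∧
      A * A + B * Bᵀ + u * uᵀ = 1 ∧ Bᵀ * B + v * vᵀ + C * C = 1 ∧ A * B + B * C = 0 ∧
      A * u = 0 ∧ C * v = 0 ∧ B * v = 0 ∧ Bᵀ * u = 0 ∧ uᵀ * u = 1 ∧ vᵀ * v = 1 ∧
      (∀ a, u a () ≠ 0) ∧ (∀ x, v x () ≠ 0) ∧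
      ∀ a x, (B + w • (u * vᵀ)) a x ≠ 0 := by
  obtain ⟨α, B0, C, u0, v, hα, hC, h1, h2, h3, h4, h5, h6, h7, h8, h9, h10⟩ :=
    base_block hm hp H hH
  have h6t : vᵀ * B0ᵀ = u0ᵀ := by rw [← transpose_mul, h6]
  have h7t : u0ᵀ * B0 = vᵀ := by rw [← h7, transpose_mul, transpose_transpose]
  let B1 := B0 - u0 * vᵀ
  have hu1 : u0ᵀ * B1 = 0 := by
    simp only [B1]
    rw [Matrix.mul_sub, h7t, ← Matrix.mul_assoc, h8, Matrix.one_mul, sub_self]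
  let Y : Option (Fin p) → Fin m → ℝ := fun o =>
    match o with
    | none => fun a => u0 a ()
    | some x => fun a => (B1 + w • (u0 * vᵀ)) a x
  have hY : ∀ k, Y k ≠ 0 := by
    rintro (_ | x) h
    · have h0 : u0 = 0 := by ext a i; exact congrFun h a
      rw [h0] at h8
      have := congrFun (congrFun h8 ()) ()
      simp at this
    · have e1 : u0ᵀ * (B1 + w • (u0 * vᵀ)) = w • vᵀ := by
        rw [Matrix.mul_add, hu1, zero_add, Matrix.mul_smul, ← Matrix.mul_assoc, h8, Matrix.one_mul]
      have e2 := congrFun (congrFun e1 ()) x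
      rw [Matrix.mul_apply] at e2
      have : ∀ a, (B1 + w • (u0 * vᵀ)) a x = 0 := fun a => congrFun h a
      simp only [this, mul_zero, Finset.sum_const_zero] at e2
      exact mul_ne_zero hw (h10 x) e2.symm
  obtain ⟨U, hUt, hUU, hUY, hUA⟩ := householder (⟨0, hm⟩ : Fin m) α hα Y hY
  have hUUa : ∀ {k : Type} [Fintype k] (X : Matrix (Fin m) k ℝ), U * (U * X) = X := by
    intro k _ X
    rw [← Matrix.mul_assoc, hUU, Matrix.one_mul]
  refine ⟨U * diagonal α * U, U * B1, C, U * u0, v, ?_, hUA, hC, ?_, ?_, ?_, ?_, h5, ?_, ?_, ?_,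
    h9, ?_, h10, ?_⟩
  · simp only [transpose_mul, hUt, diagonal_transpose, Matrix.mul_assoc]
  · have e : diagonal α * diagonal α + B1 * B1ᵀ + u0 * u0ᵀ = 1 := by
      have : B1 * B1ᵀ = B0 * B0ᵀ - u0 * u0ᵀ := by
        simp only [B1, transpose_sub, transpose_mul, transpose_transpose]
        rw [Matrix.sub_mul, Matrix.mul_sub, Matrix.mul_sub, ← Matrix.mul_assoc B0 v, h6,
          Matrix.mul_assoc u0 vᵀ B0ᵀ, h6t, Matrix.mul_assoc u0 vᵀ, ← Matrix.mul_assoc vᵀ v, h9,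
          Matrix.one_mul]
        abel
      rw [this, ← h1]; abel
    have : U * (diagonal α * diagonal α + B1 * B1ᵀ + u0 * u0ᵀ) * U = 1 := by
      rw [e, Matrix.mul_one, hUU]
    rw [← this]
    simp only [transpose_mul, hUt, Matrix.mul_add, Matrix.add_mul, Matrix.mul_assoc, hUUa]
  · have : (U * B1)ᵀ * (U * B1) = B0ᵀ * B0 - v * vᵀ := by
      rw [transpose_mul, hUt, Matrix.mul_assoc, hUUa]
      simp only [B1, transpose_sub, transpose_mul, transpose_transpose]
      rw [Matrix.sub_mul, Matrix.mul_sub, Matrix.mul_sub, ← Matrix.mul_assoc B0ᵀ u0, h7,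
        Matrix.mul_assoc v u0ᵀ B0, h7t, Matrix.mul_assoc v u0ᵀ, ← Matrix.mul_assoc u0ᵀ u0, h8,
        Matrix.one_mul]
      abel
    rw [this, ← h2]; abel
  · have e : diagonal α * B1 + B1 * C = 0 := by
      have hvC : vᵀ * C = 0 := by
        have := congrArg transpose h5
        rwa [transpose_mul, hC.1.eq, transpose_zero] at this
      simp only [B1]
      rw [Matrix.mul_sub, Matrix.sub_mul, ← Matrix.mul_assoc _ u0, h4, Matrix.zero_mul,
        Matrix.mul_assoc u0, hvC, Matrix.mul_zero, sub_zero, sub_zero, h3]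
    have : U * (diagonal α * B1 + B1 * C) = 0 := by rw [e, Matrix.mul_zero]
    rw [← this]
    simp only [Matrix.mul_add, Matrix.mul_assoc, hUUa]
  · rw [Matrix.mul_assoc, hUUa, Matrix.mul_assoc, h4, Matrix.mul_zero]
  · rw [Matrix.mul_assoc]
    simp only [B1]
    rw [Matrix.sub_mul, h6, Matrix.mul_assoc, h9, Matrix.mul_one, sub_self, Matrix.mul_zero]
  · rw [transpose_mul, hUt, Matrix.mul_assoc, hUUa]
    have := congrArg transpose hu1
    rwa [transpose_mul, transpose_transpose, transpose_zero] at this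
  · rw [transpose_mul, hUt, Matrix.mul_assoc, hUUa, h8]
  · intro a
    exact hUY none a
  · intro a x
    have e : U * B1 + w • (U * u0 * vᵀ) = U * (B1 + w • (u0 * vᵀ)) := by
      rw [Matrix.mul_add, Matrix.mul_smul, Matrix.mul_assoc]
    rw [e]
    exact hUY (some x) a

lemma join_ll {α β : Type*} (G₁ : SimpleGraph α) (G₂ : SimpleGraph β) (a b : α) :
    (graphJoin G₁ G₂).Adj (Sum.inl a) (Sum.inl b) ↔ G₁.Adj a b := by
  simp [graphJoin, partialJoin]

lemma join_rr {α β : Type*} (G₁ : SimpleGraph α) (G₂ : SimpleGraph β) (a b : β) :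
    (graphJoin G₁ G₂).Adj (Sum.inr a) (Sum.inr b) ↔ G₂.Adj a b := by
  simp [graphJoin, partialJoin]

lemma join_lr {α β : Type*} (G₁ : SimpleGraph α) (G₂ : SimpleGraph β) (a : α) (b : β) :
    (graphJoin G₁ G₂).Adj (Sum.inl a) (Sum.inr b) := by
  simp [graphJoin, partialJoin]

lemma sigma_same {ι : Type*} {α : ι → Type*} (G : ∀ i, SimpleGraph (α i)) (i : ι) (a b : α i) :
    (sigmaGraph G).Adj ⟨i, a⟩ ⟨i, b⟩ ↔ (G i).Adj a b := by
  constructor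
  · rintro ⟨j, x, y, h, h1, h2⟩
    cases h1
    cases h2
    exact h
  · intro h
    exact ⟨i, a, b, h, rfl, rfl⟩

lemma sigma_diff {ι : Type*} {α : ι → Type*} (G : ∀ i, SimpleGraph (α i)) (i j : ι) (hij : i ≠ j)
    (a : α i) (b : α j) : ¬ (sigmaGraph G).Adj ⟨i, a⟩ ⟨j, b⟩ := by
  rintro ⟨l, x, y, h, h1, h2⟩
  cases h1
  cases h2
  exact hij rfl

lemma blockDiag_inS {k : ℕ} {p : Fin k → ℕ} (H : ∀ i, SimpleGraph (Fin (p i)))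
    (C : ∀ i, Matrix (Fin (p i)) (Fin (p i)) ℝ) (hC : ∀ i, inS (H i) (C i)) :
    inS (sigmaGraph H) (blockDiagonal' C) := by
  refine ⟨?_, ?_⟩
  · unfold Matrix.IsSymm
    rw [blockDiagonal'_transpose]
    congr 1
    funext i
    exact (hC i).1
  · rintro ⟨i, a⟩ ⟨j, b⟩ hne
    by_cases hij : i = j
    · subst hij
      rw [blockDiagonal'_apply_eq, sigma_same]
      exact (hC i).2 a b (fun h => hne (by rw [h]))
    · rw [blockDiagonal'_apply_ne _ _ _ hij]
      simpa using sigma_diff H i j hij a b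

lemma join_inS {α β : Type*} (G₁ : SimpleGraph α) (G₂ : SimpleGraph β)
    (A : Matrix α α ℝ) (X : Matrix α β ℝ) (C : Matrix β β ℝ) (hA : inS G₁ A) (hC : inS G₂ C)
    (hX : ∀ a b, X a b ≠ 0) : inS (graphJoin G₁ G₂) (fromBlocks A X Xᵀ C) := by
  refine ⟨?_, ?_⟩
  · unfold Matrix.IsSymm
    rw [fromBlocks_transpose, transpose_transpose, hA.1.eq, hC.1.eq]
  · rintro (a | a) (b | b) hne
    · rw [join_ll, fromBlocks_apply₁₁]
      exact hA.2 a b (fun h => hne (by rw [h]))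
    · rw [fromBlocks_apply₁₂]
      exact ⟨fun _ => join_lr G₁ G₂ a b, fun _ => hX a b⟩
    · rw [fromBlocks_apply₂₁, transpose_apply]
      exact ⟨fun _ => (join_lr G₁ G₂ b a).symm, fun _ => hX b a⟩
    · rw [join_rr, fromBlocks_apply₂₂]
      exact hC.2 a b (fun h => hne (by rw [h]))

lemma big_orth {α β ι : Type*} [Fintype α] [Fintype β] [Fintype ι] [DecidableEq α] [DecidableEq β]
    [DecidableEq ι] (A : Matrix α α ℝ) (B : Matrix α β ℝ) (C : Matrix β β ℝ)
    (u : Matrix α ι ℝ) (v : Matrix β ι ℝ) (W : Matrix ι ι ℝ)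
    (hA : Aᵀ = A) (hC : Cᵀ = C) (hW : Wᵀ = W) (hWW : W * W = 1)
    (h1 : A * A + B * Bᵀ + u * uᵀ = 1) (h2 : Bᵀ * B + v * vᵀ + C * C = 1) (h3 : A * B + B * C = 0)
    (h4 : A * u = 0) (h5 : C * v = 0) (h6 : B * v = 0) (h7 : Bᵀ * u = 0) (h8 : uᵀ * u = 1)
    (h9 : vᵀ * v = 1) :
    fromBlocks A (B + u * W * vᵀ) (B + u * W * vᵀ)ᵀ C *
      fromBlocks A (B + u * W * vᵀ) (B + u * W * vᵀ)ᵀ C = 1 := by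
  have h6t : vᵀ * Bᵀ = 0 := by rw [← transpose_mul, h6, transpose_zero]
  have h7t : uᵀ * B = 0 := by
    have := congrArg transpose h7
    rwa [transpose_mul, transpose_transpose, transpose_zero] at this
  have h5t : vᵀ * C = 0 := by
    have := congrArg transpose h5
    rwa [transpose_mul, hC, transpose_zero] at this
  have hX : (B + u * W * vᵀ)ᵀ = Bᵀ + v * W * uᵀ := by
    rw [transpose_add, transpose_mul, transpose_mul, transpose_transpose, hW, Matrix.mul_assoc]
  have e12 : A * (B + u * W * vᵀ) + (B + u * W * vᵀ) * C = 0 := by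
    rw [Matrix.mul_add, Matrix.add_mul, ← Matrix.mul_assoc A, ← Matrix.mul_assoc A, h4,
      Matrix.mul_assoc (u * W), h5t]
    simpa using h3
  have e11 : A * A + (B + u * W * vᵀ) * (Bᵀ + v * W * uᵀ) = 1 := by
    have a1 : B * (v * W * uᵀ) = 0 := by
      rw [← Matrix.mul_assoc, ← Matrix.mul_assoc, h6, Matrix.zero_mul, Matrix.zero_mul]
    have a2 : u * W * vᵀ * Bᵀ = 0 := by rw [Matrix.mul_assoc, h6t, Matrix.mul_zero]
    have a3 : u * W * vᵀ * (v * W * uᵀ) = u * uᵀ := by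
      calc u * W * vᵀ * (v * W * uᵀ) = u * W * (vᵀ * v) * W * uᵀ := by
            simp only [Matrix.mul_assoc]
        _ = u * (W * W) * uᵀ := by rw [h9, Matrix.mul_one]; simp only [Matrix.mul_assoc]
        _ = _ := by rw [hWW, Matrix.mul_one]
    rw [Matrix.mul_add, Matrix.add_mul, Matrix.add_mul, a1, a2, a3, ← h1]
    abel
  have e22 : (Bᵀ + v * W * uᵀ) * (B + u * W * vᵀ) + C * C = 1 := by
    have a1 : Bᵀ * (u * W * vᵀ) = 0 := by
      rw [← Matrix.mul_assoc, ← Matrix.mul_assoc, h7, Matrix.zero_mul, Matrix.zero_mul]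
    have a2 : v * W * uᵀ * B = 0 := by rw [Matrix.mul_assoc, h7t, Matrix.mul_zero]
    have a3 : v * W * uᵀ * (u * W * vᵀ) = v * vᵀ := by
      calc v * W * uᵀ * (u * W * vᵀ) = v * W * (uᵀ * u) * W * vᵀ := by
            simp only [Matrix.mul_assoc]
        _ = v * (W * W) * vᵀ := by rw [h8, Matrix.mul_one]; simp only [Matrix.mul_assoc]
        _ = _ := by rw [hWW, Matrix.mul_one]
    rw [Matrix.mul_add, Matrix.add_mul, Matrix.add_mul, a1, a2, a3, ← h2]
    abel
  have e21 : (B + u * W * vᵀ)ᵀ * A + C * (B + u * W * vᵀ)ᵀ = 0 := by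
    have := congrArg transpose e12
    rw [transpose_add, transpose_mul, transpose_mul, hA, hC, transpose_zero] at this
    exact this
  rw [fromBlocks_multiply, e12, e21, hX, e11, e22, fromBlocks_one]

lemma exists_W (k : ℕ) (hk : 1 ≤ k) : ∃ W : Matrix (Σ _ : Fin k, Unit) (Σ _ : Fin k, Unit) ℝ,
    Wᵀ = W ∧ W * W = 1 ∧ ∀ i j, W i j ≠ 0 := by
  obtain ⟨W, h1, h2, h3, -⟩ := householder (⟨⟨0, hk⟩, ()⟩ : Σ _ : Fin k, Unit)
    (fun i => ((i.1 : ℕ) : ℝ)) (by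
      rintro ⟨a, ⟨⟩⟩ ⟨b, ⟨⟩⟩ hab
      refine ⟨⟨a, ()⟩, fun h => hab ?_⟩
      simp only at h
      have : ((a : ℕ) : ℝ) = ((b : ℕ) : ℝ) := by linarith
      have : a = b := Fin.ext (by exact_mod_cast this)
      rw [this])
    (fun j => Pi.single j 1) (fun j h => by simpa using congrFun h j)
  exact ⟨W, h1, h2, fun i j => by simpa using h3 j i⟩

/-- Theorem 3.4, second part: if `H_i` are connected graphs with
`m_i + 2 ≥ |H_i|` for each `i ∈ [k]`, then `q((⋃ K_{m_i}) ∨ (⋃ H_i)) = 2`. -/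
theorem statement9 (k : ℕ) (hk : 1 ≤ k) (m p : Fin k → ℕ) (hm : ∀ i, 1 ≤ m i)
    (H : ∀ i, SimpleGraph (Fin (p i))) (hH : ∀ i, (H i).Connected)
    (hsize : ∀ i, p i ≤ m i + 2) :
    qGraph (graphJoin (sigmaGraph (fun i => (⊤ : SimpleGraph (Fin (m i)))))
      (sigmaGraph H)) = 2 := by
  obtain ⟨W, hWt, hWW, hW⟩ := exists_W k hk
  choose A B C u v hA hAne hC h1 h2 h3 h4 h5 h6 h7 h8 h9 hu hv hB using fun i =>
    block (hm i) (hsize i) (H i) (hH i) (W ⟨i, ()⟩ ⟨i, ()⟩) (hW _ _)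
  have hAS : ∀ i, inS (⊤ : SimpleGraph (Fin (m i))) (A i) := fun i =>
    ⟨hA i, fun a b hab => by simpa [hab] using hAne i a b hab⟩
  have hAS' := blockDiag_inS _ A hAS
  have hCS' := blockDiag_inS _ C hC
  have hUW : ∀ i a j x, (blockDiagonal' u * W * (blockDiagonal' v)ᵀ) ⟨i, a⟩ ⟨j, x⟩
      = u i a () * W ⟨i, ()⟩ ⟨j, ()⟩ * v j x () := by
    intro i a j x
    rw [Matrix.mul_apply, Finset.sum_eq_single (⟨j, ()⟩ : Σ _ : Fin k, Unit)]
    · rw [transpose_apply, blockDiagonal'_apply_eq, Matrix.mul_apply,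
        Finset.sum_eq_single (⟨i, ()⟩ : Σ _ : Fin k, Unit)]
      · rw [blockDiagonal'_apply_eq]
      · rintro ⟨l, ⟨⟩⟩ - hl
        rw [blockDiagonal'_apply_ne _ _ _ (fun h => hl (by rw [h])), zero_mul]
      · simp
    · rintro ⟨l, ⟨⟩⟩ - hl
      rw [transpose_apply, blockDiagonal'_apply_ne _ _ _ (fun h => hl (by rw [h])), mul_zero]
    · simp
  have hX : ∀ a x, (blockDiagonal' B + blockDiagonal' u * W * (blockDiagonal' v)ᵀ) a x ≠ 0 := by
    rintro ⟨i, a⟩ ⟨j, x⟩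
    rw [Matrix.add_apply, hUW]
    by_cases hij : i = j
    · subst hij
      rw [blockDiagonal'_apply_eq]
      have := hB i a x
      rw [Matrix.add_apply, Matrix.smul_apply, Matrix.mul_apply] at this
      simp only [Finset.univ_unique, Finset.sum_singleton, transpose_apply, smul_eq_mul] at this
      intro h
      apply this
      rw [← h]
      change B i a x + W ⟨i, ()⟩ ⟨i, ()⟩ * (u i a () * v i x ()) = _
      ring
    · rw [blockDiagonal'_apply_ne _ _ _ hij, zero_add]
      exact mul_ne_zero (mul_ne_zero (hu i a) (hW _ _)) (hv j x)
  have hS := join_inS _ _ _ _ _ hAS' hCS' hX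
  obtain ⟨x0⟩ := (hH ⟨0, hk⟩).nonempty
  refine qGraph_eq_two _ (Sum.inl ⟨⟨0, hk⟩, ⟨0, hm _⟩⟩) (Sum.inr ⟨⟨0, hk⟩, x0⟩)
    (join_lr _ _ _ _) _ hS ?_
  have hone : ∀ {q : Fin k → Type} [∀ i, DecidableEq (q i)]
      (M : ∀ i, Matrix (q i) (q i) ℝ), (∀ i, M i = 1) → blockDiagonal' M = 1 := by
    intro q _ M hM
    rw [← blockDiagonal'_one]
    congr 1
    funext i
    exact hM i
  have hzero : ∀ {q r : Fin k → Type}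
      (M : ∀ i, Matrix (q i) (r i) ℝ), (∀ i, M i = 0) → blockDiagonal' M = 0 := by
    intro q r M hM
    rw [← blockDiagonal'_zero]
    congr 1
    funext i
    exact hM i
  apply big_orth _ _ _ _ _ _ hAS'.1 hCS'.1 hWt hWW
  · simp only [blockDiagonal'_transpose, ← blockDiagonal'_mul, ← blockDiagonal'_add]
    exact hone _ h1
  · simp only [blockDiagonal'_transpose, ← blockDiagonal'_mul, ← blockDiagonal'_add]
    exact hone _ h2
  · simp only [← blockDiagonal'_mul, ← blockDiagonal'_add]
    exact hzero _ h3
  · simp only [← blockDiagonal'_mul]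
    exact hzero _ h4
  · simp only [← blockDiagonal'_mul]
    exact hzero _ h5
  · simp only [← blockDiagonal'_mul]
    exact hzero _ h6
  · simp only [blockDiagonal'_transpose, ← blockDiagonal'_mul]
    exact hzero _ h7
  · simp only [blockDiagonal'_transpose, ← blockDiagonal'_mul]
    exact hone _ h8
  · simp only [blockDiagonal'_transpose, ← blockDiagonal'_mul]
    exact hone _ h9
end
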